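/- Let q be a power of an odd prime. Every irreducible complex character of SU_3(q) of degree (q+1)(q²−1), and every irreducible complex character of SU_3(q) of degree (q+1)(q²−1)/3 (such characters exist only when 3 divides q+1), whose character field is not contained in ℝ, has unitary discriminant q if q ≡ 1 (mod 4) and 1 if q ≡ 3 (mod 4). -/

import Mathlib

open Matrix

noncomputable section

namespace Paper

/-- The character of a matrix representation. -/
def charOf {G : Type} [Group G] {n : ℕ} (ρ : G →* GL (Fin n) ℂ) : G → ℂ :=
  fun g => Matrix.trace ((ρ g : Matrix (Fin n) (Fin n) ℂ))

/-- Irreducibility of a complex matrix representation. -/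
def IsIrredRep {G : Type} [Group G] {n : ℕ} (ρ : G →* GL (Fin n) ℂ) : Prop :=
  0 < n ∧ ∀ W : Submodule ℂ (Fin n → ℂ),
    (∀ (g : G), ∀ v ∈ W, (ρ g : Matrix (Fin n) (Fin n) ℂ).mulVec v ∈ W) → W = ⊥ ∨ W = ⊤

/-- `χ` is an irreducible complex character of `G`. -/
def IsIrrChar {G : Type} [Group G] (χ : G → ℂ) : Prop :=
  ∃ (n : ℕ) (ρ : G →* GL (Fin n) ℂ), IsIrredRep ρ ∧ χ = charOf ρ

/-- The character field `ℚ(χ)`, as a subfield of `ℂ`. -/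
def charField {G : Type} [Group G] (χ : G → ℂ) : Subfield ℂ :=
  Subfield.closure (Set.range χ)

/-- The subfield of real numbers inside `ℂ`. -/
def realsIn : Subfield ℂ := Subfield.closure (Set.range ((↑) : ℝ → ℂ))

/-- The character field of `χ` is not contained in `ℝ`. -/
def NotReal {G : Type} [Group G] (χ : G → ℂ) : Prop := ¬ charField χ ≤ realsIn

/-- `χ` has unitary discriminant `d`. -/
def HasUnitaryDisc {G : Type} [Group G] (χ : G → ℂ) (d : ℂ) : Prop :=
  ∀ (n : ℕ) (ρ : G →* GL (Fin n) ℂ),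
    χ = charOf ρ →
    (∀ g i j, ((ρ g : Matrix (Fin n) (Fin n) ℂ)) i j ∈ charField χ) →
    ∀ H : Matrix (Fin n) (Fin n) ℂ,
      (∀ i j, H i j ∈ charField χ) →
      IsUnit H.det →
      H.conjTranspose = H →
      (∀ g, ((ρ g : Matrix (Fin n) (Fin n) ℂ)).conjTranspose * H *
        (ρ g : Matrix (Fin n) (Fin n) ℂ) = H) →
      ∃ z ∈ charField χ, z ≠ 0 ∧
        (-1 : ℂ) ^ (n * (n - 1) / 2) * H.det = d * (z * (starRingEnd ℂ) z)

/-- `χ` has orthogonal discriminant `d`. -/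
def HasOrthDisc {G : Type} [Group G] (χ : G → ℂ) (d : ℂ) : Prop :=
  ∀ (n : ℕ) (ρ : G →* GL (Fin n) ℂ),
    χ = charOf ρ →
    (∀ g i j, ((ρ g : Matrix (Fin n) (Fin n) ℂ)) i j ∈ charField χ) →
    ∀ H : Matrix (Fin n) (Fin n) ℂ,
      (∀ i j, H i j ∈ charField χ) →
      IsUnit H.det →
      H.transpose = H →
      (∀ g, ((ρ g : Matrix (Fin n) (Fin n) ℂ)).transpose * H *
        (ρ g : Matrix (Fin n) (Fin n) ℂ) = H) →
      ∃ z ∈ charField χ, z ≠ 0 ∧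
        (-1 : ℂ) ^ (n * (n - 1) / 2) * H.det = d * z ^ 2

/-- `χ` is a rational character. -/
def IsRationalChar {G : Type} [Group G] (χ : G → ℂ) : Prop :=
  ∀ g, ∃ r : ℚ, χ g = (r : ℂ)

/-- `χ` is the character of a representation over `ℚ`. -/
def RealizableOverQ {G : Type} [Group G] (χ : G → ℂ) : Prop :=
  ∃ (n : ℕ) (ρ : G →* GL (Fin n) ℂ), χ = charOf ρ ∧
    ∀ g i j, ∃ r : ℚ, ((ρ g : Matrix (Fin n) (Fin n) ℂ)) i j = (r : ℂ)

end Paper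

namespace Paper

variable (p k : ℕ) (F : Type) [Field F] [Fintype F] [ExpChar F p]

/-- The Gram matrix `Ω` (anti-diagonal ones). -/
def Om : Matrix (Fin 3) (Fin 3) F :=
  Matrix.of fun i j => if (i : ℕ) + (j : ℕ) = 2 then 1 else 0

/-- Entrywise `q`-power Frobenius `Φ` on `3×3` matrices, where `q = p^k`. -/
def Phi : Matrix (Fin 3) (Fin 3) F →+* Matrix (Fin 3) (Fin 3) F :=
  (iterateFrobenius F p k).mapMatrix

/-- The special unitary group `SU₃(q) = {g ∈ SL₃(F_{q²}) : Φ(g)ᵀ·Ω·g = Ω}`. -/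
def SU3 : Subgroup (Matrix.SpecialLinearGroup (Fin 3) F) where
  carrier := {g | (Phi p k F g.val)ᵀ * Om F * g.val = Om F}
  one_mem' := by
    show (Phi p k F (1 : Matrix.SpecialLinearGroup (Fin 3) F).val)ᵀ * Om F *
        (1 : Matrix.SpecialLinearGroup (Fin 3) F).val = Om F
    simp
  mul_mem' := by
    intro a b ha hb
    show (Phi p k F (a.val * b.val))ᵀ * Om F * (a.val * b.val) = Om F
    have ha' : (Phi p k F a.val)ᵀ * Om F * a.val = Om F := ha
    have hb' : (Phi p k F b.val)ᵀ * Om F * b.val = Om F := hb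
    calc (Phi p k F (a.val * b.val))ᵀ * Om F * (a.val * b.val)
        = (Phi p k F b.val)ᵀ * ((Phi p k F a.val)ᵀ * Om F * a.val) * b.val := by
          rw [_root_.map_mul, Matrix.transpose_mul]; simp only [Matrix.mul_assoc]
      _ = (Phi p k F b.val)ᵀ * Om F * b.val := by rw [ha']
      _ = Om F := hb'
  inv_mem' := by
    intro a ha
    show (Phi p k F (a⁻¹).val)ᵀ * Om F * (a⁻¹).val = Om F
    have ha' : (Phi p k F a.val)ᵀ * Om F * a.val = Om F := ha
    have h1 : a.val * (a⁻¹).val = 1 := by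
      rw [← Matrix.SpecialLinearGroup.coe_mul, mul_inv_cancel,
        Matrix.SpecialLinearGroup.coe_one]
    nth_rewrite 1 [← ha']
    calc (Phi p k F (a⁻¹).val)ᵀ * ((Phi p k F a.val)ᵀ * Om F * a.val) * (a⁻¹).val
        = (Phi p k F a.val * Phi p k F (a⁻¹).val)ᵀ * Om F * (a.val * (a⁻¹).val) := by
          rw [Matrix.transpose_mul]; simp only [Matrix.mul_assoc]
      _ = Om F := by rw [← _root_.map_mul, h1, _root_.map_one, Matrix.transpose_one,
            Matrix.one_mul, Matrix.mul_one]

end Paper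

namespace Paper

variable (p k : ℕ) (F : Type) [Field F] [Fintype F] [ExpChar F p]

/-- The Borel subgroup of `SU₃(q)`: the upper triangular matrices in `SU₃(q)`. -/
def Borel : Subgroup ↥(SU3 p k F) where
  carrier := {g | Matrix.BlockTriangular ((g : Matrix.SpecialLinearGroup (Fin 3) F) :
    Matrix (Fin 3) (Fin 3) F) id}
  one_mem' := by
    show Matrix.BlockTriangular ((1 : Matrix.SpecialLinearGroup (Fin 3) F) :
      Matrix (Fin 3) (Fin 3) F) id
    rw [Matrix.SpecialLinearGroup.coe_one]
    exact Matrix.blockTriangular_one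
  mul_mem' := by
    intro a b ha hb
    exact Matrix.BlockTriangular.mul ha hb
  inv_mem' := by
    intro a ha
    show Matrix.BlockTriangular (((a⁻¹ : ↥(SU3 p k F)) : Matrix.SpecialLinearGroup (Fin 3) F) :
      Matrix (Fin 3) (Fin 3) F) id
    have hcoe : (((a⁻¹ : ↥(SU3 p k F)) : Matrix.SpecialLinearGroup (Fin 3) F) :
        Matrix (Fin 3) (Fin 3) F)
        = (((a : ↥(SU3 p k F)) : Matrix.SpecialLinearGroup (Fin 3) F) :
          Matrix (Fin 3) (Fin 3) F)⁻¹ := by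
      rw [show ((a⁻¹ : ↥(SU3 p k F)) : Matrix.SpecialLinearGroup (Fin 3) F)
        = ((a : ↥(SU3 p k F)) : Matrix.SpecialLinearGroup (Fin 3) F)⁻¹ from rfl]
      rw [Matrix.SpecialLinearGroup.coe_inv, Matrix.inv_def,
        ((a : ↥(SU3 p k F)) : Matrix.SpecialLinearGroup (Fin 3) F).2]
      simp
    rw [hcoe]
    haveI : Invertible (((a : ↥(SU3 p k F)) : Matrix.SpecialLinearGroup (Fin 3) F) :
        Matrix (Fin 3) (Fin 3) F) := by
      apply Matrix.invertibleOfIsUnitDet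
      rw [((a : ↥(SU3 p k F)) : Matrix.SpecialLinearGroup (Fin 3) F).2]
      exact isUnit_one
    exact Matrix.blockTriangular_inv_of_blockTriangular ha

end Paper

/-
Let `R` be a representation over `L` affording `χ`, and `U` the unipotent radical of a Borel
subgroup. The degree of `χ` forces `R` to have no `U`-fixed vectors, and some nontrivial linear
character of `U` has a one-dimensional eigenspace, which is respected by an anti-automorphism `τ` of
the group. Hence the bilinear form `B` over `L` for which `R (τ g)` is adjoint to `R g` is
*symmetric*. By Schur's lemma `Bᴴ (H⁻¹)ᵀ B` is a multiple of the Hermitian form `H`, and since `4`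
divides the degree, `det H` agrees with `|det B|` up to a real square of `L`.

To find `|det B|`, multiply `B` by the image of a generator of the torus, by a polynomial in that
image, and by an operator built from the quadratic Gauss sums of `U` and of its centre. Because the
Gauss sum anticommutes with the generator, the product is skew-symmetric, so its determinant is the
square of a Pfaffian in `L`. The second factor has square determinant, and the third contributes a
power of `q`, whose exponent is a trace. Its parity follows from integrality of the central
character at the involution of the torus, whose conjugacy class has odd size.
-/

namespace Paper

section LinearAlgebra

open Polynomial

variable {K : Type*} [Field K] {ι : Type*}

lemma apply_self_eq_zero_of_transpose_eq_neg (h2 : (2 : K) ≠ 0) {A : Matrix ι ι K} (hA : Aᵀ = -A)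
    (i : ι) : A i i = 0 := by
  have h : A i i = -A i i := congrFun₂ hA i i
  exact (mul_eq_zero.1 (by linear_combination h : 2 * A i i = 0)).resolve_left h2

variable [Fintype ι]

lemma exists_mul_eq_one_of_isIdempotentElem {e : Matrix ι ι K} (he : IsIdempotentElem e) :
    ∃ (k : ℕ) (A : Matrix (Fin k) ι K) (B : Matrix ι (Fin k) K), B * A = e ∧ A * B = 1 := by
  classical
  have hf : IsIdempotentElem e.toLin' := by
    rw [IsIdempotentElem, Module.End.mul_eq_comp, ← toLin'_mul, he]
  have hproj := (LinearMap.isProj_range_iff_isIdempotentElem e.toLin').2 hf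
  let b := Module.finBasis K (LinearMap.range e.toLin')
  let std := Pi.basisFun K ι
  refine ⟨_, LinearMap.toMatrix std b e.toLin'.rangeRestrict,
    LinearMap.toMatrix b std (LinearMap.range e.toLin').subtype, ?_, ?_⟩
  · rw [← LinearMap.toMatrix_comp std b std, LinearMap.subtype_comp_codRestrict,
      ← toLin_eq_toLin', LinearMap.toMatrix_toLin]
  · rw [← LinearMap.toMatrix_comp b std b, ← LinearMap.toMatrix_id b]
    congr 1
    ext1 x
    exact Subtype.ext (hproj.map_id x x.2)

lemma eq_zero_of_isIdempotentElem_of_trace_eq_zero [CharZero K] {e : Matrix ι ι K}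
    (he : IsIdempotentElem e) (h : e.trace = 0) : e = 0 := by
  obtain ⟨k, A, B, rfl, hAB⟩ := exists_mul_eq_one_of_isIdempotentElem he
  obtain rfl : k = 0 := by simpa [trace_mul_comm B, hAB] using h
  ext
  simp [mul_apply]

lemma trace_eq_one_of_forall_exists_eq_smul {e : Matrix ι ι K} (he : IsIdempotentElem e)
    {i j : ι} (hij : e i j ≠ 0) (hrow : ∀ a, ∃ c : K, e a = c • e i) : e.trace = 1 := by
  choose c hc using hrow
  have hentry (a b : ι) : e a b = c a * e i b := congrFun (hc a) b
  have htrace : e.trace = ∑ a, e i a * c a :=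
    Finset.sum_congr rfl fun a _ ↦ by rw [diag_apply, hentry a, mul_comm]
  refine mul_right_cancel₀ hij ?_
  calc e.trace * e i j = ∑ a, e i a * e a j := by
        rw [htrace, Finset.sum_mul]
        exact Finset.sum_congr rfl fun a _ ↦ by rw [hentry a j, mul_assoc]
    _ = 1 * e i j := by rw [← mul_apply, he.eq, one_mul]

variable [DecidableEq ι]

/- The witness is the Schur complement of the invertible `2 × 2` block. -/
lemma exists_skew_det_eq_sq_mul (h2 : (2 : K) ≠ 0) {A : Matrix (Fin 2 ⊕ ι) (Fin 2 ⊕ ι) K}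
    (hA : Aᵀ = -A) (h : A (.inl 0) (.inl 1) ≠ 0) :
    ∃ S : Matrix ι ι K, Sᵀ = -S ∧ A.det = A (.inl 0) (.inl 1) ^ 2 * S.det := by
  have hA' (i j) : A j i = -A i j := congrFun₂ hA i j
  have hdet : A.toBlocks₁₁.det = A (.inl 0) (.inl 1) ^ 2 := by
    simp only [Matrix.det_fin_two, toBlocks₁₁, of_apply,
      apply_self_eq_zero_of_transpose_eq_neg h2 hA, hA' (.inl 0) (.inl 1)]
    ring
  have hunit : IsUnit A.toBlocks₁₁.det := hdet ▸ (pow_ne_zero 2 h).isUnit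
  have := invertibleOfIsUnitDet _ hunit
  have h₁₁ : A.toBlocks₁₁ᵀ = -A.toBlocks₁₁ := by ext; exact hA' _ _
  have h₂₂ : A.toBlocks₂₂ᵀ = -A.toBlocks₂₂ := by ext; exact hA' _ _
  have h₁₂ : A.toBlocks₁₂ᵀ = -A.toBlocks₂₁ := by ext; exact hA' _ _
  have h₂₁ : A.toBlocks₂₁ᵀ = -A.toBlocks₁₂ := by ext; exact hA' _ _
  have hinv : (⅟A.toBlocks₁₁)ᵀ = -⅟A.toBlocks₁₁ := by
    rw [invOf_eq_nonsing_inv, transpose_nonsing_inv, h₁₁]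
    exact inv_eq_left_inv (by rw [neg_mul_neg, nonsing_inv_mul _ hunit])
  refine ⟨A.toBlocks₂₂ - A.toBlocks₂₁ * ⅟A.toBlocks₁₁ * A.toBlocks₁₂, ?_, ?_⟩
  · rw [transpose_sub, transpose_mul, transpose_mul, h₂₂, h₁₂, h₂₁, hinv]
    simp only [Matrix.mul_neg, Matrix.neg_mul, neg_neg, Matrix.mul_assoc]
    abel
  · conv_lhs => rw [← fromBlocks_toBlocks A, det_fromBlocks₁₁, hdet]

theorem isSquare_det_of_transpose_eq_neg (h2 : (2 : K) ≠ 0) (A : Matrix ι ι K) (hA : Aᵀ = -A) :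
    IsSquare A.det := by
  induction hn : Fintype.card ι using Nat.strong_induction_on generalizing ι with
  | _ n ih =>
  by_cases h0 : A = 0
  · rcases isEmpty_or_nonempty ι with _ | hι
    · rw [det_isEmpty]
      exact .one
    · rw [h0, det_zero]
      exact .zero
  obtain ⟨i, j, hij⟩ : ∃ i j, A i j ≠ 0 := by
    by_contra! hcon
    exact h0 (ext hcon)
  have hne : i ≠ j := by
    rintro rfl
    exact hij (apply_self_eq_zero_of_transpose_eq_neg h2 hA i)
  have hinj : Function.Injective ![i, j] := by
    intro a b hab
    fin_cases a <;> fin_cases b <;> simp_all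
  classical
  let e : Fin 2 ⊕ ((Set.range ![i, j])ᶜ : Set ι) ≃ ι :=
    ((Equiv.ofInjective _ hinj).sumCongr (.refl _)).trans (Equiv.Set.sumCompl _)
  have hcard := Fintype.card_congr e
  rw [Fintype.card_sum, Fintype.card_fin] at hcard
  obtain ⟨S, hS, hdet⟩ := exists_skew_det_eq_sq_mul h2 (A := A.submatrix e e)
    (by rw [transpose_submatrix, hA]; rfl) hij
  rw [det_submatrix_equiv_self] at hdet
  exact hdet ▸ (IsSquare.sq _).mul (ih _ (by omega) S hS rfl)

theorem exists_trace_eq_natCast_of_isIdempotentElem {e : Matrix ι ι K}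
    (he : IsIdempotentElem e) :
    ∃ k : ℕ, e.trace = k ∧ ∀ c : K, (1 + (c - 1) • e).det = c ^ k := by
  obtain ⟨k, A, B, rfl, hAB⟩ := exists_mul_eq_one_of_isIdempotentElem he
  refine ⟨k, by simp [trace_mul_comm B, hAB], fun c ↦ ?_⟩
  have hc : (1 : Matrix (Fin k) (Fin k) K) + (c - 1) • 1 = c • 1 := by rw [sub_smul]; simp
  rw [← Matrix.mul_smul, det_one_add_mul_comm, smul_mul, hAB, hc, det_smul]
  simp

lemma even_finrank_of_mul_eq_neg_mul (h2 : (2 : K) ≠ 0) {V : Type*} [AddCommGroup V] [Module K V]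
    [FiniteDimensional K V] {a b : Module.End K V} (ha : Function.Injective a)
    (hb : Function.Injective b) (hab : a * b = -(b * a)) : Even (Module.finrank K V) := by
  have det_ne_zero {f : Module.End K V} (hf : Function.Injective f) : LinearMap.det f ≠ 0 :=
    fun h ↦ (LinearMap.bot_lt_ker_of_det_eq_zero h).ne' (LinearMap.ker_eq_bot.2 hf)
  by_contra hodd
  have h := congrArg LinearMap.det hab
  rw [← neg_one_smul K (b * a), LinearMap.det_smul, (Nat.not_even_iff_odd.1 hodd).neg_one_pow,
    map_mul, map_mul] at h
  have : 2 * (LinearMap.det a * LinearMap.det b) = 0 := by linear_combination h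
  simp [h2, det_ne_zero ha, det_ne_zero hb] at this

section IsAlgClosed

variable [PerfectField K] {E : Type*} [Field E] [Algebra K E]

lemma sq_minpoly_dvd {f : K[X]} (hf : f ≠ 0) {μ : E}
    (h : 2 ≤ (f.map (algebraMap K E)).rootMultiplicity μ) : minpoly K μ ^ 2 ∣ f := by
  have hmap {g : K[X]} (hg : g ≠ 0) : g.map (algebraMap K E) ≠ 0 :=
    (Polynomial.map_ne_zero_iff (algebraMap K E).injective).2 hg
  have hdvd {g : K[X]} (hg : g ≠ 0) (h : 0 < (g.map (algebraMap K E)).rootMultiplicity μ) :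
      minpoly K μ ∣ g :=
    minpoly.dvd K μ (by simpa [IsRoot, eval_map_algebraMap, hmap hg] using h)
  obtain ⟨g, rfl⟩ := hdvd hf (by omega)
  obtain ⟨hmin, hg⟩ := mul_ne_zero_iff.1 hf
  have hint : IsIntegral K μ := minpoly.ne_zero_iff.1 hmin
  have hle : ((minpoly K μ).map (algebraMap K E)).rootMultiplicity μ ≤ 1 :=
    rootMultiplicity_le_one_of_separable
      (PerfectField.separable_of_irreducible (minpoly.irreducible hint)).map μ
  rw [Polynomial.map_mul, rootMultiplicity_mul (mul_ne_zero (hmap hmin) (hmap hg))] at h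
  rw [sq]
  exact mul_dvd_mul_left _ (hdvd hg (by omega))

variable [IsAlgClosed E]

theorem isSquare_of_even_rootMultiplicity {f : K[X]} (hf : f.Monic)
    (heven : ∀ μ : E, Even ((f.map (algebraMap K E)).rootMultiplicity μ)) : IsSquare f := by
  induction hd : f.natDegree using Nat.strong_induction_on generalizing f with
  | _ d ih =>
  by_cases h1 : f = 1
  · exact h1 ▸ .one
  obtain ⟨μ, hμ⟩ : ∃ μ, (f.map (algebraMap K E)).IsRoot μ := by
    refine IsAlgClosed.exists_root _ ?_
    rw [degree_map]
    exact fun h ↦ h1 (hf.degree_le_zero_iff_eq_one.1 h.le)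
  have hpos := (rootMultiplicity_pos (hf.map (algebraMap K E)).ne_zero).2 hμ
  obtain ⟨m, hm⟩ := heven μ
  obtain ⟨g, rfl⟩ := sq_minpoly_dvd (μ := μ) hf.ne_zero (by omega)
  have hmin : minpoly K μ ≠ 0 := fun h ↦ hf.ne_zero (by simp [h])
  have hint : IsIntegral K μ := minpoly.ne_zero_iff.1 hmin
  have hg : g.Monic := ((minpoly.monic hint).pow 2).of_mul_monic_left hf
  have hdeg := ((minpoly.monic hint).pow 2).natDegree_mul hg
  rw [(minpoly.monic hint).natDegree_pow] at hdeg
  have hmindeg := minpoly.natDegree_pos hint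
  refine .mul (.sq _) (ih g.natDegree (by omega) hg (fun ν ↦ ?_) rfl)
  have h := heven ν
  rwa [Polynomial.map_mul, rootMultiplicity_mul (by simpa using ⟨hmin, hg.ne_zero⟩),
    Polynomial.map_pow, sq, rootMultiplicity_mul (by simpa using hmin),
    Nat.even_add, iff_true_left ⟨_, rfl⟩] at h

theorem isSquare_det_of_commute_of_anticommute (h2 : (2 : E) ≠ 0) (hn : Even (Fintype.card ι))
    {Y : Matrix ι ι K} {A C : Matrix ι ι E} (hA : IsUnit A.det) (hC : IsUnit C.det)
    (hAC : A * C = -(C * A)) (hYA : Commute (Y.map (algebraMap K E)) A)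
    (hYC : Commute (Y.map (algebraMap K E)) C) : IsSquare Y.det := by
  let lin := (toLinAlgEquiv' : Matrix ι ι E ≃ₐ[E] _)
  have hinj {M : Matrix ι ι E} (hM : IsUnit M.det) : Function.Injective (lin M) :=
    mulVec_injective_of_isUnit ((isUnit_iff_isUnit_det _).2 hM)
  obtain ⟨P, hP⟩ : IsSquare Y.charpoly := by
    refine isSquare_of_even_rootMultiplicity (E := E) (charpoly_monic _) fun μ ↦ ?_
    have hchar : Y.charpoly.map (algebraMap K E) =
        (lin (Y.map (algebraMap K E))).charpoly :=
      (charpoly_map Y _).symm.trans (charpoly_toLin' _).symm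
    rw [hchar, ← LinearMap.finrank_maxGenEigenspace_eq]
    have mapsA := Module.End.mapsTo_maxGenEigenspace_of_comm (hYA.map lin) μ
    have mapsC := Module.End.mapsTo_maxGenEigenspace_of_comm (hYC.map lin) μ
    refine even_finrank_of_mul_eq_neg_mul h2 (a := (lin A).restrict mapsA)
      (b := (lin C).restrict mapsC) (fun x y h ↦ Subtype.ext (hinj hA (congrArg Subtype.val h)))
      (fun x y h ↦ Subtype.ext (hinj hC (congrArg Subtype.val h))) ?_
    ext1 x
    refine Subtype.ext (?_ : lin A (lin C x) = -lin C (lin A x))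
    rw [← Module.End.mul_apply, ← map_mul, hAC, map_neg, map_mul]
    rfl
  refine ⟨P.coeff 0, ?_⟩
  rw [det_eq_sign_charpoly_coeff, hn.neg_one_pow, one_mul, hP, mul_coeff_zero]

end IsAlgClosed

end LinearAlgebra

section Subfield

variable {K : Type*} [Field K] {L : Subfield K} {ι : Type*} [Fintype ι] [DecidableEq ι]
  {A : Matrix ι ι K}

lemma exists_map_algebraMap_eq (hA : A ∈ L.toSubring.matrix) :
    ∃ A' : Matrix ι ι L, A'.map (algebraMap L K) = A :=
  ⟨of fun i j ↦ ⟨A i j, hA i j⟩, rfl⟩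

lemma det_map_algebraMap (A' : Matrix ι ι L) : (A'.map (algebraMap L K)).det = A'.det :=
  ((algebraMap L K).map_det A').symm

lemma det_mem_of_mem_matrix (hA : A ∈ L.toSubring.matrix) : A.det ∈ L := by
  obtain ⟨A', rfl⟩ := exists_map_algebraMap_eq hA
  exact det_map_algebraMap A' ▸ A'.det.2

lemma inv_mem_matrix (hA : A ∈ L.toSubring.matrix) : A⁻¹ ∈ L.toSubring.matrix := by
  intro i j
  rw [inv_def, Matrix.smul_apply, Ring.inverse_eq_inv', smul_eq_mul, adjugate_apply]
  refine L.mul_mem (inv_mem (det_mem_of_mem_matrix hA)) (det_mem_of_mem_matrix fun k l ↦ ?_)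
  rw [updateRow_apply, Pi.single_apply]
  split_ifs
  exacts [L.one_mem, L.zero_mem, hA _ _]

lemma smul_mem_matrix {x : K} (hx : x ∈ L) (hA : A ∈ L.toSubring.matrix) :
    x • A ∈ L.toSubring.matrix :=
  fun i j ↦ L.mul_mem hx (hA i j)

lemma mem_of_smul_mem_matrix {c : K} (hA0 : A ≠ 0) (hA : A ∈ L.toSubring.matrix)
    (hc : c • A ∈ L.toSubring.matrix) : c ∈ L := by
  obtain ⟨i, j, hij⟩ : ∃ i j, A i j ≠ 0 := by
    by_contra! h
    exact hA0 (by ext i j; exact h i j)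
  have h : c * A i j / A i j ∈ L := L.div_mem (hc i j) (hA i j)
  rwa [mul_div_cancel_right₀ c hij] at h

lemma exists_mem_sq_eq_det_of_isSquare {A' : Matrix ι ι L} (h : IsSquare A'.det) :
    ∃ y ∈ L, (A'.map (algebraMap L K)).det = y ^ 2 := by
  obtain ⟨y, hy⟩ := h
  exact ⟨y, y.2, by rw [det_map_algebraMap, hy, sq]; rfl⟩

end Subfield

section Schur

variable {G ι k : Type*} [Group G] [Fintype ι] [DecidableEq ι] [Field k]
  {R S : G →* Matrix ι ι k}

/-- Irreducibility of a matrix representation; the analogue of `IsIrredRep` for homomorphisms to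
the multiplicative monoid of matrices. -/
def IsIrred (R : G →* Matrix ι ι k) : Prop :=
  Nonempty ι ∧ ∀ W : Submodule k (ι → k), (∀ g, ∀ v ∈ W, R g *ᵥ v ∈ W) → W = ⊥ ∨ W = ⊤

lemma map_inv_mul_map (R : G →* Matrix ι ι k) (g : G) : R g⁻¹ * R g = 1 := by
  rw [← map_mul, inv_mul_cancel, map_one]

lemma map_mul_map_inv (R : G →* Matrix ι ι k) (g : G) : R g * R g⁻¹ = 1 := by
  rw [← map_mul, mul_inv_cancel, map_one]

lemma isUnit_det_map (R : G →* Matrix ι ι k) (g : G) : IsUnit (R g).det :=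
  (isUnit_iff_isUnit_det _).1 ((Group.isUnit g).map R)

theorem IsIrred.eq_zero_or_isUnit_det (hR : IsIrred R) {S : G → Matrix ι ι k} {A : Matrix ι ι k}
    (hA : ∀ g, S g * A = A * R g) : A = 0 ∨ IsUnit A.det := by
  rcases hR.2 (LinearMap.ker A.toLin') fun g v hv ↦ by
    rw [LinearMap.mem_ker, toLin'_apply] at hv ⊢
    rw [mulVec_mulVec, ← hA, ← mulVec_mulVec, hv, mulVec_zero] with hker | hker
  · right
    rw [isUnit_iff_ne_zero]
    intro hdet
    exact (LinearMap.bot_lt_ker_of_det_eq_zero (by rwa [LinearMap.det_toLin'])).ne' hker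
  · exact .inl (by simpa using LinearMap.ker_eq_top.1 hker)

theorem IsIrred.exists_eq_smul [IsAlgClosed k] (hR : IsIrred R) {S : G → Matrix ι ι k}
    {A B : Matrix ι ι k} (hA : ∀ g, S g * A = A * R g) (hB : ∀ g, S g * B = B * R g)
    (hdet : IsUnit A.det) : ∃ c : k, B = c • A := by
  have := hR.1
  obtain ⟨c, hc⟩ := Module.End.exists_eigenvalue (A⁻¹ * B).toLin'
  obtain ⟨v, hv⟩ := hc.exists_hasEigenvector
  have hker : (B - c • A) *ᵥ v = 0 := by
    have h := congrArg (A *ᵥ ·) hv.apply_eq_smul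
    simp only [toLin'_apply, mulVec_mulVec, mulVec_smul, ← mul_assoc] at h
    rw [mul_nonsing_inv A hdet, one_mul] at h
    rw [sub_mulVec, h, smul_mulVec, sub_self]
  refine ⟨c, sub_eq_zero.1 ((hR.eq_zero_or_isUnit_det (S := S) fun g ↦ ?_).resolve_right
    fun hunit ↦ hv.2 ?_)⟩
  · rw [mul_sub, sub_mul, hB, Matrix.mul_smul, Matrix.smul_mul, hA]
  · exact mulVec_injective_of_isUnit ((isUnit_iff_isUnit_det _).2 hunit) (by rw [hker, mulVec_zero])

theorem IsIrred.exists_eq_smul_one [IsAlgClosed k] (hR : IsIrred R) {A : Matrix ι ι k}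
    (hA : ∀ g, R g * A = A * R g) : ∃ c : k, A = c • 1 :=
  hR.exists_eq_smul (S := R) (fun g ↦ by rw [mul_one, one_mul]) hA (by simp)

variable [Fintype G]

/-- The sum `∑ g, S g * E * R g⁻¹`, which intertwines the representations `R` and `S`. -/
def average (S R : G →* Matrix ι ι k) (E : Matrix ι ι k) : Matrix ι ι k :=
  ∑ g, S g * E * R g⁻¹

lemma map_mul_average (S R : G →* Matrix ι ι k) (E : Matrix ι ι k) (h : G) :
    S h * average S R E = average S R E * R h := by
  rw [average, Finset.mul_sum, Finset.sum_mul]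
  refine Fintype.sum_equiv (Equiv.mulLeft h) _ _ fun g ↦ ?_
  simp only [Equiv.coe_mulLeft, _root_.mul_inv_rev, map_mul, mul_assoc]
  rw [map_inv_mul_map, mul_one]

lemma average_eq_card_smul {A : Matrix ι ι k} (hA : ∀ g, S g * A = A * R g) :
    average S R A = (Fintype.card G : k) • A := by
  simp only [average, hA, mul_assoc, map_mul_map_inv, mul_one, Finset.sum_const, Finset.card_univ,
    Nat.cast_smul_eq_nsmul]

lemma average_single_apply (S R : G →* Matrix ι ι k) (i j a b : ι) :
    average S R (single i j 1) a b = ∑ g, S g a i * R g⁻¹ j b := by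
  rw [average, Matrix.sum_apply]
  exact Finset.sum_congr rfl fun g _ ↦ by
    simp [mul_apply, single_apply, ite_and, Finset.sum_ite_eq]

lemma exists_average_single_ne_zero {E : Matrix ι ι k} (h : average S R E ≠ 0) :
    ∃ i j, average S R (single i j 1) ≠ 0 := by
  contrapose! h
  have hlin : average S R E = ∑ i, ∑ j, E i j • average S R (single i j 1) := by
    conv_lhs => rw [matrix_eq_sum_single E]
    simp only [average, Finset.mul_sum, Finset.sum_mul, Finset.smul_sum]
    rw [Finset.sum_comm]
    refine Finset.sum_congr rfl fun i _ ↦ ?_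
    rw [Finset.sum_comm]
    refine Finset.sum_congr rfl fun j _ ↦ Finset.sum_congr rfl fun g _ ↦ ?_
    rw [← Matrix.smul_mul, ← Matrix.mul_smul, smul_single, smul_eq_mul, mul_one]
  simp only [hlin, h, smul_zero, Finset.sum_const_zero]

lemma sum_trace_mul_trace_inv (S R : G →* Matrix ι ι k) :
    ∑ g, (S g).trace * (R g⁻¹).trace = ∑ i, ∑ j, average S R (single i j 1) i j := by
  simp only [trace, Finset.sum_mul_sum, average_single_apply]
  rw [Finset.sum_comm]
  exact Finset.sum_congr rfl fun i _ ↦ Finset.sum_comm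

variable [CharZero k] [IsAlgClosed k]

theorem IsIrred.average_self (hR : IsIrred R) (E : Matrix ι ι k) :
    average R R E = (Fintype.card G * E.trace / Fintype.card ι : k) • 1 := by
  obtain ⟨c, hc⟩ := hR.exists_eq_smul_one (map_mul_average R R E)
  have hι : (Fintype.card ι : k) ≠ 0 := Nat.cast_ne_zero.2 (Fintype.card_pos_iff.2 hR.1).ne'
  have htrace (g : G) : (R g * E * R g⁻¹).trace = E.trace := by
    rw [trace_mul_comm, ← mul_assoc, map_inv_mul_map, one_mul]
  have h := congrArg trace hc
  simp only [average, trace_sum, htrace, Finset.sum_const, Finset.card_univ, nsmul_eq_mul,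
    trace_smul, trace_one, smul_eq_mul] at h
  rw [hc, h, mul_div_cancel_right₀ c hι]

theorem IsIrred.sum_apply_mul_inv_apply (hR : IsIrred R) (i j a b : ι) :
    ∑ g, R g a i * R g⁻¹ j b =
      if a = b ∧ i = j then (Fintype.card G / Fintype.card ι : k) else 0 := by
  rw [← average_single_apply, hR.average_self, Matrix.smul_apply, one_apply]
  by_cases hab : a = b <;> by_cases hij : i = j <;>
    simp [hab, hij, trace_single_eq_of_ne, trace_single_eq_same]

theorem IsIrred.sum_transpose_mul_mul_inv (hR : IsIrred R) (M : Matrix ι ι k) :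
    ∑ g, (R g)ᵀ * M * R g⁻¹ = (Fintype.card G / Fintype.card ι : k) • Mᵀ := by
  ext i j
  have hentry (g : G) :
      ((R g)ᵀ * M * R g⁻¹) i j = ∑ b, ∑ a, M a b * (R g a i * R g⁻¹ b j) := by
    simp only [mul_apply, transpose_apply, Finset.sum_mul]
    exact Finset.sum_congr rfl fun b _ ↦ Finset.sum_congr rfl fun a _ ↦ by ring
  simp only [Matrix.sum_apply, hentry]
  rw [Finset.sum_comm]
  conv_lhs => enter [2, b]; rw [Finset.sum_comm]
  simp only [← Finset.mul_sum, hR.sum_apply_mul_inv_apply, mul_ite, mul_zero, Matrix.smul_apply,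
    transpose_apply, smul_eq_mul]
  simp [ite_and, mul_comm]

theorem IsIrred.sum_trace_mul_trace_inv_self (hR : IsIrred R) :
    ∑ g, (R g).trace * (R g⁻¹).trace = (Fintype.card G : k) := by
  have hι : (Fintype.card ι : k) ≠ 0 := Nat.cast_ne_zero.2 (Fintype.card_pos_iff.2 hR.1).ne'
  simp only [sum_trace_mul_trace_inv, average_single_apply, hR.sum_apply_mul_inv_apply, and_self,
    Finset.sum_ite_eq, Finset.mem_univ, if_true, Finset.sum_const, Finset.card_univ, nsmul_eq_mul]
  field_simp

end Schur

section Schur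

variable {G ι k : Type*} [Group G] [Finite G] [Fintype ι] [DecidableEq ι] [Field k] [CharZero k]
  [IsAlgClosed k] {R S : G →* Matrix ι ι k}

theorem IsIrred.exists_intertwiner_of_trace_eq (hR : IsIrred R)
    (h : ∀ g, (S g).trace = (R g).trace) :
    ∃ A : Matrix ι ι k, IsUnit A.det ∧ ∀ g, S g * A = A * R g := by
  have := Fintype.ofFinite G
  obtain ⟨i, j, hij⟩ : ∃ i j, average S R (single i j 1) ≠ 0 := by
    by_contra! hzero
    have hsum := sum_trace_mul_trace_inv S R
    simp only [h, hR.sum_trace_mul_trace_inv_self, hzero, Matrix.zero_apply, Finset.sum_const_zero,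
      Nat.cast_eq_zero, Fintype.card_ne_zero] at hsum
  have hA := map_mul_average S R (single i j 1)
  exact ⟨_, (hR.eq_zero_or_isUnit_det hA).resolve_left hij, hA⟩

theorem IsIrred.of_trace_eq (hR : IsIrred R) (h : ∀ g, (S g).trace = (R g).trace) :
    IsIrred S := by
  obtain ⟨A, hdet, hA⟩ := hR.exists_intertwiner_of_trace_eq h
  let f := A.toLinearEquiv' ((isUnit_iff_isUnit_det A).2 hdet).invertible
  refine ⟨hR.1, fun W hW ↦ ?_⟩
  have hf (v) : f v = A *ᵥ v := rfl
  have hcomap := hR.2 (W.comap f.toLinearMap) fun g v hv ↦ by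
    rw [Submodule.mem_comap, LinearEquiv.coe_coe, hf] at hv ⊢
    rw [mulVec_mulVec, ← hA, ← mulVec_mulVec]
    exact hW g _ hv
  let comap := (Submodule.orderIsoMapComap f).symm
  exact hcomap.imp (map_eq_bot_iff comap).1 (map_eq_top_iff comap).1

end Schur

section CentralCharacter

variable {G ι k : Type*} [Group G] [Fintype ι] [DecidableEq ι] [Field k] [IsAlgClosed k]
  [CharZero k] {R : G →* Matrix ι ι k}

/- The sum of a conjugacy class acts by a scalar which is integral, since `MonoidAlgebra ℤ G` is a
finite `ℤ`-module. -/
theorem IsIrred.card_dvd_card_conjClass_mul_trace [Finite G] (hR : IsIrred R) {C : Finset G}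
    {g₀ : G} (hC : ∀ g, g ∈ C ↔ IsConj g₀ g) {m : ℤ} (hm : (R g₀).trace = m) :
    (Fintype.card ι : ℤ) ∣ C.card * m := by
  have := hR.1
  obtain ⟨c, hc⟩ := hR.exists_eq_smul_one (A := ∑ g ∈ C, R g) fun h ↦ by
    rw [Finset.mul_sum, Finset.sum_mul]
    refine Finset.sum_equiv (MulAut.conj h).toEquiv (fun g ↦ ?_) fun g _ ↦ ?_
    · have hconj : IsConj g (MulAut.conj h g) := isConj_iff.2 ⟨h, rfl⟩
      rw [hC, hC]
      exact ⟨(·.trans hconj), (·.trans hconj.symm)⟩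
    · simp [← map_mul]
  have hint : IsIntegral ℤ c := by
    let f : MonoidAlgebra ℤ G →ₐ[ℤ] Matrix ι ι k := MonoidAlgebra.lift ℤ _ G R
    have hf : f (∑ g ∈ C, MonoidAlgebra.of ℤ G g) = algebraMap k (Matrix ι ι k) c := by
      simp only [f, map_sum, MonoidAlgebra.lift_of, hc, Algebra.algebraMap_eq_smul_one]
    have h := (IsIntegral.of_finite ℤ (∑ g ∈ C, MonoidAlgebra.of ℤ G g)).map f
    rw [hf] at h
    exact (isIntegral_algebraMap_iff (algebraMap k (Matrix ι ι k)).injective).1 h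
  have htrace : (C.card * m : k) = c * Fintype.card ι := by
    have hconst : ∀ g ∈ C, (R g).trace = m := fun g hg ↦ by
      obtain ⟨x, rfl⟩ := isConj_iff.1 ((hC g).1 hg)
      rw [map_mul, trace_mul_comm, ← map_mul, inv_mul_cancel_left, hm]
    simpa [trace_sum, Finset.sum_congr rfl hconst] using congrArg trace hc
  have hι : (Fintype.card ι : ℚ) ≠ 0 := by simp
  have hrat : c = algebraMap ℚ k (C.card * m / Fintype.card ι) := by
    rw [map_div₀, eq_div_iff (by simp), map_natCast, ← htrace]
    simp
  rw [hrat, isIntegral_algebraMap_iff (algebraMap ℚ k).injective,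
    IsIntegrallyClosed.isIntegral_iff] at hint
  obtain ⟨w, hw⟩ := hint
  refine ⟨w, ?_⟩
  rw [eq_intCast, eq_div_iff hι, mul_comm] at hw
  exact_mod_cast hw.symm

end CentralCharacter

section InvariantHermitianForm

open ComplexConjugate ComplexOrder

variable {G ι : Type*} [Group G] [Fintype ι] [DecidableEq ι] {R : G →* Matrix ι ι ℂ}

lemma conjTranspose_map_inv_mul {H : Matrix ι ι ℂ} (hH : ∀ g, (R g)ᴴ * H * R g = H) (g : G) :
    (R g⁻¹)ᴴ * H = H * R g := by
  conv_rhs => rw [← hH g⁻¹]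
  rw [mul_assoc _ (R g⁻¹), map_inv_mul_map, mul_one]

theorem IsIrred.exists_eq_smul_of_conjTranspose_mul_mul_eq (hR : IsIrred R) {P H : Matrix ι ι ℂ}
    (hP : ∀ g, (R g)ᴴ * P * R g = P) (hH : ∀ g, (R g)ᴴ * H * R g = H) (hdet : IsUnit P.det) :
    ∃ c : ℂ, H = c • P :=
  hR.exists_eq_smul (S := fun g ↦ (R g⁻¹)ᴴ) (conjTranspose_map_inv_mul hP)
    (conjTranspose_map_inv_mul hH) hdet

lemma conj_eq_self_of_eq_smul [Nonempty ι] {c : ℂ} {P H : Matrix ι ι ℂ} (hc : H = c • P)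
    (hP : P.IsHermitian) (hH : H.IsHermitian) (hdet : IsUnit P.det) : conj c = c := by
  obtain ⟨i, j, hij⟩ : ∃ i j, P i j ≠ 0 := by
    by_contra! h
    obtain rfl : P = 0 := by ext i j; exact h i j
    simp at hdet
  have h := congrFun₂ hH.eq i j
  rw [hc, conjTranspose_smul, hP.eq] at h
  exact mul_right_cancel₀ hij h

variable [Finite G]

theorem exists_posDef_conjTranspose_mul_mul_eq (R : G →* Matrix ι ι ℂ) :
    ∃ P : Matrix ι ι ℂ, P.PosDef ∧ ∀ g, (R g)ᴴ * P * R g = P := by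
  have := Fintype.ofFinite G
  classical
  refine ⟨∑ g, (R g)ᴴ * R g, ?_, fun h ↦ ?_⟩
  · rw [← Finset.add_sum_erase _ _ (Finset.mem_univ (1 : G))]
    refine PosDef.add_posSemidef (by simpa using PosDef.one) (posSemidef_sum _ fun g _ ↦ ?_)
    exact posSemidef_conjTranspose_mul_self _
  · rw [Finset.mul_sum, Finset.sum_mul]
    refine Fintype.sum_equiv (Equiv.mulRight h) _ _ fun g ↦ ?_
    simp only [Equiv.coe_mulRight, map_mul, conjTranspose_mul, mul_assoc]

theorem conj_trace_map (R : G →* Matrix ι ι ℂ) (g : G) :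
    conj (R g).trace = (R g⁻¹).trace := by
  obtain ⟨P, hP, hinv⟩ := exists_posDef_conjTranspose_mul_mul_eq R
  have hdet : IsUnit P.det := hP.isUnit.map detMonoidHom
  have h : (R g)ᴴ = P * R g⁻¹ * P⁻¹ := by
    rw [← conjTranspose_map_inv_mul hinv, inv_inv, mul_assoc, mul_nonsing_inv P hdet, mul_one]
  rw [starRingEnd_apply, ← trace_conjTranspose, h, trace_mul_comm, ← mul_assoc,
    nonsing_inv_mul P hdet, one_mul]

theorem norm_det_map (R : G →* Matrix ι ι ℂ) (g : G) : ‖(R g).det‖ = 1 := by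
  refine Complex.norm_eq_one_of_pow_eq_one (n := Nat.card G) ?_ Nat.card_pos.ne'
  rw [← det_pow, ← map_pow, pow_card_eq_one', map_one, det_one]

theorem IsIrred.det_pos_of_isHermitian (hR : IsIrred R) {H : Matrix ι ι ℂ} (hdet : IsUnit H.det)
    (hH : H.IsHermitian) (hinv : ∀ g, (R g)ᴴ * H * R g = H) (hι : Even (Fintype.card ι)) :
    0 < H.det := by
  have := hR.1
  obtain ⟨P, hP, hPinv⟩ := exists_posDef_conjTranspose_mul_mul_eq R
  have hPdet : IsUnit P.det := hP.isUnit.map detMonoidHom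
  obtain ⟨c, rfl⟩ := hR.exists_eq_smul_of_conjTranspose_mul_mul_eq hPinv hinv hPdet
  obtain ⟨x, rfl⟩ := Complex.conj_eq_iff_real.1 (conj_eq_self_of_eq_smul rfl hP.1 hH hPdet)
  rw [det_smul] at hdet ⊢
  have hx : x ≠ 0 := by rintro rfl; simp at hdet
  exact mul_pos (by exact_mod_cast hι.pow_pos hx) hP.det_pos

end InvariantHermitianForm

/-- An involutive anti-automorphism of a group. Several of them on the same group are used at once,
so this is not a `StarMul` instance. -/
structure AntiInvolution (G : Type*) [Group G] where
  /-- The underlying map. -/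
  toFun : G → G
  map_mul : ∀ g h, toFun (g * h) = toFun h * toFun g
  involutive : Function.Involutive toFun

namespace AntiInvolution

variable {G ι k : Type*} [Group G]

instance : CoeFun (AntiInvolution G) fun _ ↦ G → G := ⟨toFun⟩

variable (τ : AntiInvolution G)

lemma map_one : τ 1 = 1 := by
  have h := τ.map_mul 1 1
  rwa [mul_one, left_eq_mul] at h

lemma map_inv (g : G) : τ g⁻¹ = (τ g)⁻¹ := by
  rw [eq_inv_iff_mul_eq_one, ← τ.map_mul, mul_inv_cancel, τ.map_one]

variable [Fintype ι] [DecidableEq ι]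

/-- The contragredient representation `g ↦ (R g⁻¹)ᵀ` twisted by the automorphism `g ↦ τ g⁻¹`.
An intertwiner from `R` to it is a bilinear form for which `τ` is the adjoint. -/
def dual [CommRing k] (R : G →* Matrix ι ι k) : G →* Matrix ι ι k where
  toFun g := (R (τ g))ᵀ
  map_one' := by rw [τ.map_one, _root_.map_one, transpose_one]
  map_mul' g h := by rw [τ.map_mul, _root_.map_mul, transpose_mul]

lemma dual_apply [CommRing k] (R : G →* Matrix ι ι k) (g : G) : τ.dual R g = (R (τ g))ᵀ := rfl

variable [Field k] {R : G →* Matrix ι ι k}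

lemma transpose_map_mul {B : Matrix ι ι k} (hB : ∀ g, τ.dual R g * B = B * R g) (g : G) :
    (R g)ᵀ * B = B * R (τ g) := by
  rw [← hB, dual_apply, τ.involutive]

variable [Fintype G]

lemma transpose_average_dual (R : G →* Matrix ι ι k) (E : Matrix ι ι k) :
    (average (τ.dual R) R E)ᵀ = average (τ.dual R) R Eᵀ := by
  let τ' : G ≃ G := (τ.involutive.toPerm).trans (Equiv.inv G)
  rw [average, transpose_sum]
  refine Fintype.sum_equiv τ' _ _ fun g ↦ ?_
  change _ = (R (τ (τ g)⁻¹))ᵀ * Eᵀ * R (τ g)⁻¹⁻¹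
  rw [τ.map_inv, τ.involutive, inv_inv, transpose_mul, transpose_mul, dual_apply,
    transpose_transpose, mul_assoc]

lemma transpose_mul_average_dual [CharZero k] [IsAlgClosed k] (hR : IsIrred R) {e : Matrix ι ι k}
    (hτ : ∀ g, e * R (τ g) * e = e * R g * e) (E : Matrix ι ι k) :
    eᵀ * average (τ.dual R) R (eᵀ * E) =
      (Fintype.card G / Fintype.card ι : k) • (eᵀ * Eᵀ * e) := by
  have hterm (g : G) :
      eᵀ * ((R (τ g))ᵀ * (eᵀ * E) * R g⁻¹) = eᵀ * ((R g)ᵀ * (eᵀ * E) * R g⁻¹) := by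
    have h := congrArg (· * E * R g⁻¹) (congrArg transpose (hτ g))
    simpa only [transpose_mul, mul_assoc] using h
  simp only [average, dual_apply, Finset.mul_sum, hterm]
  rw [← Finset.mul_sum, hR.sum_transpose_mul_mul_inv, Matrix.mul_smul, transpose_mul,
    transpose_transpose, mul_assoc]

end AntiInvolution

section

variable {G ι k : Type*} [Group G] [Fintype ι] [DecidableEq ι] [Field k] [Finite G]
  [CharZero k] [IsAlgClosed k] {R : G →* Matrix ι ι k} {τ : AntiInvolution G} {e : Matrix ι ι k}

theorem IsIrred.exists_symm_dual_intertwiner_mem (hR : IsIrred R)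
    {L : Subfield k} (hL : ∀ g, R g ∈ L.toSubring.matrix) {B : Matrix ι ι k}
    (hB : ∀ g, τ.dual R g * B = B * R g) (hB0 : B ≠ 0) (hBs : B.IsSymm) :
    ∃ B' ∈ L.toSubring.matrix, (∀ g, τ.dual R g * B' = B' * R g) ∧ IsUnit B'.det ∧ B'.IsSymm := by
  have := Fintype.ofFinite G
  have hBdet : IsUnit B.det := (hR.eq_zero_or_isUnit_det hB).resolve_left hB0
  have havg : average (τ.dual R) R B ≠ 0 := by
    rw [average_eq_card_smul hB]
    exact smul_ne_zero (Nat.cast_ne_zero.2 Fintype.card_ne_zero) hB0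
  obtain ⟨i, j, hij⟩ := exists_average_single_ne_zero havg
  have hB' := map_mul_average (τ.dual R) R (single i j 1)
  obtain ⟨c, hc⟩ := hR.exists_eq_smul hB hB' hBdet
  refine ⟨_, fun a b ↦ ?_, hB', (hR.eq_zero_or_isUnit_det hB').resolve_left hij, ?_⟩
  · rw [average_single_apply]
    exact L.sum_mem fun g _ ↦ L.mul_mem (hL _ _ _) (hL _ _ _)
  · rw [hc]
    exact hBs.smul c

/- The Gelfand-pair argument: the forms `average (τ.dual R) R (eᵀ * E * e)` are all proportional,
hence so are the matrices `eᵀ * E * e`, and `e` has rank one. -/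
theorem IsIrred.trace_eq_one_of_mul_map_mul_eq (hR : IsIrred R)
    (he : IsIdempotentElem e) (he0 : e ≠ 0) (hτ : ∀ g, e * R (τ g) * e = e * R g * e) :
    e.trace = 1 ∧ ∃ B, (∀ g, τ.dual R g * B = B * R g) ∧ B ≠ 0 ∧ B.IsSymm := by
  have := Fintype.ofFinite G
  obtain ⟨i, j, hij⟩ : ∃ i j, e i j ≠ 0 := by
    by_contra! h
    exact he0 (by ext i j; exact h i j)
  have hcard : (Fintype.card G / Fintype.card ι : k) ≠ 0 := by
    have := hR.1
    simp
  let B (a : ι) := average (τ.dual R) R (eᵀ * (single i a 1 * e))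
  have hB (a : ι) : ∀ g, τ.dual R g * B a = B a * R g := map_mul_average _ R _
  have heB (a : ι) :
      eᵀ * B a = (Fintype.card G / Fintype.card ι : k) • vecMulVec (e a) (e i) := by
    have hsingle : (single i a 1 * e)ᵀ * e = vecMulVec (e a) (e i) := by
      ext x y
      simp [mul_apply, single_apply, vecMulVec_apply, ite_and, Finset.sum_ite_eq]
    rw [τ.transpose_mul_average_dual hR hτ, ← transpose_mul, mul_assoc, he, hsingle]
  have hB0 : B i ≠ 0 := by
    intro h
    have hentry := congrFun₂ (heB i) j j
    simp only [h, mul_zero, Matrix.smul_apply, vecMulVec_apply, Matrix.zero_apply] at hentry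
    exact smul_ne_zero hcard (mul_ne_zero hij hij) hentry.symm
  have hBs : (B i).IsSymm := by
    rw [IsSymm, τ.transpose_average_dual]
    simp only [transpose_mul, transpose_transpose, transpose_single, mul_assoc, B]
  refine ⟨trace_eq_one_of_forall_exists_eq_smul he hij fun a ↦ ?_, B i, hB i, hB0, hBs⟩
  obtain ⟨c, hc⟩ := hR.exists_eq_smul (hB i) (hB a)
    ((hR.eq_zero_or_isUnit_det (hB i)).resolve_left hB0)
  refine ⟨c, funext fun x ↦ mul_right_cancel₀ hij (mul_left_cancel₀ hcard ?_)⟩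
  have h : eᵀ * B a = c • (eᵀ * B i) := by rw [hc, Matrix.mul_smul]
  rw [heB, heB] at h
  have hentry := congrFun₂ h x j
  simp only [Matrix.smul_apply, vecMulVec_apply, smul_eq_mul, Pi.smul_apply] at hentry ⊢
  linear_combination hentry

end

section

open ComplexConjugate

variable {G ι : Type*} [Group G] [Fintype ι] [DecidableEq ι] {R : G →* Matrix ι ι ℂ}

lemma AntiInvolution.conjTranspose_mul_mul_eq {τ : AntiInvolution G} {H B : Matrix ι ι ℂ}
    (hinv : ∀ g, (R g)ᴴ * H * R g = H) (hB : ∀ g, τ.dual R g * B = B * R g) (g : G) :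
    (R g)ᴴ * (Bᴴ * Hᵀ⁻¹ * B) * R g = Bᴴ * Hᵀ⁻¹ * B := by
  set S := τ.dual R g with hS
  have hS1 : IsUnit S.det := isUnit_det_map _ _
  have hS2 : IsUnit Sᴴ.det := by simpa only [det_conjTranspose] using hS1.star
  have hSH : S * Hᵀ * Sᴴ = Hᵀ := by
    conv_rhs => rw [← hinv (τ g), transpose_mul, transpose_mul, ← mul_assoc]
    rfl
  have hSH' : Sᴴ * Hᵀ⁻¹ * S = Hᵀ⁻¹ := by
    conv_lhs => rw [← hSH]
    rw [Matrix.mul_inv_rev, Matrix.mul_inv_rev, mul_assoc, mul_assoc, mul_assoc,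
      nonsing_inv_mul S hS1, mul_one, ← mul_assoc, mul_nonsing_inv _ hS2, one_mul]
  calc (R g)ᴴ * (Bᴴ * Hᵀ⁻¹ * B) * R g = (B * R g)ᴴ * Hᵀ⁻¹ * (B * R g) := by
        simp only [conjTranspose_mul, mul_assoc]
    _ = Bᴴ * (Sᴴ * Hᵀ⁻¹ * S) * B := by
        simp only [← hB, ← hS, conjTranspose_mul, mul_assoc]
    _ = Bᴴ * Hᵀ⁻¹ * B := by rw [hSH']

lemma norm_det_sq_eq_of_conjTranspose_mul_mul_eq_smul {H B : Matrix ι ι ℂ} {c : ℂ}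
    (hdet : IsUnit H.det) (hc : Bᴴ * Hᵀ⁻¹ * B = c • H) :
    (‖B.det‖ : ℂ) ^ 2 = c ^ Fintype.card ι * H.det ^ 2 := by
  have h := congrArg det hc
  have h0 := hdet.ne_zero
  simp only [det_mul, det_smul, det_conjTranspose, det_nonsing_inv, det_transpose,
    Ring.inverse_eq_inv'] at h
  field_simp at h
  rw [← Complex.conj_mul', ← Complex.star_def]
  linear_combination h

theorem IsIrred.exists_mem_det_mul_sq_eq_norm_det [Finite G] (hR : IsIrred R)
    (hι : 4 ∣ Fintype.card ι) {L : Subfield ℂ} (hL : ∀ x ∈ L, conj x ∈ L)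
    {H : Matrix ι ι ℂ} (hHL : H ∈ L.toSubring.matrix) (hdet : IsUnit H.det) (hH : H.IsHermitian)
    (hinv : ∀ g, (R g)ᴴ * H * R g = H) {τ : AntiInvolution G} {B : Matrix ι ι ℂ}
    (hBL : B ∈ L.toSubring.matrix) (hBdet : IsUnit B.det)
    (hB : ∀ g, τ.dual R g * B = B * R g) :
    ∃ c ∈ L, c ≠ 0 ∧ conj c = c ∧ H.det * c ^ 2 = ‖B.det‖ := by
  have := hR.1
  obtain ⟨m, hm⟩ := hι
  obtain ⟨c, hc⟩ := hR.exists_eq_smul_of_conjTranspose_mul_mul_eq hinv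
    (AntiInvolution.conjTranspose_mul_mul_eq hinv hB) hdet
  have hM : (Bᴴ * Hᵀ⁻¹ * B).IsHermitian :=
    isHermitian_conjTranspose_mul_mul B hH.transpose.inv
  have hML : Bᴴ * Hᵀ⁻¹ * B ∈ L.toSubring.matrix :=
    mul_mem (mul_mem (fun i j ↦ hL _ (hBL j i)) (inv_mem_matrix fun i j ↦ hHL j i)) hBL
  have hcL : c ∈ L := by
    have hH0 : H ≠ 0 := by rintro rfl; simp at hdet
    exact mem_of_smul_mem_matrix hH0 hHL (hc ▸ hML)
  have hcc := conj_eq_self_of_eq_smul hc hH hM hdet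
  obtain ⟨r, hr, hrH⟩ : ∃ r : ℝ, 0 < r ∧ r = H.det := by
    have hpos := hR.det_pos_of_isHermitian hdet hH hinv ⟨2 * m, by omega⟩
    rw [Complex.lt_def] at hpos
    exact ⟨_, hpos.1, Complex.ext rfl hpos.2⟩
  obtain ⟨x, rfl⟩ := Complex.conj_eq_iff_real.1 hcc
  have hsq : ‖B.det‖ ^ 2 = (r * (x ^ m) ^ 2) ^ 2 := by
    have h := norm_det_sq_eq_of_conjTranspose_mul_mul_eq_smul hdet hc
    rw [← hrH, hm] at h
    have h' : ‖B.det‖ ^ 2 = x ^ (4 * m) * r ^ 2 := by exact_mod_cast h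
    linear_combination h'
  have hnorm : ‖B.det‖ = r * (x ^ m) ^ 2 :=
    (pow_left_inj₀ (norm_nonneg _) (by positivity) two_ne_zero).1 hsq
  have hx : x ^ m ≠ 0 := by
    intro h
    exact hBdet.ne_zero (by simpa [h] using hnorm)
  refine ⟨(x : ℂ) ^ m, L.pow_mem hcL m, by exact_mod_cast hx, by rw [map_pow, hcc], ?_⟩
  rw [hnorm, ← hrH]
  push_cast
  ring

end

/-- The quadratic extension `F_{q²} / F_q` for odd `q`, presented as the field `F = F_{q²}` together
with its Frobenius involution `conj : x ↦ x ^ q`. -/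
structure QuadraticFrobenius (F : Type*) [Field F] where
  q : ℕ
  odd_q : Odd q
  card_eq : Nat.card F = q ^ 2
  conj : F →+* F
  conj_apply : ∀ x, conj x = x ^ q

namespace QuadraticFrobenius

variable {F : Type*} [Field F] (Q : QuadraticFrobenius F)

lemma three_le_q : 3 ≤ Q.q := by
  obtain ⟨h, hh⟩ := Q.odd_q
  have hF : Finite F := Nat.finite_of_card_ne_zero (by rw [Q.card_eq, hh]; positivity)
  have h1 : 1 < Q.q ^ 2 := Q.card_eq ▸ Finite.one_lt_card
  rcases Nat.eq_zero_or_pos h with rfl | h0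
  · simp [hh] at h1
  · omega

protected lemma two_ne_zero (Q : QuadraticFrobenius F) : (2 : F) ≠ 0 := by
  intro h2
  obtain ⟨h, hh⟩ := Q.odd_q
  have hF : Finite F := Nat.finite_of_card_ne_zero (by rw [Q.card_eq, hh]; positivity)
  have := Fintype.ofFinite F
  have h0 : ((Nat.card F : ℕ) : F) = 0 := by rw [Nat.card_eq_fintype_card, Nat.cast_card_eq_zero]
  rw [Q.card_eq, hh] at h0
  push_cast at h0
  rw [h2, zero_mul, zero_add, one_pow] at h0
  exact one_ne_zero h0

lemma q_sq_sub_one : Q.q ^ 2 - 1 = (Q.q + 1) * (Q.q - 1) := by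
  rw [← Nat.sq_sub_sq, one_pow]

lemma natCast_q_ne_zero : (Q.q : ℂ) ≠ 0 := by
  have := Q.three_le_q
  exact_mod_cast (by omega : Q.q ≠ 0)

lemma natCast_q_sub_one_ne_zero : (Q.q : ℂ) - 1 ≠ 0 := by
  have := Q.three_le_q
  rw [sub_ne_zero]
  exact_mod_cast (by omega : Q.q ≠ 1)

/-- The field `F_q` of fixed points of `conj`. -/
def K : Subfield F := Q.conj.eqLocusField (RingHom.id F)

lemma mem_K {x : F} : x ∈ Q.K ↔ Q.conj x = x := Iff.rfl

@[simp]
lemma conj_coe (r : Q.K) : Q.conj r = r := r.2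

lemma two_ne_zero_K : (2 : Q.K) ≠ 0 := fun h ↦ Q.two_ne_zero (congrArg Subtype.val h)

lemma pow_q_sub_one_eq_one {x : Fˣ} (hx : Q.conj x = x) : x ^ (Q.q - 1) = 1 := by
  have h : x ^ (Q.q - 1) * x = x := by
    rw [← pow_succ, Nat.sub_add_cancel (by linarith [Q.three_le_q])]
    exact Units.ext (by rw [Units.val_pow_eq_pow_val, ← Q.conj_apply, hx])
  exact mul_eq_right.1 h

lemma exists_eq_pow_of_conj_eq_self {g x : Fˣ} (hg : ∀ x : Fˣ, ∃ j : ℕ, x = g ^ j)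
    (ho : orderOf g = Q.q ^ 2 - 1) (hx : Q.conj x = x) : ∃ j : ℕ, x = (g ^ (Q.q + 1)) ^ j := by
  obtain ⟨j, rfl⟩ := hg x
  have hdvd := orderOf_dvd_of_pow_eq_one ((pow_mul g _ _).trans (Q.pow_q_sub_one_eq_one hx))
  have hq := Q.three_le_q
  rw [ho, q_sq_sub_one] at hdvd
  obtain ⟨i, rfl⟩ := Nat.dvd_of_mul_dvd_mul_right (by omega) hdvd
  exact ⟨i, pow_mul g _ _⟩

section Finite

variable [Finite F]

@[simp]
lemma conj_conj (x : F) : Q.conj (Q.conj x) = x := by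
  have := Fintype.ofFinite F
  rw [Q.conj_apply, Q.conj_apply, ← pow_mul, ← sq, ← Q.card_eq, Nat.card_eq_fintype_card,
    FiniteField.pow_card]

lemma exists_generator :
    ∃ g : Fˣ, (∀ x : Fˣ, ∃ j : ℕ, x = g ^ j) ∧ orderOf g = Q.q ^ 2 - 1 := by
  obtain ⟨g, hg⟩ := IsCyclic.exists_generator (α := Fˣ)
  refine ⟨g, fun x ↦ ?_, ?_⟩
  · obtain ⟨j, hj⟩ := mem_powers_iff_mem_zpowers.2 (hg x)
    exact ⟨j, hj.symm⟩
  · rw [orderOf_eq_card_of_forall_mem_zpowers hg, Nat.card_units, Q.card_eq]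

lemma exists_conj_eq_neg : ∃ x : F, x ≠ 0 ∧ Q.conj x = -x := by
  obtain ⟨g, -, ho⟩ := Q.exists_generator
  refine ⟨g - Q.conj g, fun h ↦ ?_, by rw [map_sub, Q.conj_conj, neg_sub]⟩
  have hq := Q.three_le_q
  have hdvd := orderOf_dvd_of_pow_eq_one (Q.pow_q_sub_one_eq_one (sub_eq_zero.1 h).symm)
  rw [ho, q_sq_sub_one] at hdvd
  have := Nat.le_of_dvd (by omega) hdvd
  nlinarith [Nat.sub_pos_of_lt (show 1 < Q.q by omega)]

/-- An element of `F_{q²}ˣ` of trace zero. -/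
def eps : F := Q.exists_conj_eq_neg.choose

lemma eps_ne_zero : Q.eps ≠ 0 := Q.exists_conj_eq_neg.choose_spec.1

lemma conj_eps : Q.conj Q.eps = -Q.eps := Q.exists_conj_eq_neg.choose_spec.2

/-- The coordinate of `x` along `1` in the decomposition `F_{q²} = F_q ⊕ F_q·eps`. -/
def rePart : F →+ Q.K where
  toFun x := ⟨(x + Q.conj x) / 2, Q.mem_K.2 <| by
    rw [map_div₀, map_add, Q.conj_conj, map_ofNat, add_comm]⟩
  map_zero' := Subtype.ext <| by simp
  map_add' x y := Subtype.ext <| by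
    simp only [map_add, Subfield.coe_add]
    ring

/-- The coordinate of `x` along `eps` in the decomposition `F_{q²} = F_q ⊕ F_q·eps`. -/
def imPart : F →+ Q.K where
  toFun x := ⟨(x - Q.conj x) / (2 * Q.eps), Q.mem_K.2 <| by
    rw [map_div₀, map_sub, Q.conj_conj, map_mul, map_ofNat, Q.conj_eps, mul_neg, div_neg,
      ← neg_div, neg_sub]⟩
  map_zero' := Subtype.ext <| by simp
  map_add' x y := Subtype.ext <| by
    simp only [map_add, Subfield.coe_add]
    ring

lemma coe_rePart (x : F) : (Q.rePart x : F) = (x + Q.conj x) / 2 := rfl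

lemma coe_imPart (x : F) : (Q.imPart x : F) = (x - Q.conj x) / (2 * Q.eps) := rfl

lemma rePart_conj (x : F) : Q.rePart (Q.conj x) = Q.rePart x :=
  Subtype.ext <| by rw [coe_rePart, coe_rePart, conj_conj, add_comm]

lemma rePart_coe (r : Q.K) : Q.rePart r = r :=
  Subtype.ext <| by
    rw [coe_rePart, conj_coe, ← two_mul, mul_div_cancel_left₀ _ Q.two_ne_zero]

lemma imPart_eq_zero {x : F} (hx : Q.conj x = x) : Q.imPart x = 0 :=
  Subtype.ext <| by rw [coe_imPart, hx, sub_self, zero_div, Subfield.coe_zero]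

lemma imPart_mul_conj_self (x : F) : Q.imPart (x * Q.conj x) = 0 :=
  Q.imPart_eq_zero <| by rw [map_mul, conj_conj, mul_comm]

lemma imPart_conj (x : F) : Q.imPart (Q.conj x) = -Q.imPart x :=
  Subtype.ext <| by
    rw [Subfield.coe_neg, coe_imPart, coe_imPart, conj_conj, ← neg_div, neg_sub]

lemma imPart_eps_mul (r : Q.K) : Q.imPart (Q.eps * r) = r :=
  Subtype.ext <| by
    have h2 := Q.two_ne_zero
    have he := Q.eps_ne_zero
    rw [coe_imPart, map_mul, conj_eps, conj_coe]
    field_simp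
    ring

/-- The isomorphism `F_{q²} ≃ F_q ⊕ F_q·eps`. -/
def reImEquiv : F ≃ Q.K × Q.K where
  toFun x := (Q.rePart x, Q.imPart x)
  invFun y := y.1 + Q.eps * y.2
  left_inv x := by
    have h2 := Q.two_ne_zero
    have he := Q.eps_ne_zero
    simp only [coe_rePart, coe_imPart]
    field_simp
    ring
  right_inv y := by
    have hre : Q.rePart (Q.eps * y.2) = 0 := Subtype.ext <| by
      rw [coe_rePart, map_mul, conj_eps, conj_coe, neg_mul, add_neg_cancel, zero_div,
        Subfield.coe_zero]
    simp only [map_add, rePart_coe, hre, Q.imPart_eq_zero (Q.conj_coe _), imPart_eps_mul,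
      add_zero, zero_add]

lemma card_K : Nat.card Q.K = Q.q := by
  have h := Nat.card_congr Q.reImEquiv
  rw [Nat.card_prod, Q.card_eq, ← sq] at h
  exact (Nat.pow_left_injective (n := 2) (by norm_num) h).symm

/-- The norm map `x ↦ x ^ (q + 1)` from `F_{q²}` to `F_q`. -/
def norm : F →* Q.K where
  toFun x := ⟨x * Q.conj x, Q.mem_K.2 <| by rw [map_mul, conj_conj, mul_comm]⟩
  map_one' := Subtype.ext <| by simp
  map_mul' x y := Subtype.ext <| by
    simp only [map_mul, Subfield.coe_mul]
    ring

lemma coe_norm (x : F) : (Q.norm x : F) = x * Q.conj x := rfl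

lemma norm_ne_zero (t : Fˣ) : Q.norm t ≠ 0 := fun h ↦
  mul_ne_zero t.ne_zero ((map_ne_zero Q.conj).2 t.ne_zero) (congrArg Subtype.val h)

lemma norm_coe (r : Q.K) : Q.norm r = r ^ 2 :=
  Subtype.ext <| by rw [coe_norm, conj_coe, ← sq]; rfl

lemma exists_norm_eq {r : Q.K} (hr : r ≠ 0) : ∃ t : Fˣ, Q.norm t = r := by
  obtain ⟨g, hg, ho⟩ := Q.exists_generator
  have hr' : (r : F) ≠ 0 := by simpa using hr
  obtain ⟨j, hj⟩ :=
    Q.exists_eq_pow_of_conj_eq_self (x := Units.mk0 (r : F) hr') hg ho (Q.conj_coe r)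
  refine ⟨g ^ j, Subtype.ext ?_⟩
  rw [coe_norm, conj_apply, ← pow_succ', ← Units.val_pow_eq_pow_val, ← pow_mul, mul_comm, pow_mul,
    ← hj, Units.val_mk0]

end Finite

/-- The inclusion `F_qˣ → F_{q²}ˣ`. -/
def unitsIncl : Q.Kˣ →* Fˣ := Units.map Q.K.subtype.toMonoidHom

@[simp]
lemma coe_unitsIncl (r : Q.Kˣ) : (Q.unitsIncl r : F) = (r : Q.K) := rfl

/-- The character by which the torus element `t` acts on the quotient `U / Z(U)` of the unipotent
radical of `SU_3(q)`. -/
def lam (t : F) : F := t ^ 2 / Q.conj t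

lemma lam_ne_zero (t : Fˣ) : Q.lam t ≠ 0 :=
  div_ne_zero (pow_ne_zero _ t.ne_zero) ((map_ne_zero Q.conj).2 t.ne_zero)

lemma lam_coe (r : Q.K) : Q.lam r = r := by
  rw [lam, conj_coe, sq, mul_self_div_self]

lemma lam_eq_one_iff (t : Fˣ) : Q.lam t = 1 ↔ (t : F) ^ 2 = Q.conj t :=
  div_eq_one_iff_eq ((map_ne_zero Q.conj).2 t.ne_zero)

end QuadraticFrobenius

section mean

variable {A M : Type*} [Fintype A] [Ring M] [Algebra ℂ M] {V : A → M}

/-- The mean of the values of `V`. If `V` is multiplicative on a finite group, this is the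
projection onto the fixed vectors. -/
def mean (V : A → M) : M := (Fintype.card A : ℂ)⁻¹ • ∑ a, V a

lemma commute_mean {P : M} (h : ∀ a, Commute P (V a)) : Commute P (mean V) :=
  (Commute.sum_right _ _ _ fun a _ ↦ h a).smul_right _

variable [Group A]

lemma mul_mean (hV : ∀ a b, V (a * b) = V a * V b) (a : A) : V a * mean V = mean V := by
  rw [mean, mul_smul_comm, Finset.mul_sum]
  simp only [← hV]
  rw [Fintype.sum_equiv (Equiv.mulLeft a) (fun b ↦ V (a * b)) V fun _ ↦ rfl]

lemma mean_mul (hV : ∀ a b, V (a * b) = V a * V b) (a : A) : mean V * V a = mean V := by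
  rw [mean, smul_mul_assoc, Finset.sum_mul]
  simp only [← hV]
  rw [Fintype.sum_equiv (Equiv.mulRight a) (fun b ↦ V (b * a)) V fun _ ↦ rfl]

lemma isIdempotentElem_mean (hV : ∀ a b, V (a * b) = V a * V b) :
    IsIdempotentElem (mean V) := by
  have h : (Fintype.card A : ℂ) ≠ 0 := Nat.cast_ne_zero.2 Fintype.card_ne_zero
  have hsum : ∑ a, V a * mean V = (Fintype.card A : ℂ) • mean V := by
    simp only [mul_mean hV, Finset.sum_const, Finset.card_univ, Nat.cast_smul_eq_nsmul]
  rw [← Finset.sum_mul] at hsum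
  calc mean V * mean V = (Fintype.card A : ℂ)⁻¹ • ((∑ a, V a) * mean V) := smul_mul_assoc _ _ _
    _ = mean V := by rw [hsum, inv_smul_smul₀ h]

end mean

section trace

lemma trace_mul_eq_zero_of_mul_eq_zero {ι : Type*} [Fintype ι] {P e f : Matrix ι ι ℂ}
    (h : P * e = f * P) (he : IsIdempotentElem e) (hef : e * f = 0) : (P * e).trace = 0 := by
  rw [← he.eq, ← mul_assoc, h, trace_mul_comm, ← mul_assoc, hef, Matrix.zero_mul, trace_zero]

variable {A ι : Type*} [Group A] [Fintype A] [Fintype ι] [DecidableEq ι]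

lemma card_mul_trace_mean_mul (V : A →* Matrix ι ι ℂ) {e : Matrix ι ι ℂ}
    (h : ∀ a, a ≠ 1 → (V a * e).trace = 0) :
    (Fintype.card A : ℂ) * (mean V * e).trace = e.trace := by
  classical
  have hA : (Fintype.card A : ℂ) ≠ 0 := Nat.cast_ne_zero.2 Fintype.card_ne_zero
  rw [mean, Matrix.smul_mul, trace_smul, smul_eq_mul, mul_inv_cancel_left₀ hA, Finset.sum_mul,
    trace_sum, Fintype.sum_eq_single 1 h, map_one, one_mul]

lemma exists_trace_eq_card_mul (V : A →* Matrix ι ι ℂ) {e : Matrix ι ι ℂ}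
    (he : IsIdempotentElem e) (hV : ∀ a, Commute e (V a))
    (h : ∀ a, a ≠ 1 → (V a * e).trace = 0) :
    ∃ m : ℕ, e.trace = Fintype.card A * m := by
  have hidem := (isIdempotentElem_mean (map_mul V)).mul_of_commute (commute_mean hV).symm he
  obtain ⟨m, hm, -⟩ := exists_trace_eq_natCast_of_isIdempotentElem hidem
  exact ⟨m, by rw [← hm, card_mul_trace_mean_mul V h]⟩

end trace

section isotypic

variable {E M : Type*} [Field E] [Ring M] [Algebra ℂ M] (ψ : AddChar E ℂ) {V : E → M}

/-- The function `V` twisted by the inverse of the character `a ↦ ψ (κ * a)`, on the additive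
group of `E` written multiplicatively so that `mean` applies. -/
def twist (V : E → M) (κ : E) (a : Multiplicative E) : M := ψ (-(κ * a.toAdd)) • V a.toAdd

lemma twist_mul (hV : ∀ a b, V (a + b) = V a * V b) (κ : E) (a b : Multiplicative E) :
    twist ψ V κ (a * b) = twist ψ V κ a * twist ψ V κ b := by
  simp only [twist, toAdd_mul, hV, mul_add, neg_add, AddChar.map_add_eq_mul, smul_mul_smul_comm]

variable [Fintype E]

/-- The projection onto the vectors on which the additive group of `E`, acting through `V`,
acts by the character `a ↦ ψ (κ * a)`. -/
def isotypic (V : E → M) (κ : E) : M := mean (twist ψ V κ)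

lemma isotypic_eq_smul_sum (V : E → M) (κ : E) :
    isotypic ψ V κ = (Fintype.card E : ℂ)⁻¹ • ∑ a, ψ (-(κ * a)) • V a := by
  rw [isotypic, mean, Fintype.card_multiplicative]
  exact congrArg _ (Fintype.sum_equiv Multiplicative.toAdd _ _ fun _ ↦ rfl)

lemma isotypic_zero (V : E → M) : isotypic ψ V 0 = mean V := by
  simp only [isotypic_eq_smul_sum, zero_mul, neg_zero, AddChar.map_zero_eq_one, one_smul, mean]

lemma isIdempotentElem_isotypic (hV : ∀ a b, V (a + b) = V a * V b) (κ : E) :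
    IsIdempotentElem (isotypic ψ V κ) :=
  isIdempotentElem_mean (twist_mul ψ hV κ)

lemma mul_isotypic (hV : ∀ a b, V (a + b) = V a * V b) (κ a : E) :
    V a * isotypic ψ V κ = ψ (κ * a) • isotypic ψ V κ := by
  have h : (ψ (-(κ * a)) • V a) * isotypic ψ V κ = isotypic ψ V κ :=
    mul_mean (twist_mul ψ hV κ) (Multiplicative.ofAdd a)
  conv_rhs => rw [← h]
  rw [smul_mul_assoc, smul_smul, ← AddChar.map_add_eq_mul, add_neg_cancel,
    AddChar.map_zero_eq_one, one_smul]

lemma isotypic_mul (hV : ∀ a b, V (a + b) = V a * V b) (κ a : E) :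
    isotypic ψ V κ * V a = ψ (κ * a) • isotypic ψ V κ := by
  have h : isotypic ψ V κ * (ψ (-(κ * a)) • V a) = isotypic ψ V κ :=
    mean_mul (twist_mul ψ hV κ) (Multiplicative.ofAdd a)
  conv_rhs => rw [← h]
  rw [mul_smul_comm, smul_smul, ← AddChar.map_add_eq_mul, add_neg_cancel,
    AddChar.map_zero_eq_one, one_smul]

lemma isotypic_mul_isotypic_of_ne (hψ : ψ.IsPrimitive) (hV : ∀ a b, V (a + b) = V a * V b)
    {κ κ' : E} (h : κ ≠ κ') : isotypic ψ V κ * isotypic ψ V κ' = 0 := by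
  obtain ⟨a, ha⟩ := AddChar.ne_one_iff.1 (hψ (sub_ne_zero.2 h))
  have hne : ψ (κ * a) ≠ ψ (κ' * a) := fun h2 ↦ ha <| by
    rw [AddChar.mulShift_apply, sub_mul, AddChar.map_sub_eq_div, h2,
      div_self (ψ.val_isUnit _).ne_zero]
  by_contra h0
  refine hne (smul_left_injective ℂ h0 ?_)
  change ψ (κ * a) • _ = ψ (κ' * a) • _
  rw [← smul_mul_assoc, ← isotypic_mul ψ hV, mul_assoc, mul_isotypic ψ hV, mul_smul_comm]

lemma sum_isotypic (hψ : ψ.IsPrimitive) (V : E → M) : ∑ κ, isotypic ψ V κ = V 0 := by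
  classical
  have h (a : E) : ∑ κ, ψ (-(κ * a)) = if a = 0 then (Fintype.card E : ℂ) else 0 := by
    simpa only [mul_neg, neg_eq_zero, Nat.cast_ite, Nat.cast_zero] using
      AddChar.sum_mulShift (-a) hψ
  have hE : (Fintype.card E : ℂ) ≠ 0 := Nat.cast_ne_zero.2 Fintype.card_ne_zero
  simp only [isotypic_eq_smul_sum]
  rw [← Finset.smul_sum, Finset.sum_comm]
  simp only [← Finset.sum_smul, h, ite_smul, zero_smul, Finset.sum_ite_eq', Finset.mem_univ,
    if_true, inv_smul_smul₀ hE]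

lemma mul_isotypic_eq_isotypic_div_mul {P : M} {l : E} (hl : l ≠ 0)
    (h : ∀ a, P * V a = V (l * a) * P) (κ : E) :
    P * isotypic ψ V κ = isotypic ψ V (κ / l) * P := by
  simp only [isotypic_eq_smul_sum, mul_smul_comm, smul_mul_assoc, Finset.mul_sum, Finset.sum_mul, h]
  congr 1
  refine Fintype.sum_equiv (Equiv.mulLeft₀ l hl) _ _ fun a ↦ ?_
  rw [Equiv.mulLeft₀_apply, ← mul_assoc, div_mul_cancel₀ κ hl]

lemma sub_isotypic_zero [DecidableEq E] (hψ : ψ.IsPrimitive) (V : E → M) :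
    V 0 - isotypic ψ V 0 = ∑ κ ∈ Finset.univ.erase 0, isotypic ψ V κ := by
  rw [← sum_isotypic ψ hψ V, ← Finset.add_sum_erase _ _ (Finset.mem_univ 0), add_sub_cancel_left]

lemma trace_mul_sub_isotypic_zero {ι : Type*} [Fintype ι] [DecidableEq ι] {V : E → Matrix ι ι ℂ}
    (hψ : ψ.IsPrimitive) (hV : ∀ a b, V (a + b) = V a * V b) {P : Matrix ι ι ℂ} {l : E}
    (hl : l ≠ 0) (hl1 : l ≠ 1) (h : ∀ a, P * V a = V (l * a) * P) :
    (P * (V 0 - isotypic ψ V 0)).trace = 0 := by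
  classical
  rw [sub_isotypic_zero ψ hψ, Finset.mul_sum, trace_sum]
  refine Finset.sum_eq_zero fun κ hκ ↦ trace_mul_eq_zero_of_mul_eq_zero
    (mul_isotypic_eq_isotypic_div_mul ψ hl h κ) (isIdempotentElem_isotypic ψ hV κ)
    (isotypic_mul_isotypic_of_ne ψ hψ hV fun h2 ↦ hl1 ?_)
  exact mul_left_cancel₀ (Finset.ne_of_mem_erase hκ) (((eq_div_iff hl).1 h2).trans (mul_one κ).symm)

end isotypic

/-- The elements and relations of `SU_3(q)` on which the argument depends: the unipotent radical
`u a r` of a Borel subgroup, its torus `T`, the Weyl element `w`, and a family of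
anti-involutions `τ s` indexed by the elements `s` of norm one. -/
structure UnitaryGroupData (F G : Type*) [Field F] [Finite F] [Group G] extends
    QuadraticFrobenius F where
  u : F → toQuadraticFrobenius.K → G
  u_mul_u : ∀ a r a' r',
    u a r * u a' r' = u (a + a') (r + r' + toQuadraticFrobenius.imPart (a' * conj a))
  T : Fˣ →* G
  T_mul_u : ∀ (t : Fˣ) a r, T t * u a r =
    u (toQuadraticFrobenius.lam t * a) (toQuadraticFrobenius.norm t * r) * T t
  T_neg_one_ne_one : T (-1) ≠ 1
  w : G
  bruhat : ∀ g, (∃ a r t, g = u a r * T t) ∨ ∃ a r t a' r', g = u a r * (w * T t) * u a' r'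
  eq_one_or_eq_T_neg_one : ∀ t : Fˣ, toQuadraticFrobenius.norm t ≠ 1 →
    toQuadraticFrobenius.lam t ≠ 1 → ∀ g : G, g * g = 1 → Commute (T t) g → g = 1 ∨ g = T (-1)
  τ (s : F) (hs : s * conj s = 1) : AntiInvolution G
  τ_u : ∀ s hs a r, τ s hs (u a r) = u (-s * conj a) r
  τ_T : ∀ s hs t, τ s hs (T t) = T (Units.map conj.toMonoidHom t)⁻¹
  τ_w_mul_T : ∀ s hs t, τ s hs (w * T t) = w * T t

namespace UnitaryGroupData

variable {F G : Type*} [Field F] [Finite F] [Group G] (D : UnitaryGroupData F G)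

lemma u_zero_zero : D.u 0 0 = 1 := by
  have h := D.u_mul_u 0 0 0 0
  rw [zero_mul, map_zero, add_zero, add_zero, add_zero] at h
  exact mul_eq_left.1 h

lemma u_mul_u_zero (a : F) (r s : D.K) : D.u a r * D.u 0 s = D.u a (r + s) := by
  rw [D.u_mul_u, zero_mul, map_zero, add_zero, add_zero]

lemma u_zero_mul_u (a : F) (r s : D.K) : D.u 0 s * D.u a r = D.u a (s + r) := by
  rw [D.u_mul_u, map_zero, mul_zero, map_zero, zero_add, add_zero]

lemma u_inv (a : F) (r : D.K) : (D.u a r)⁻¹ = D.u (-a) (-r) := by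
  rw [inv_eq_iff_mul_eq_one, D.u_mul_u, neg_mul, map_neg, D.imPart_mul_conj_self, neg_zero,
    add_zero, add_neg_cancel, add_neg_cancel, u_zero_zero]

lemma u_conj_u (a' a : F) :
    D.u a' 0 * D.u a 0 * (D.u a' 0)⁻¹ = D.u a (2 * D.imPart (a * D.conj a')) := by
  have h : D.imPart (a' * D.conj a) = -D.imPart (a * D.conj a') := by
    rw [← D.imPart_conj, map_mul D.conj, D.conj_conj, mul_comm]
  rw [u_inv, D.u_mul_u, D.u_mul_u, neg_mul, map_neg, map_add, mul_add, map_add,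
    D.imPart_mul_conj_self, h]
  congr 1 <;> ring

lemma exists_u_conj_u_eq {a : F} (ha : a ≠ 0) (r : D.K) :
    ∃ a', D.u a' 0 * D.u a 0 * (D.u a' 0)⁻¹ = D.u a r := by
  refine ⟨D.conj (D.eps * (r / 2 : D.K) / a), ?_⟩
  rw [u_conj_u, D.conj_conj, mul_div_cancel₀ _ ha, D.imPart_eps_mul,
    mul_div_cancel₀ _ D.two_ne_zero_K]

end UnitaryGroupData

namespace QuadraticFrobenius

variable {F : Type*} [Field F] (Q : QuadraticFrobenius F)

lemma coe_units_map_conj (t : Fˣ) : (Units.map Q.conj.toMonoidHom t : F) = Q.conj t := rfl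

variable [Finite F]

instance : Fintype Q.K := Fintype.ofFinite _

instance : Fintype Q.Kˣ := Fintype.ofFinite _

lemma fintypeCard_K : Fintype.card Q.K = Q.q := by
  rw [← Nat.card_eq_fintype_card, card_K]

lemma card_units_K : (Fintype.card Q.Kˣ : ℂ) = Q.q - 1 := by
  rw [← Nat.card_eq_fintype_card, Nat.card_units, card_K,
    Nat.cast_sub (by linarith [Q.three_le_q]), Nat.cast_one]

lemma pow_three_eq_one_of_lam_eq_one {t : Fˣ} (h : Q.lam t = 1) : t ^ 3 = 1 := by
  rw [lam_eq_one_iff] at h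
  have h4 : (t : F) = t ^ 4 := by
    conv_lhs => rw [← Q.conj_conj t, ← h, map_pow, ← h]
    ring
  ext
  rw [Units.val_pow_eq_pow_val, Units.val_one]
  exact mul_right_cancel₀ t.ne_zero (by linear_combination -h4)

lemma units_map_conj_inv_eq_self {t : Fˣ} (h : Q.lam t = 1) :
    (Units.map Q.conj.toMonoidHom t)⁻¹ = t := by
  have h3 := Q.pow_three_eq_one_of_lam_eq_one h
  rw [inv_eq_iff_mul_eq_one, ← h3, pow_succ]
  ext
  rw [Units.val_mul, coe_units_map_conj, ← (Q.lam_eq_one_iff t).1 h, Units.val_mul,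
    Units.val_pow_eq_pow_val]

lemma lam_units_map_conj_inv (t : Fˣ) :
    Q.lam (Units.map Q.conj.toMonoidHom t)⁻¹.val = (Q.conj (Q.lam t))⁻¹ := by
  have ht := (map_ne_zero Q.conj).2 t.ne_zero
  simp only [lam, Units.val_inv_eq_inv_val, coe_units_map_conj, map_inv₀, map_div₀, map_pow,
    conj_conj]
  field_simp

/-- The fixed nontrivial additive character of `F_q`. -/
def charK : AddChar Q.K ℂ := AddChar.FiniteField.primitiveChar_to_Complex Q.K

lemma isPrimitive_charK : Q.charK.IsPrimitive :=
  AddChar.FiniteField.primitiveChar_to_Complex_isPrimitive Q.K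

/-- The nontrivial additive character of `F_{q²}` extending `charK`; it is invariant under
`conj`. -/
def charF : AddChar F ℂ := Q.charK.compAddMonoidHom Q.rePart

lemma charF_apply (x : F) : Q.charF x = Q.charK (Q.rePart x) := rfl

lemma charF_conj (x : F) : Q.charF (Q.conj x) = Q.charF x := by
  rw [charF_apply, rePart_conj, charF_apply]

lemma isPrimitive_charF : Q.charF.IsPrimitive := by
  obtain ⟨r, hr⟩ := AddChar.ne_one_iff.1 (Q.isPrimitive_charK one_ne_zero)
  rw [AddChar.mulShift_apply, one_mul] at hr
  refine AddChar.IsPrimitive.of_ne_one (AddChar.ne_one_iff.2 ⟨r, ?_⟩)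
  rwa [charF_apply, rePart_coe]

end QuadraticFrobenius

namespace UnitaryGroupData

variable {F G ι : Type*} [Field F] [Fintype F] [Group G] [Fintype ι] [DecidableEq ι]
  (D : UnitaryGroupData F G) (R : G →* Matrix ι ι ℂ)

/-- The action of the centre `{u 0 r}` of the unipotent radical `U`. -/
def actZ (r : D.K) : Matrix ι ι ℂ := R (D.u 0 r)

lemma actZ_add (r s : D.K) : D.actZ R (r + s) = D.actZ R r * D.actZ R s := by
  rw [actZ, actZ, actZ, ← map_mul, u_mul_u_zero]

lemma actZ_zero : D.actZ R 0 = 1 := by rw [actZ, u_zero_zero, map_one]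

lemma T_mul_actZ (t : Fˣ) (r : D.K) :
    R (D.T t) * D.actZ R r = D.actZ R (D.norm t * r) * R (D.T t) := by
  rw [actZ, actZ, ← map_mul, ← map_mul, D.T_mul_u, mul_zero]

/-- The projection onto the fixed points of the centre of `U`. -/
def projZ : Matrix ι ι ℂ := isotypic D.charK (D.actZ R) 0

lemma isIdempotentElem_projZ : IsIdempotentElem (D.projZ R) :=
  isIdempotentElem_isotypic _ (D.actZ_add R) 0

lemma actZ_mul_projZ (r : D.K) : D.actZ R r * D.projZ R = D.projZ R := by
  rw [projZ, mul_isotypic _ (D.actZ_add R), zero_mul, AddChar.map_zero_eq_one, one_smul]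

lemma commute_T_projZ (t : Fˣ) : Commute (R (D.T t)) (D.projZ R) := by
  have h := mul_isotypic_eq_isotypic_div_mul D.charK (D.norm_ne_zero t) (D.T_mul_actZ R t) 0
  rwa [zero_div] at h

lemma commute_u_projZ (a : F) (r : D.K) : Commute (R (D.u a r)) (D.projZ R) := by
  have h := mul_isotypic_eq_isotypic_div_mul (V := D.actZ R) (P := R (D.u a r)) D.charK
    one_ne_zero (fun s ↦ by
      rw [one_mul, actZ, ← map_mul, ← map_mul, u_mul_u_zero, u_zero_mul_u, add_comm]) 0
  rwa [zero_div] at h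

/-- The action of the quotient `U / Z(U)` on the fixed points of the centre of `U`. -/
def actU (a : F) : Matrix ι ι ℂ := R (D.u a 0) * D.projZ R

lemma u_mul_projZ (a : F) (r : D.K) : R (D.u a r) * D.projZ R = D.actU R a := by
  rw [← zero_add r, ← u_mul_u_zero, map_mul, mul_assoc, ← actZ, actZ_mul_projZ, actU]

lemma actU_add (a b : F) : D.actU R (a + b) = D.actU R a * D.actU R b := by
  calc D.actU R (a + b) = R (D.u a 0) * R (D.u b 0) * (D.projZ R * D.projZ R) := by
        rw [← map_mul, D.u_mul_u, D.isIdempotentElem_projZ, u_mul_projZ]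
    _ = D.actU R a * D.actU R b := (D.commute_u_projZ R b 0).mul_mul_mul_comm _ _

lemma actU_zero : D.actU R 0 = D.projZ R := by rw [actU, u_zero_zero, map_one, one_mul]

lemma T_mul_actU (t : Fˣ) (a : F) :
    R (D.T t) * D.actU R a = D.actU R (D.lam t * a) * R (D.T t) := by
  rw [actU, actU, ← mul_assoc, ← map_mul, D.T_mul_u, map_mul, mul_assoc,
    (D.commute_T_projZ R t).eq, ← mul_assoc, mul_zero]

/-- The projection onto the vectors on which `U` acts by the linear character
`u a r ↦ charF (κ * a)`. -/
def projU (κ : F) : Matrix ι ι ℂ := isotypic D.charF (D.actU R) κ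

lemma isIdempotentElem_projU (κ : F) : IsIdempotentElem (D.projU R κ) :=
  isIdempotentElem_isotypic _ (D.actU_add R) κ

lemma projU_mul_projZ (κ : F) : D.projU R κ * D.projZ R = D.projU R κ := by
  rw [projU, ← actU_zero, isotypic_mul _ (D.actU_add R), mul_zero, AddChar.map_zero_eq_one,
    one_smul]

lemma projZ_mul_projU (κ : F) : D.projZ R * D.projU R κ = D.projU R κ := by
  rw [projU, ← actU_zero, mul_isotypic _ (D.actU_add R), mul_zero, AddChar.map_zero_eq_one,
    one_smul]

lemma u_mul_projU (κ a : F) (r : D.K) :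
    R (D.u a r) * D.projU R κ = D.charF (κ * a) • D.projU R κ := by
  rw [← projZ_mul_projU, ← mul_assoc, u_mul_projZ, projZ_mul_projU, projU,
    mul_isotypic _ (D.actU_add R)]

lemma projU_mul_u (κ a : F) (r : D.K) :
    D.projU R κ * R (D.u a r) = D.charF (κ * a) • D.projU R κ := by
  rw [← projU_mul_projZ, mul_assoc, ← (D.commute_u_projZ R a r).eq, u_mul_projZ,
    projU_mul_projZ, projU, isotypic_mul _ (D.actU_add R)]

lemma sum_projU : ∑ κ, D.projU R κ = D.projZ R :=
  (sum_isotypic _ D.isPrimitive_charF _).trans (D.actU_zero R)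

lemma T_mul_projU (t : Fˣ) (κ : F) :
    R (D.T t) * D.projU R κ = D.projU R (κ / D.lam t) * R (D.T t) :=
  mul_isotypic_eq_isotypic_div_mul _ (D.lam_ne_zero t) (D.T_mul_actU R t) κ

lemma commute_T_projU_zero (t : Fˣ) : Commute (R (D.T t)) (D.projU R 0) := by
  rw [Commute, SemiconjBy, T_mul_projU, zero_div]

lemma projU_mul_projU_of_ne {κ κ' : F} (h : κ ≠ κ') : D.projU R κ * D.projU R κ' = 0 :=
  isotypic_mul_isotypic_of_ne _ D.isPrimitive_charF (D.actU_add R) h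

lemma trace_T_mul_projZ_sub_projU_zero {t : Fˣ} (h : D.lam t ≠ 1) :
    (R (D.T t) * (D.projZ R - D.projU R 0)).trace = 0 := by
  rw [← actU_zero]
  exact trace_mul_sub_isotypic_zero D.charF D.isPrimitive_charF (D.actU_add R) (D.lam_ne_zero t) h
    (D.T_mul_actU R t)

lemma trace_T_mul_one_sub_projZ {t : Fˣ} (h : D.norm t ≠ 1) :
    (R (D.T t) * (1 - D.projZ R)).trace = 0 := by
  rw [← D.actZ_zero R]
  exact trace_mul_sub_isotypic_zero D.charK D.isPrimitive_charK (D.actZ_add R) (D.norm_ne_zero t) h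
    (D.T_mul_actZ R t)

lemma projU_mul_T_mul_projU {κ : F} (hκ : κ ≠ 0) {t : Fˣ} (h : D.lam t ≠ 1) :
    D.projU R κ * R (D.T t) * D.projU R κ = 0 := by
  rw [mul_assoc, T_mul_projU, ← mul_assoc, projU_mul_projU_of_ne, Matrix.zero_mul]
  intro h2
  rw [eq_div_iff (D.lam_ne_zero t)] at h2
  exact h (mul_left_cancel₀ hκ (h2.trans (mul_one κ).symm))

lemma projU_mul_u_mul_mul_u_mul_projU (κ a a' : F) (r r' : D.K) (X : Matrix ι ι ℂ) :
    D.projU R κ * (R (D.u a r) * X * R (D.u a' r')) * D.projU R κ =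
      (D.charF (κ * a) * D.charF (κ * a')) • (D.projU R κ * X * D.projU R κ) := by
  calc _ = D.projU R κ * R (D.u a r) * X * (R (D.u a' r') * D.projU R κ) := by
        simp only [mul_assoc]
    _ = _ := by
        rw [projU_mul_u, u_mul_projU, Matrix.smul_mul, Matrix.smul_mul, Matrix.mul_smul, smul_smul]

end UnitaryGroupData

namespace QuadraticFrobenius

variable {F : Type*} [Field F] [Finite F] (Q : QuadraticFrobenius F)

/-- The norm-one parameter of an anti-involution `τ` fixing the character `charF (κ * ·)` of
`U`. -/
def normOne (κ : F) : F := -(Q.conj κ / κ)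

lemma normOne_mul_conj {κ : F} (hκ : κ ≠ 0) : Q.normOne κ * Q.conj (Q.normOne κ) = 1 := by
  have h := (map_ne_zero Q.conj).2 hκ
  rw [normOne, map_neg, map_div₀, conj_conj]
  field_simp

lemma charF_mul_neg_normOne_mul_conj {κ : F} (hκ : κ ≠ 0) (a : F) :
    Q.charF (κ * (-Q.normOne κ * Q.conj a)) = Q.charF (κ * a) := by
  rw [← Q.charF_conj (κ * a), map_mul Q.conj, normOne]
  congr 1
  field_simp

end QuadraticFrobenius

namespace UnitaryGroupData

variable {F G ι : Type*} [Field F] [Fintype F] [Group G] [Fintype ι] [DecidableEq ι]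
  (D : UnitaryGroupData F G) (R : G →* Matrix ι ι ℂ)

lemma projU_mul_map_τ_mul_projU {κ : F} (hκ : κ ≠ 0) (g : G) :
    D.projU R κ * R (D.τ _ (D.normOne_mul_conj hκ) g) * D.projU R κ =
      D.projU R κ * R g * D.projU R κ := by
  rcases D.bruhat g with ⟨a, r, t, rfl⟩ | ⟨a, r, t, a', r', rfl⟩
  · rw [AntiInvolution.map_mul, D.τ_u, D.τ_T, map_mul, map_mul, ← mul_assoc, ← mul_assoc,
      projU_mul_u, mul_assoc, u_mul_projU, D.charF_mul_neg_normOne_mul_conj hκ, Matrix.mul_smul,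
      Matrix.smul_mul, Matrix.smul_mul]
    by_cases h : D.lam t = 1
    · rw [D.units_map_conj_inv_eq_self h]
    · rw [D.projU_mul_T_mul_projU R hκ h, D.projU_mul_T_mul_projU R hκ]
      rw [D.lam_units_map_conj_inv, Ne, inv_eq_one]
      exact fun h2 ↦ h (D.conj.injective (h2.trans (map_one _).symm))
  · rw [AntiInvolution.map_mul, AntiInvolution.map_mul, D.τ_u, D.τ_u, D.τ_w_mul_T, ← mul_assoc,
      map_mul, map_mul, map_mul R (_ * _), map_mul R (D.u a r), projU_mul_u_mul_mul_u_mul_projU,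
      projU_mul_u_mul_mul_u_mul_projU, D.charF_mul_neg_normOne_mul_conj hκ,
      D.charF_mul_neg_normOne_mul_conj hκ, mul_comm (D.charF _)]

variable {R}

theorem trace_projU_eq_one [Finite G] (hR : IsIrred R) {κ : F} (hκ : κ ≠ 0)
    (h0 : D.projU R κ ≠ 0) :
    (D.projU R κ).trace = 1 ∧
      ∃ B, (∀ g, (D.τ _ (D.normOne_mul_conj hκ)).dual R g * B = B * R g) ∧ B ≠ 0 ∧ B.IsSymm :=
  hR.trace_eq_one_of_mul_map_mul_eq (D.isIdempotentElem_projU R κ) h0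
    (D.projU_mul_map_τ_mul_projU R hκ)

lemma exists_trace_projZ_eq_le [Finite G] (hR : IsIrred R) (h0 : D.projU R 0 = 0) :
    ∃ d : ℕ, (D.projZ R).trace = d ∧ d ≤ D.q ^ 2 - 1 := by
  classical
  have h (κ : F) : ∃ d : ℕ, (D.projU R κ).trace = d ∧ d ≤ if κ = 0 then 0 else 1 := by
    by_cases h1 : D.projU R κ = 0
    · exact ⟨0, by rw [h1, trace_zero, Nat.cast_zero], Nat.zero_le _⟩
    · have hκ : κ ≠ 0 := fun hκ ↦ h1 (hκ ▸ h0)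
      exact ⟨1, by rw [(D.trace_projU_eq_one hR hκ h1).1, Nat.cast_one], by rw [if_neg hκ]⟩
  choose d hd hd' using h
  refine ⟨∑ κ, d κ, ?_, ?_⟩
  · rw [← sum_projU, trace_sum, Nat.cast_sum]
    exact Finset.sum_congr rfl fun κ _ ↦ hd κ
  · calc ∑ κ, d κ ≤ ∑ κ : F, if κ = 0 then 0 else 1 := Finset.sum_le_sum fun κ _ ↦ hd' κ
      _ = D.q ^ 2 - 1 := by
        rw [Finset.sum_ite, Finset.sum_const_zero, zero_add, Finset.sum_const, smul_eq_mul, mul_one,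
          Finset.filter_ne', Finset.card_erase_of_mem (Finset.mem_univ _), Finset.card_univ,
          ← Nat.card_eq_fintype_card, D.card_eq]

end UnitaryGroupData

namespace UnitaryGroupData

variable {F G ι : Type*} [Field F] [Fintype F] [Group G] [Fintype ι] [DecidableEq ι]
  (D : UnitaryGroupData F G) (R : G →* Matrix ι ι ℂ)

lemma card_sub_trace_projZ_eq_q_sub_one_mul :
    ∃ m : ℕ, (Fintype.card ι : ℂ) - (D.projZ R).trace = (D.q - 1) * m := by
  classical
  obtain ⟨m, hm, -⟩ := exists_trace_eq_natCast_of_isIdempotentElem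
    (isIdempotentElem_isotypic D.charK (D.actZ_add R) 1)
  have htrace (κ : D.K) (hκ : κ ≠ 0) : (isotypic D.charK (D.actZ R) κ).trace = m := by
    obtain ⟨t, ht⟩ := D.exists_norm_eq hκ
    have h := mul_isotypic_eq_isotypic_div_mul D.charK (D.norm_ne_zero t) (D.T_mul_actZ R t) κ
    rw [ht, div_self hκ] at h
    rw [← hm, ← mul_one (isotypic D.charK (D.actZ R) 1), ← map_mul_map_inv R (D.T t), ← mul_assoc,
      ← h, trace_mul_comm, ← mul_assoc, map_inv_mul_map, one_mul]
  refine ⟨m, ?_⟩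
  rw [← trace_one, ← trace_sub, ← D.actZ_zero R, projZ,
    sub_isotypic_zero D.charK D.isPrimitive_charK, trace_sum,
    Finset.sum_congr rfl fun κ hκ ↦ htrace κ (Finset.ne_of_mem_erase hκ), Finset.sum_const,
    Finset.card_erase_of_mem (Finset.mem_univ _), Finset.card_univ, D.fintypeCard_K, nsmul_eq_mul,
    Nat.cast_sub (by linarith [D.three_le_q]), Nat.cast_one]

lemma sum_actZ : ∑ r, D.actZ R r = (D.q : ℂ) • D.projZ R := by
  rw [projZ, isotypic_zero, mean, D.fintypeCard_K, smul_inv_smul₀ D.natCast_q_ne_zero]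

-- `u a 0` is conjugate to every `u a r`, and the sum of the latter is a multiple of `projZ`.
lemma trace_u_mul_one_sub_projZ {a : F} (ha : a ≠ 0) :
    (R (D.u a 0) * (1 - D.projZ R)).trace = 0 := by
  have hconj (r : D.K) : (R (D.u a 0) * (1 - D.projZ R)).trace =
      (R (D.u a 0) * (D.actZ R r * (1 - D.projZ R))).trace := by
    obtain ⟨a', h⟩ := D.exists_u_conj_u_eq ha r
    have hcomm := (Commute.one_right _).sub_right (D.commute_u_projZ R a' 0)
    rw [actZ, ← mul_assoc (R _), ← map_mul, D.u_mul_u_zero, zero_add, ← h, map_mul, map_mul,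
      trace_mul_comm (_ * _ * _), ← mul_assoc, ← mul_assoc, ← hcomm.eq, trace_mul_comm _ (R _⁻¹),
      mul_assoc (R _), ← mul_assoc (R _⁻¹), map_inv_mul_map, one_mul, trace_mul_comm]
  have hsum : (D.q : ℂ) * (R (D.u a 0) * (1 - D.projZ R)).trace = 0 := by
    rw [← D.fintypeCard_K, ← nsmul_eq_mul, ← Finset.card_univ,
      ← Finset.sum_const, Finset.sum_congr rfl fun r _ ↦ hconj r, ← trace_sum, ← Finset.mul_sum,
      ← Finset.sum_mul, sum_actZ, Matrix.smul_mul, mul_sub, mul_one, D.isIdempotentElem_projZ,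
      sub_self, smul_zero, mul_zero, trace_zero]
  exact (mul_eq_zero.1 hsum).resolve_left D.natCast_q_ne_zero

lemma card_sub_trace_projZ_eq_q_mul :
    ∃ m : ℕ, (Fintype.card ι : ℂ) - (D.projZ R).trace = D.q * m := by
  let V : Multiplicative D.K →* Matrix ι ι ℂ := R.comp
    { toFun := fun r ↦ D.u r.toAdd 0
      map_one' := D.u_zero_zero
      map_mul' := fun r s ↦ by
        have h : D.conj (s.toAdd * D.conj r.toAdd : F) = s.toAdd * D.conj r.toAdd := by
          rw [map_mul D.conj, D.conj_conj, D.conj_coe, D.conj_coe]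
        rw [D.u_mul_u, D.imPart_eq_zero h, zero_add, zero_add, toAdd_mul, Subfield.coe_add] }
  obtain ⟨m, hm⟩ := exists_trace_eq_card_mul V (D.isIdempotentElem_projZ R).one_sub
    (fun r ↦ (Commute.one_left _).sub_left (D.commute_u_projZ R _ _).symm) fun r hr ↦
      D.trace_u_mul_one_sub_projZ R (ZeroMemClass.coe_eq_zero.not.2 (toAdd_eq_zero.not.2 hr))
  refine ⟨m, ?_⟩
  rw [← trace_one, ← trace_sub, hm, Fintype.card_multiplicative, D.fintypeCard_K]

end UnitaryGroupData

lemma QuadraticFrobenius.lam_ne_one_of_pow_eq_one {F : Type*} [Field F] (Q : QuadraticFrobenius F)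
    {x : Fˣ} (hx : x ^ (2 * (Q.q - 1)) = 1) (h1 : x ≠ 1) : Q.lam x ≠ 1 := by
  rw [Ne, lam_eq_one_iff]
  intro h
  have hpow : x ^ (Q.q - 1) = x := by
    have hq : (x : F) ^ (Q.q - 1) * x = x * x := by
      rw [← sq (x : F), h, Q.conj_apply, ← pow_succ,
        Nat.sub_add_cancel (by linarith [Q.three_le_q])]
    exact Units.ext (by simpa using hq)
  rw [mul_comm, pow_mul, hpow] at hx
  have h2 : (x : F) ^ 2 = 1 := by rw [← Units.val_pow_eq_pow_val, hx, Units.val_one]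
  rcases sq_eq_one_iff.1 h2 with hx1 | hx1
  · exact h1 (Units.ext hx1)
  · rw [hx1, map_neg, map_one] at h
    exact Q.two_ne_zero (by linear_combination h)

namespace UnitaryGroupData

variable {F G ι : Type*} [Field F] [Fintype F] [Group G] [Fintype ι] [DecidableEq ι]
  (D : UnitaryGroupData F G) (R : G →* Matrix ι ι ℂ)

lemma isIdempotentElem_projZ_sub_projU_zero : IsIdempotentElem (D.projZ R - D.projU R 0) := by
  rw [IsIdempotentElem, mul_sub, sub_mul, sub_mul, projU_mul_projZ, projZ_mul_projU,
    D.isIdempotentElem_projZ R, D.isIdempotentElem_projU R, sub_self, sub_zero]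

lemma trace_projZ_sub_projU_zero_eq :
    ∃ m : ℕ, (D.projZ R - D.projU R 0).trace = 2 * (D.q - 1) * m := by
  obtain ⟨g, -, ho⟩ := D.exists_generator
  obtain ⟨h, hh⟩ := D.odd_q
  have := Fintype.ofFinite (Subgroup.zpowers (g ^ (h + 1)))
  have hcard : (D.q + 1) * (D.q - 1) = (h + 1) * (2 * (D.q - 1)) := by
    rw [hh]
    ring
  have hord : orderOf (g ^ (h + 1)) = 2 * (D.q - 1) := by
    have hdvd : h + 1 ∣ orderOf g := ⟨_, by rw [ho, D.q_sq_sub_one, hcard]⟩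
    rw [orderOf_pow_of_dvd h.succ_ne_zero hdvd, ho, D.q_sq_sub_one, hcard,
      Nat.mul_div_cancel_left _ h.succ_pos]
  obtain ⟨m, hm⟩ := exists_trace_eq_card_mul
    ((R.comp D.T).comp (Subgroup.zpowers (g ^ (h + 1))).subtype)
    (D.isIdempotentElem_projZ_sub_projU_zero R)
    (fun t ↦ (D.commute_T_projZ R _).symm.sub_left (D.commute_T_projU_zero R _).symm)
    fun t ht ↦ D.trace_T_mul_projZ_sub_projU_zero R <| D.lam_ne_one_of_pow_eq_one
      (orderOf_dvd_iff_pow_eq_one.1 (hord ▸ orderOf_dvd_of_mem_zpowers t.2))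
      (OneMemClass.coe_eq_one.not.2 ht)
  refine ⟨m, ?_⟩
  rw [hm, ← Nat.card_eq_fintype_card, Nat.card_zpowers, hord, Nat.cast_mul,
    Nat.cast_sub (by linarith [D.three_le_q]), Nat.cast_one, Nat.cast_two]

end UnitaryGroupData

lemma exists_mulVec_eq_smul_of_commute {ι : Type*} [Fintype ι] {P e : Matrix ι ι ℂ}
    (he : IsIdempotentElem e) (he0 : e ≠ 0) (hP : Commute P e) :
    ∃ v ≠ 0, e *ᵥ v = v ∧ ∃ μ : ℂ, P *ᵥ v = μ • v := by
  classical
  have hmap : ∀ v ∈ LinearMap.range e.toLin', P.toLin' v ∈ LinearMap.range e.toLin' := by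
    rintro _ ⟨y, rfl⟩
    exact ⟨P *ᵥ y, by simp only [toLin'_apply, mulVec_mulVec, hP.eq]⟩
  have : Nontrivial (LinearMap.range e.toLin') := by
    rw [Submodule.nontrivial_iff_ne_bot, Ne, LinearMap.range_eq_bot]
    exact fun h ↦ he0 (toLin'.map_eq_zero_iff.1 h)
  obtain ⟨μ, hμ⟩ := Module.End.exists_eigenvalue (P.toLin'.restrict hmap)
  obtain ⟨⟨_, y, rfl⟩, hv⟩ := hμ.exists_hasEigenvector
  exact ⟨e *ᵥ y, fun h ↦ hv.2 (Subtype.ext h), by rw [mulVec_mulVec, he.eq], μ,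
    congrArg Subtype.val hv.apply_eq_smul⟩

lemma IsIrred.span_range_mulVec_eq_top {k G ι : Type*} [Field k] [Group G] [Fintype ι]
    [DecidableEq ι] {R : G →* Matrix ι ι k} (hR : IsIrred R) {v : ι → k} (hv : v ≠ 0) :
    Submodule.span k (Set.range fun g ↦ R g *ᵥ v) = ⊤ := by
  refine (hR.2 _ fun g w hw ↦ ?_).resolve_left fun h ↦ hv ?_
  · have hle : Submodule.span k (Set.range fun g ↦ R g *ᵥ v) ≤
        (Submodule.span k (Set.range fun g ↦ R g *ᵥ v)).comap (R g).toLin' := by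
      rw [Submodule.span_le]
      rintro _ ⟨h, rfl⟩
      rw [SetLike.mem_coe, Submodule.mem_comap, toLin'_apply, mulVec_mulVec, ← map_mul]
      exact Submodule.subset_span ⟨g * h, rfl⟩
    exact hle hw
  · rw [← one_mulVec v, ← map_one R]
    exact Submodule.span_eq_bot.1 h _ ⟨1, rfl⟩

namespace UnitaryGroupData

variable {F G ι : Type*} [Field F] [Fintype F] [Group G] [Fintype ι] [DecidableEq ι]
  (D : UnitaryGroupData F G) {R : G →* Matrix ι ι ℂ}

lemma u_mul_projU_zero (a : F) (r : D.K) : R (D.u a r) * D.projU R 0 = D.projU R 0 := by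
  rw [u_mul_projU, zero_mul, AddChar.map_zero_eq_one, one_smul]

lemma projU_zero_mul_u (a : F) (r : D.K) : D.projU R 0 * R (D.u a r) = D.projU R 0 := by
  rw [projU_mul_u, zero_mul, AddChar.map_zero_eq_one, one_smul]

lemma exists_span_eq_top_of_projU_zero_ne_zero (hR : IsIrred R) (h0 : D.projU R 0 ≠ 0) :
    ∃ v, D.projU R 0 *ᵥ v = v ∧ Submodule.span ℂ (Set.range (Option.elim' v
      fun x : F × D.K ↦ R (D.u x.1 x.2) *ᵥ (R D.w *ᵥ v))) = ⊤ := by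
  obtain ⟨g, hg, -⟩ := D.exists_generator
  obtain ⟨v, hv0, hv, μ, hμ⟩ := exists_mulVec_eq_smul_of_commute
    (D.isIdempotentElem_projU R 0) h0 (D.commute_T_projU_zero R g)
  have hu (a : F) (r : D.K) : R (D.u a r) *ᵥ v = v := by
    conv_lhs => rw [← hv, mulVec_mulVec, u_mul_projU_zero, hv]
  have hT (t : Fˣ) : ∃ x : ℂ, R (D.T t) *ᵥ v = x • v := by
    obtain ⟨j, rfl⟩ := hg t
    induction j with
    | zero => exact ⟨1, by rw [pow_zero, map_one, map_one, one_mulVec, one_smul]⟩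
    | succ j ih =>
      obtain ⟨x, hx⟩ := ih
      exact ⟨μ * x, by
        rw [pow_succ, map_mul, map_mul, ← mulVec_mulVec, hμ, mulVec_smul, hx, smul_smul]⟩
  refine ⟨v, hv, ?_⟩
  rw [eq_top_iff, ← hR.span_range_mulVec_eq_top hv0, Submodule.span_le]
  rintro _ ⟨h, rfl⟩
  simp only [SetLike.mem_coe]
  rcases D.bruhat h with ⟨a, r, t, rfl⟩ | ⟨a, r, t, a', r', rfl⟩ <;> obtain ⟨x, hx⟩ := hT t
  · rw [map_mul, ← mulVec_mulVec, hx, mulVec_smul, hu]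
    exact Submodule.smul_mem _ _ (Submodule.subset_span ⟨none, rfl⟩)
  · rw [map_mul, ← mulVec_mulVec, hu, map_mul, map_mul, ← mulVec_mulVec, ← mulVec_mulVec, hx,
      mulVec_smul, mulVec_smul]
    exact Submodule.smul_mem _ _ (Submodule.subset_span ⟨some (a, r), rfl⟩)

lemma card_le_of_projU_zero_ne_zero (hR : IsIrred R) (h0 : D.projU R 0 ≠ 0) :
    Fintype.card ι ≤ D.q ^ 3 + 1 := by
  obtain ⟨v, -, htop⟩ := D.exists_span_eq_top_of_projU_zero_ne_zero hR h0
  have h := finrank_range_le_card (R := ℂ)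
    (Option.elim' v fun x : F × D.K ↦ R (D.u x.1 x.2) *ᵥ (R D.w *ᵥ v))
  rw [Set.finrank, htop, finrank_top, Module.finrank_fintype_fun_eq_card, Fintype.card_option,
    Fintype.card_prod, D.fintypeCard_K, ← Nat.card_eq_fintype_card (α := F), D.card_eq] at h
  exact h.trans_eq (by ring)

lemma exists_trace_projU_zero_eq_le (hR : IsIrred R) (h0 : D.projU R 0 ≠ 0) :
    ∃ k : ℕ, (D.projU R 0).trace = k ∧ k ≤ 2 := by
  obtain ⟨v, hv, htop⟩ := D.exists_span_eq_top_of_projU_zero_ne_zero hR h0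
  have hidem : IsIdempotentElem (D.projU R 0).toLin' := by
    rw [IsIdempotentElem, Module.End.mul_eq_comp, ← toLin'_mul, (D.isIdempotentElem_projU R 0).eq]
  refine ⟨Module.finrank ℂ (LinearMap.range (D.projU R 0).toLin'), ?_, ?_⟩
  · rw [← trace_toLin'_eq, (LinearMap.IsIdempotentElem.isProj_range _ hidem).trace]
  have hle : LinearMap.range (D.projU R 0).toLin' ≤
      Submodule.span ℂ (Set.range ![v, D.projU R 0 *ᵥ (R D.w *ᵥ v)]) := by
    rw [LinearMap.range_eq_map, ← htop, Submodule.map_span, Submodule.span_le]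
    rintro _ ⟨_, ⟨_ | ⟨a, r⟩, rfl⟩, rfl⟩ <;> refine Submodule.subset_span ?_
    · exact ⟨0, hv.symm⟩
    · exact ⟨1, by simp only [Option.elim'_some, toLin'_apply, mulVec_mulVec, ← mul_assoc,
        projU_zero_mul_u, cons_val_one, cons_val_fin_one]⟩
  exact (Submodule.finrank_mono hle).trans
    ((finrank_range_le_card _).trans_eq (Fintype.card_fin 2))

end UnitaryGroupData

/-- `n` is the degree `(q + 1) (q² - 1) / g` of a character, where `g = (q + 1) / b` is `1` or
`3`. -/
structure IsCuspidalDegree (q b n : ℕ) : Prop where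
  eq_or_three_mul_eq : b = q + 1 ∨ 3 * b = q + 1
  eq_mul : n = b * (q + 1) * (q - 1)

lemma IsCuspidalDegree.even {q b n : ℕ} (hb : IsCuspidalDegree q b n) (hq : Odd q) : Even b := by
  obtain ⟨j, hj⟩ := hq
  rw [Nat.even_iff]
  rcases hb.1 with h | h <;> omega

namespace UnitaryGroupData

variable {F G ι : Type*} [Field F] [Fintype F] [Group G] [Fintype ι] [DecidableEq ι]
  (D : UnitaryGroupData F G) {R : G →* Matrix ι ι ℂ} {b : ℕ}

theorem projU_zero_eq_zero (hR : IsIrred R) (hb : IsCuspidalDegree D.q b (Fintype.card ι)) :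
    D.projU R 0 = 0 := by
  by_contra h0
  obtain ⟨k, hk, hk2⟩ := D.exists_trace_projU_zero_eq_le hR h0
  have hk0 : k ≠ 0 := by
    rintro rfl
    exact h0 (eq_zero_of_isIdempotentElem_of_trace_eq_zero (D.isIdempotentElem_projU R 0)
      (by rw [hk, Nat.cast_zero]))
  obtain ⟨m₁, h₁⟩ := D.card_sub_trace_projZ_eq_q_sub_one_mul R
  obtain ⟨m₃, h₃⟩ := D.trace_projZ_sub_projU_zero_eq R
  have hn := D.card_le_of_projU_zero_ne_zero hR h0
  obtain ⟨hb, hcard⟩ := hb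
  have hq := D.three_le_q
  have hdvd : ((D.q - 1 : ℕ) : ℤ) ∣ k := by
    refine ⟨b * (D.q + 1) - m₁ - 2 * m₃, ?_⟩
    rw [trace_sub, hk] at h₃
    rw [hcard] at h₁
    rify
    push_cast [Nat.cast_sub (by omega : 1 ≤ D.q)] at h₁ ⊢
    apply_mod_cast Complex.ofReal_injective
    push_cast
    linear_combination -h₁ - h₃
  have hle := Nat.le_of_dvd (Nat.pos_of_ne_zero hk0) (Int.natCast_dvd_natCast.1 hdvd)
  have hq3 : D.q = 3 := by
    obtain ⟨j, hj⟩ := D.odd_q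
    omega
  rw [hcard, hq3] at hn
  omega

theorem trace_projZ_eq [Finite G] (hR : IsIrred R)
    (hb : IsCuspidalDegree D.q b (Fintype.card ι)) :
    (D.projZ R).trace = (D.q - 1) * b := by
  have h0 := D.projU_zero_eq_zero hR hb
  obtain ⟨d, hd, hle⟩ := D.exists_trace_projZ_eq_le hR h0
  obtain ⟨m₂, h₂⟩ := D.card_sub_trace_projZ_eq_q_mul R
  obtain ⟨m₃, h₃⟩ := D.trace_projZ_sub_projU_zero_eq R
  obtain ⟨j, hj⟩ := D.odd_q
  obtain ⟨c, hc⟩ := hb.even D.odd_q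
  obtain ⟨p, hp⟩ : ∃ p, D.q = p + 1 := ⟨D.q - 1, by have := D.three_le_q; omega⟩
  have hq := D.three_le_q
  rw [h0, sub_zero] at h₃
  rw [hd, hb.eq_mul, hp] at h₂
  rw [hd, hp] at h₃
  have hdm : d = p * (2 * m₃) := by
    push_cast at h₃
    exact_mod_cast h₃.trans (by ring : _ = (p : ℂ) * (2 * m₃))
  have h2m : 2 * m₃ ≤ p + 2 := by
    rw [D.q_sq_sub_one, hp, Nat.add_sub_cancel, hdm, mul_comm (_ + 1)] at hle
    exact Nat.le_of_mul_le_mul_left hle (by omega)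
  have hmul : (b : ℤ) * (p + 2) * p - d = (p + 1) * m₂ := by
    push_cast [Nat.add_sub_cancel] at h₂
    exact_mod_cast (by linear_combination h₂ : (b : ℂ) * (p + 2) * p - d = (p + 1) * m₂)
  have hdvd : (p + 1 : ℤ) ∣ 2 * (c - m₃) := by
    rw [hdm, hc] at hmul
    push_cast at hmul
    exact ⟨2 * c * (p + 1) - 2 * m₃ - m₂, by linear_combination -hmul⟩
  have hodd : IsCoprime (p + 1 : ℤ) 2 := ⟨1, -j, by
    have : (p : ℤ) = 2 * j := by omega
    linear_combination this⟩
  have hcm : (c - m₃ : ℤ) = 0 := by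
    refine Int.eq_zero_of_abs_lt_dvd (hodd.dvd_of_dvd_mul_left hdvd) (abs_lt.2 ?_)
    have := hb.eq_or_three_mul_eq
    omega
  rw [hd, hdm, hc, hp, ← Nat.cast_inj.1 (sub_eq_zero.1 hcm)]
  push_cast
  ring

variable (R) in
/-- The projection onto the fixed points of the subtorus of `T` parametrised by `F_qˣ`. -/
def projT : Matrix ι ι ℂ := mean ((R.comp D.T).comp D.unitsIncl)

variable (R) in
lemma isIdempotentElem_projT : IsIdempotentElem (D.projT R) := isIdempotentElem_mean (map_mul _)

variable (R) in
lemma commute_projZ_projT : Commute (D.projZ R) (D.projT R) :=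
  commute_mean fun _ ↦ (D.commute_T_projZ R _).symm

variable (R) in
lemma commute_T_projT (t : Fˣ) : Commute (R (D.T t)) (D.projT R) :=
  commute_mean fun _ ↦ ((Commute.all t _).map D.T).map R

lemma trace_projT_mul_projZ [Finite G] (hR : IsIrred R)
    (hb : IsCuspidalDegree D.q b (Fintype.card ι)) : (D.projT R * D.projZ R).trace = b := by
  have h := card_mul_trace_mean_mul ((R.comp D.T).comp D.unitsIncl) (e := D.projZ R) fun r hr ↦ by
    have h1 := D.trace_T_mul_projZ_sub_projU_zero R (t := D.unitsIncl r) (by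
      rw [D.coe_unitsIncl, D.lam_coe]
      exact fun h ↦ hr (Units.ext (Subtype.ext h)))
    rwa [D.projU_zero_eq_zero hR hb, sub_zero] at h1
  rw [D.card_units_K, D.trace_projZ_eq hR hb] at h
  exact mul_left_cancel₀ D.natCast_q_sub_one_ne_zero h

lemma trace_projT_mul_one_sub_projZ [Finite G] (hR : IsIrred R)
    (hb : IsCuspidalDegree D.q b (Fintype.card ι)) :
    (D.q - 1) * (D.projT R * (1 - D.projZ R)).trace =
      Fintype.card ι - (D.q - 1) * b + (R (D.T (-1))).trace := by
  have h2 : (-1 : F) ≠ 1 := fun h ↦ D.two_ne_zero (by linear_combination -h)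
  have hneg : (-1 : D.Kˣ) ≠ 1 := fun h ↦ h2 (congrArg (fun x : D.Kˣ ↦ ((x : D.K) : F)) h)
  have hT : D.unitsIncl (-1) = -1 := Units.ext rfl
  have hZ : (R (D.T (-1)) * D.projZ R).trace = 0 := by
    have h := D.trace_T_mul_projZ_sub_projU_zero R (t := -1) (by
      rw [← hT, D.coe_unitsIncl, D.lam_coe]
      exact h2)
    rwa [D.projU_zero_eq_zero hR hb, sub_zero] at h
  have hzero (r : D.Kˣ) (hr : r ≠ 1 ∧ r ≠ -1) :
      ((R.comp D.T).comp D.unitsIncl r * (1 - D.projZ R)).trace = 0 := by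
    refine D.trace_T_mul_one_sub_projZ R fun h ↦ ?_
    rw [D.coe_unitsIncl, D.norm_coe, sq_eq_one_iff] at h
    exact h.elim (fun h ↦ hr.1 (Units.ext h)) fun h ↦ hr.2 (Units.ext h)
  rw [projT, mean, D.card_units_K, Matrix.smul_mul, trace_smul, smul_eq_mul,
    mul_inv_cancel_left₀ D.natCast_q_sub_one_ne_zero, Finset.sum_mul, trace_sum,
    Fintype.sum_eq_add 1 (-1) hneg.symm hzero]
  simp only [MonoidHom.comp_apply, map_one, one_mul, hT, mul_sub, mul_one, trace_sub, trace_one,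
    hZ, D.trace_projZ_eq hR hb, sub_zero]

end UnitaryGroupData

theorem odd_card_conjClass {G : Type*} [Group G] {C : Finset G} {i h : G} {k : ℕ}
    (hC : ∀ g, g ∈ C ↔ IsConj i g) (hk : h ^ 2 ^ k = 1) (hi : Commute h i)
    (huniq : ∀ g, IsConj i g → Commute h g → g = i) : Odd C.card := by
  have : Fact (Nat.Prime 2) := ⟨Nat.prime_two⟩
  set α := MulAction.orbit (ConjAct G) i
  have hmem (g : G) : g ∈ α ↔ g ∈ C := by
    rw [hC, isConj_comm]
    exact ConjAct.mem_orbit_conjAct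
  have hcard : Nat.card α = C.card := by
    rw [Nat.card_congr (Equiv.subtypeEquivRight hmem), Nat.card_eq_fintype_card, Fintype.card_coe]
  have : Finite α := Nat.finite_of_card_ne_zero <| by
    rw [hcard, Finset.card_ne_zero]
    exact ⟨i, (hC i).2 (IsConj.refl i)⟩
  set P := Subgroup.zpowers (ConjAct.toConjAct h)
  have hP : IsPGroup 2 P := IsPGroup.of_card_dvd_pow <| by
    rw [Nat.card_zpowers]
    exact orderOf_dvd_of_pow_eq_one (n := 2 ^ k) (by rw [← map_pow, hk, map_one])
  have hfix : Nat.card (MulAction.fixedPoints P α) = 1 := by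
    rw [Nat.card_eq_one_iff_exists]
    refine ⟨⟨⟨i, MulAction.mem_orbit_self i⟩, ?_⟩, fun ⟨⟨g, hg⟩, hfix⟩ ↦ ?_⟩
    · rintro ⟨_, hP⟩
      obtain ⟨j, rfl⟩ := Subgroup.mem_zpowers_iff.1 hP
      refine Subtype.ext ?_
      change (ConjAct.toConjAct h) ^ j • i = i
      rw [← map_zpow, ConjAct.toConjAct_smul, (hi.zpow_left j).eq, mul_inv_cancel_right]
    · refine Subtype.ext (Subtype.ext (huniq g ((hC g).1 ((hmem g).1 hg)) ?_))
      have h1 : ConjAct.toConjAct h • g = g :=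
        congrArg Subtype.val (hfix ⟨ConjAct.toConjAct h, Subgroup.mem_zpowers _⟩)
      rwa [ConjAct.toConjAct_smul, mul_inv_eq_iff_eq_mul] at h1
  have h2 := hP.card_modEq_card_fixedPoints α
  rw [hcard, hfix] at h2
  exact Nat.odd_iff.2 h2

namespace QuadraticFrobenius

variable {F : Type*} [Field F] [Finite F] (Q : QuadraticFrobenius F)

lemma exists_pow_two_pow_eq_one :
    ∃ (x : Fˣ) (k : ℕ), x ^ 2 ^ k = 1 ∧ Q.norm x ≠ 1 ∧ Q.lam x ≠ 1 := by
  obtain ⟨g, -, ho⟩ := Q.exists_generator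
  have hq := Q.three_le_q
  have h2 : 2 ∣ Q.q - 1 := by
    obtain ⟨j, hj⟩ := Q.odd_q
    exact ⟨j, by omega⟩
  have hpos : Q.q ^ 2 - 1 ≠ 0 := by
    rw [Q.q_sq_sub_one]
    exact Nat.mul_ne_zero (by omega) (by omega)
  obtain ⟨k, m, hm, hkm⟩ := Nat.exists_eq_two_pow_mul_odd hpos
  have hox : orderOf (g ^ m) = 2 ^ k := by
    rw [orderOf_pow_of_dvd hm.pos.ne' (by rw [ho, hkm]; exact dvd_mul_left _ _), ho, hkm,
      Nat.mul_div_cancel _ hm.pos]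
  refine ⟨g ^ m, k, by rw [← hox, pow_orderOf_eq_one], fun h ↦ ?_, fun h ↦ ?_⟩
  · have h1 : (g ^ m) ^ (Q.q + 1) = 1 := by
      ext
      rw [Units.val_pow_eq_pow_val, pow_succ, ← Q.conj_apply, mul_comm, ← Q.coe_norm, h]
      rfl
    rw [← pow_mul] at h1
    have hdvd := orderOf_dvd_of_pow_eq_one h1
    rw [ho, Q.q_sq_sub_one, mul_comm] at hdvd
    exact hm.not_two_dvd_nat (h2.trans (Nat.dvd_of_mul_dvd_mul_right (by omega) hdvd))
  · have hdvd := orderOf_dvd_of_pow_eq_one (Q.pow_three_eq_one_of_lam_eq_one h)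
    have hk0 : k ≠ 0 := by
      rintro rfl
      rw [pow_zero, one_mul, Q.q_sq_sub_one] at hkm
      exact hm.not_two_dvd_nat (hkm ▸ h2.mul_left _)
    rw [hox] at hdvd
    exact absurd ((dvd_pow_self 2 hk0).trans hdvd) (by decide)

end QuadraticFrobenius

namespace UnitaryGroupData

variable {F G ι : Type*} [Field F] [Group G]

theorem odd_card_conjClass_T_neg_one [Finite F] (D : UnitaryGroupData F G) {C : Finset G}
    (hC : ∀ g, g ∈ C ↔ IsConj (D.T (-1)) g) : Odd C.card := by
  obtain ⟨x, k, hk, hnorm, hlam⟩ := D.exists_pow_two_pow_eq_one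
  refine odd_card_conjClass (h := D.T x) (k := k) hC (by rw [← map_pow, hk, map_one])
    ((Commute.all x (-1)).map D.T) fun g hg hx ↦ ?_
  obtain ⟨y, rfl⟩ := isConj_iff.1 hg
  refine (D.eq_one_or_eq_T_neg_one x hnorm hlam _ ?_ hx).resolve_left fun h ↦ ?_
  · rw [conj_mul, ← map_mul, neg_mul_neg, mul_one, map_one, mul_one, mul_inv_cancel]
  · rw [conj_eq_one_iff] at h
    exact D.T_neg_one_ne_one h

variable [Fintype F] [Finite G] [Fintype ι] [DecidableEq ι] (D : UnitaryGroupData F G)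
  {R : G →* Matrix ι ι ℂ} {b : ℕ}

/- The value at `T (-1)` is `4 * x * (q - 1)`: the class of `T (-1)` has odd size, so `4` can be
read off from the integrality of the central character. -/
lemma exists_trace_projT_mul_one_sub_projZ_eq (hR : IsIrred R)
    (hb : IsCuspidalDegree D.q b (Fintype.card ι)) :
    ∃ (m : ℕ) (x : ℤ), (D.projT R * (1 - D.projZ R)).trace = m ∧ m = D.q * b + 4 * x := by
  classical
  have := Fintype.ofFinite G
  have hcomm : Commute (D.projT R) (1 - D.projZ R) :=
    (Commute.one_right _).sub_right (D.commute_projZ_projT R).symm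
  obtain ⟨m, hm, -⟩ := exists_trace_eq_natCast_of_isIdempotentElem
    ((D.isIdempotentElem_projT R).mul_of_commute hcomm (D.isIdempotentElem_projZ R).one_sub)
  have htr := D.trace_projT_mul_one_sub_projZ hR hb
  have hq := D.three_le_q
  have hcard : (Fintype.card ι : ℤ) = b * (D.q + 1) * (D.q - 1) := by
    rw [hb.eq_mul]
    push_cast [Nat.cast_sub (by omega : 1 ≤ D.q)]
    rfl
  have hval : (R (D.T (-1))).trace = ((D.q - 1) * (m - D.q * b) : ℤ) := by
    have hcard' : (Fintype.card ι : ℂ) = b * (D.q + 1) * (D.q - 1) := by exact_mod_cast hcard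
    rw [hm, hcard'] at htr
    push_cast
    linear_combination -htr
  set C := Finset.univ.filter (IsConj (D.T (-1)))
  have hC (g : G) : g ∈ C ↔ IsConj (D.T (-1)) g := by simp [C]
  obtain ⟨w, hw⟩ := hR.card_dvd_card_conjClass_mul_trace hC hval
  have hmul : (C.card : ℤ) * (m - D.q * b) = b * (D.q + 1) * w :=
    mul_left_cancel₀ (by omega : (D.q : ℤ) - 1 ≠ 0)
      (by rw [hcard] at hw; linear_combination hw)
  have h4 : (4 : ℤ) ∣ C.card * (m - D.q * b) := by
    obtain ⟨e, he⟩ := hb.even D.odd_q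
    obtain ⟨j, hj⟩ := D.odd_q
    rw [hmul, he, hj]
    exact ⟨e * (j + 1) * w, by push_cast; ring⟩
  have hcop : IsCoprime (4 : ℤ) C.card := by
    have h := (Nat.coprime_two_left.2 (D.odd_card_conjClass_T_neg_one hC)).pow_left 2
    exact_mod_cast Nat.isCoprime_iff_coprime.2 h
  obtain ⟨x, hx⟩ := hcop.dvd_of_dvd_mul_left h4
  exact ⟨m, x, hm, by linear_combination hx⟩

theorem exists_trace_projT_mul_one_sub_projZ_eq_two_mul (hR : IsIrred R)
    (hb : IsCuspidalDegree D.q b (Fintype.card ι)) :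
    ∃ k : ℕ, (D.projT R * (1 - D.projZ R)).trace = (2 * k : ℕ) ∧
      (Even (b + k) ↔ D.q % 4 = 3) := by
  obtain ⟨m, x, hm, hx⟩ := D.exists_trace_projT_mul_one_sub_projZ_eq hR hb
  obtain ⟨e, he⟩ := hb.even D.odd_q
  obtain ⟨j, hj⟩ := D.odd_q
  have hmx : (m : ℤ) = 2 * (e + 2 * (j * e + x)) := by
    rw [hx, he, hj]
    push_cast
    ring
  refine ⟨m / 2, by rw [hm, show 2 * (m / 2) = m by omega], ?_⟩
  generalize (j * e + x : ℤ) = z at hmx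
  rw [Nat.even_iff, show (b + m / 2) % 2 = e % 2 by omega]
  rcases hb.eq_or_three_mul_eq with h | h <;> omega

end UnitaryGroupData

section gaussOp

variable {E M : Type*} [Field E]

lemma mul_self_eq_one_of_isQuadratic {χ : MulChar E ℂ} (hχ : χ.IsQuadratic) {a : E}
    (ha : a ≠ 0) : χ a * χ a = 1 := by
  rcases hχ a with h | h | h
  · exact absurd h ((ha.isUnit.map χ).ne_zero)
  all_goals rw [h]; norm_num

variable [Fintype E] (χ : MulChar E ℂ)

section algebra

variable [Ring M] [Algebra ℂ M]

/-- The operator-valued Gauss sum of the multiplicative character `χ`, in which `V` takes the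
place of the additive character. -/
def gaussOp (V : E → M) : M := ∑ a, χ a • V a

variable {χ}

lemma sum_mul_sub_of_isQuadratic [DecidableEq E] (hχ : χ.IsQuadratic) (h1 : χ ≠ 1) (x : E) :
    ∑ a, χ a * χ (x - a) = χ (-1) * ((if x = 0 then (Fintype.card E : ℂ) else 0) - 1) := by
  rcases eq_or_ne x 0 with rfl | hx
  · have h (a : E) : χ a * χ (0 - a) = if a = 0 then 0 else χ (-1) := by
      split_ifs with ha
      · rw [ha, MulChar.map_zero, zero_mul]
      · rw [zero_sub, neg_eq_neg_one_mul, map_mul]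
        linear_combination χ (-1) * mul_self_eq_one_of_isQuadratic hχ ha
    rw [Fintype.sum_congr _ _ h, Finset.sum_ite, Finset.sum_const_zero, zero_add,
      Finset.sum_const, Finset.filter_ne', Finset.card_erase_of_mem (Finset.mem_univ _),
      Finset.card_univ, nsmul_eq_mul, if_pos rfl, Nat.cast_sub Fintype.card_pos, Nat.cast_one,
      mul_comm]
  · have hJ := jacobiSum_nontrivial_inv h1
    rw [hχ.inv, jacobiSum] at hJ
    have h (a : E) : χ (x * a) * χ (x - x * a) = χ a * χ (1 - a) := by
      rw [show x - x * a = x * (1 - a) by ring, map_mul, map_mul]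
      linear_combination χ a * χ (1 - a) * mul_self_eq_one_of_isQuadratic hχ hx
    rw [← Equiv.sum_comp (Equiv.mulLeft₀ x hx), if_neg hx, zero_sub, mul_neg_one, ← hJ]
    exact Fintype.sum_congr _ _ h

theorem gaussOp_mul_self (hχ : χ.IsQuadratic) (h1 : χ ≠ 1) {V : E → M}
    (hV : ∀ a b, V (a + b) = V a * V b) :
    gaussOp χ V * gaussOp χ V = χ (-1) • ((Fintype.card E : ℂ) • V 0 - ∑ a, V a) := by
  classical
  have hconv : gaussOp χ V * gaussOp χ V = ∑ x, (∑ a, χ a * χ (x - a)) • V x := by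
    simp only [gaussOp, Finset.sum_mul_sum, Finset.sum_smul]
    conv_rhs => rw [Finset.sum_comm]
    refine Finset.sum_congr rfl fun a _ ↦ ?_
    conv_rhs => rw [← Equiv.sum_comp (Equiv.addLeft a)]
    refine Finset.sum_congr rfl fun b _ ↦ ?_
    rw [smul_mul_smul_comm, Equiv.coe_addLeft, add_sub_cancel_left, hV]
  simp only [hconv, sum_mul_sub_of_isQuadratic hχ h1, mul_smul, sub_smul, ite_smul, zero_smul,
    one_smul]
  rw [← Finset.smul_sum, Finset.sum_sub_distrib, Finset.sum_ite_eq' Finset.univ (0 : E),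
    if_pos (Finset.mem_univ _)]

lemma mul_gaussOp (hχ : χ.IsQuadratic) {V : E → M} {P : M} {l : E} (hl : l ≠ 0)
    (h : ∀ a, P * V a = V (l * a) * P) : P * gaussOp χ V = χ l • (gaussOp χ V * P) := by
  rw [gaussOp, Finset.mul_sum, Finset.sum_mul, Finset.smul_sum]
  refine Fintype.sum_equiv (Equiv.mulLeft₀ l hl) _ _ fun a ↦ ?_
  rw [Equiv.mulLeft₀_apply, mul_smul_comm, smul_mul_assoc, h, smul_smul, map_mul, ← mul_assoc,
    mul_self_eq_one_of_isQuadratic hχ hl, one_mul]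

end algebra

variable {ι : Type*} [Fintype ι] {χ} {V : E → Matrix ι ι ℂ}

lemma gaussOp_mem_matrix [DecidableEq ι] (hχ : χ.IsQuadratic) {L : Subfield ℂ}
    (hV : ∀ a, V a ∈ L.toSubring.matrix) : gaussOp χ V ∈ L.toSubring.matrix := by
  refine sum_mem fun a _ ↦ smul_mem_matrix ?_ (hV a)
  rcases hχ a with h | h | h <;> rw [h]
  exacts [L.zero_mem, L.one_mem, L.neg_mem L.one_mem]

lemma transpose_gaussOp_mul [DecidableEq ι] {B : Matrix ι ι ℂ} (σ : E ≃ E)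
    (hσ : ∀ a, χ (σ a) = χ a) (h : ∀ a, (V a)ᵀ * B = B * V (σ a)) :
    (gaussOp χ V)ᵀ * B = B * gaussOp χ V := by
  rw [gaussOp, transpose_sum, Finset.sum_mul, Finset.mul_sum]
  refine Fintype.sum_equiv σ _ _ fun a ↦ ?_
  rw [transpose_smul, Matrix.smul_mul, h, Matrix.mul_smul, hσ]

end gaussOp

section meanMatrix

variable {A ι : Type*} [Fintype A] [Fintype ι] [DecidableEq ι]

lemma mean_mem_matrix {V : A → Matrix ι ι ℂ} {L : Subfield ℂ}
    (hV : ∀ a, V a ∈ L.toSubring.matrix) : mean V ∈ L.toSubring.matrix :=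
  smul_mem_matrix (inv_mem (natCast_mem L _)) (sum_mem fun a _ ↦ hV a)

lemma transpose_mean_mul {V : A → Matrix ι ι ℂ} {B : Matrix ι ι ℂ} (σ : A ≃ A)
    (h : ∀ a, (V a)ᵀ * B = B * V (σ a)) : (mean V)ᵀ * B = B * mean V := by
  rw [mean, transpose_smul, transpose_sum, Matrix.smul_mul, Matrix.mul_smul, Finset.sum_mul,
    Finset.mul_sum]
  exact congrArg _ (Fintype.sum_equiv σ _ _ h)

lemma det_one_sub_add_mean_ne_zero [Group A] (V : A →* Matrix ι ι ℂ) {a : A}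
    (ha : ∀ b, ∃ j : ℕ, b = a ^ j) : (1 - V a + mean V).det ≠ 0 := by
  intro h
  obtain ⟨x, hx0, hx⟩ := exists_mulVec_eq_zero_iff.2 h
  have hmean : mean V *ᵥ x = 0 := by
    have hmul : mean V * (1 - V a + mean V) = mean V := by
      rw [mul_add, mul_sub, mul_one, mean_mul (map_mul V), sub_self, zero_add,
        isIdempotentElem_mean (map_mul V)]
    rw [← hmul, ← mulVec_mulVec, hx, mulVec_zero]
  have hax : V a *ᵥ x = x := by
    rw [add_mulVec, hmean, add_zero, sub_mulVec, one_mulVec, sub_eq_zero] at hx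
    exact hx.symm
  have hfix (b : A) : V b *ᵥ x = x := by
    obtain ⟨j, rfl⟩ := ha b
    induction j with
    | zero => rw [pow_zero, map_one, one_mulVec]
    | succ j ih => rw [pow_succ, map_mul, ← mulVec_mulVec, hax, ih]
  refine hx0 (Eq.trans ?_ hmean)
  rw [mean, smul_mulVec, sum_mulVec, Finset.sum_congr rfl fun b _ ↦ hfix b, Finset.sum_const,
    Finset.card_univ, ← Nat.cast_smul_eq_nsmul ℂ, inv_smul_smul₀]
  exact Nat.cast_ne_zero.2 Fintype.card_ne_zero

end meanMatrix

section idempotent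

variable {K ι : Type*} [Field K] [Fintype ι] [DecidableEq ι] {C D E : Matrix ι ι K} {x y : K}

lemma isUnit_det_of_mul_self_eq (hE : IsIdempotentElem E) (hx : x ≠ 0) (hy : y ≠ 0)
    (hC : C * C = x • E + y • (1 - E)) : IsUnit C.det := by
  refine isUnit_det_of_right_inverse (B := C * (x⁻¹ • E + y⁻¹ • (1 - E))) ?_
  rw [← mul_assoc, hC]
  simp only [mul_add, add_mul, Matrix.smul_mul, Matrix.mul_smul, hE.eq, hE.one_sub.eq,
    hE.mul_one_sub_self, hE.one_sub_mul_self, smul_zero, add_zero, zero_add]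
  rw [inv_smul_smul₀ hx, inv_smul_smul₀ hy, add_sub_cancel]

lemma mul_add_one_sub_mul_self (hE : IsIdempotentElem E) (hD : IsIdempotentElem D)
    (hED : Commute E D) (hCD : Commute C D) (hC : C * C = x • E + y • (1 - E)) :
    (C * D + 1 - D) * (C * D + 1 - D) =
      (1 + (x - 1) • (D * E)) * (1 + (y - 1) • (D * (1 - E))) := by
  have hsum : D * E + D * (1 - E) = D := by rw [← mul_add, add_sub_cancel, mul_one]
  have hmul : D * E * (D * (1 - E)) = 0 := by
    rw [hED.mul_mul_mul_comm, hD, hE.mul_one_sub_self, mul_zero]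
  have hCD1 : C * D * (1 - D) = 0 := by rw [mul_assoc, hD.mul_one_sub_self, mul_zero]
  have h1CD : (1 - D) * (C * D) = 0 := by
    rw [hCD.eq, ← mul_assoc, hD.one_sub_mul_self, Matrix.zero_mul]
  have hCDCD : C * D * (C * D) = x • (D * E) + y • (D * (1 - E)) := by
    rw [hCD.symm.mul_mul_mul_comm, hC, hD, add_mul, Matrix.smul_mul, Matrix.smul_mul, hED.eq,
      ((Commute.one_left D).sub_left hED).eq]
  calc (C * D + 1 - D) * (C * D + 1 - D) = C * D * (C * D) + (1 - D) := by
        rw [add_sub_assoc, add_mul, mul_add, mul_add, hCD1, h1CD, hD.one_sub, add_zero, zero_add]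
    _ = 1 + (x - 1) • (D * E) + (y - 1) • (D * (1 - E)) := by
        nth_rw 3 [← hsum]
        rw [hCDCD, sub_smul, sub_smul, one_smul, one_smul]
        abel
    _ = _ := by
        rw [mul_add, mul_one, add_mul, one_mul, Matrix.smul_mul, Matrix.mul_smul, hmul, smul_zero,
          smul_zero, add_zero]

lemma det_mul_add_one_sub_sq [CharZero K] (hE : IsIdempotentElem E) (hD : IsIdempotentElem D)
    (hED : Commute E D) (hCD : Commute C D) (hC : C * C = x • E + y • (1 - E)) {k l : ℕ}
    (hk : (D * E).trace = k) (hl : (D * (1 - E)).trace = l) :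
    (C * D + 1 - D).det ^ 2 = x ^ k * y ^ l := by
  have hED' : Commute D (1 - E) := (Commute.one_right D).sub_right hED.symm
  obtain ⟨k', hk', hkdet⟩ :=
    exists_trace_eq_natCast_of_isIdempotentElem (hD.mul_of_commute hED.symm hE)
  obtain ⟨l', hl', hldet⟩ :=
    exists_trace_eq_natCast_of_isIdempotentElem (hD.mul_of_commute hED' hE.one_sub)
  obtain rfl : k = k' := Nat.cast_injective (hk.symm.trans hk')
  obtain rfl : l = l' := Nat.cast_injective (hl.symm.trans hl')
  rw [sq, ← det_mul, mul_add_one_sub_mul_self hE hD hED hCD hC, det_mul, hkdet, hldet]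

end idempotent

section quadChar

variable {E : Type*} [Field E] [Fintype E]

variable (E) in
open Classical in
/-- The quadratic character of a finite field, with complex values. -/
def quadChar : MulChar E ℂ := (quadraticChar E).ringHomComp (Int.castRingHom ℂ)

lemma isQuadratic_quadChar : (quadChar E).IsQuadratic := by
  classical
  exact (quadraticChar_isQuadratic E).comp _

lemma quadChar_ne_one (h2 : (2 : E) ≠ 0) : quadChar E ≠ 1 := by
  classical
  refine (MulChar.ringHomComp_ne_one_iff (RingHom.injective_int _)).2 (quadraticChar_ne_one ?_)
  exact fun h ↦ h2 (by exact_mod_cast h ▸ ringChar.Nat.cast_ringChar (R := E))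

lemma sum_quadChar (h2 : (2 : E) ≠ 0) : ∑ a, quadChar E a = 0 :=
  MulChar.sum_eq_zero_of_ne_one (quadChar_ne_one h2)

lemma quadChar_mul_self {a : E} (ha : a ≠ 0) : quadChar E a * quadChar E a = 1 :=
  mul_self_eq_one_of_isQuadratic isQuadratic_quadChar ha

lemma quadChar_eq_neg_one (h2 : (2 : E) ≠ 0) {g : Eˣ} (hg : ∀ x : Eˣ, ∃ j : ℕ, x = g ^ j) :
    quadChar E g = -1 := by
  rcases isQuadratic_quadChar (g : E) with h | h | h
  · exact absurd h ((g.isUnit.map _).ne_zero)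
  · refine absurd (MulChar.ext fun x ↦ ?_) (quadChar_ne_one h2)
    obtain ⟨j, rfl⟩ := hg x
    rw [Units.val_pow_eq_pow_val, map_pow, h, one_pow, MulChar.one_apply (g.isUnit.pow j)]
  · exact h

end quadChar

namespace QuadraticFrobenius

variable {F : Type*} [Field F] (Q : QuadraticFrobenius F)

lemma units_map_conj_unitsIncl_inv (r : Q.Kˣ) :
    (Units.map Q.conj.toMonoidHom (Q.unitsIncl r))⁻¹ = Q.unitsIncl r⁻¹ := by
  rw [map_inv]
  exact congrArg _ (Units.ext (Q.conj_coe _))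

section normInv

variable [Finite F]

/-- The inverse of the norm of `t`. -/
def normInv (t : Fˣ) : Q.Kˣ := (Units.map Q.norm t)⁻¹

lemma exists_eq_map_norm_pow {g : Fˣ} (hg : ∀ x : Fˣ, ∃ j : ℕ, x = g ^ j) (r : Q.Kˣ) :
    ∃ j : ℕ, r = Units.map Q.norm g ^ j := by
  obtain ⟨t, ht⟩ := Q.exists_norm_eq r.ne_zero
  obtain ⟨j, rfl⟩ := hg t
  exact ⟨j, Units.ext (by rw [← ht, ← map_pow]; rfl)⟩

lemma exists_eq_normInv_pow {g : Fˣ} (hg : ∀ x : Fˣ, ∃ j : ℕ, x = g ^ j) (r : Q.Kˣ) :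
    ∃ j : ℕ, r = Q.normInv g ^ j := by
  obtain ⟨j, hj⟩ := Q.exists_eq_map_norm_pow hg r⁻¹
  exact ⟨j, by rw [normInv, inv_pow, ← hj, inv_inv]⟩

lemma units_map_conj_inv_eq_mul (t : Fˣ) :
    (Units.map Q.conj.toMonoidHom t)⁻¹ = t * Q.unitsIncl (Q.normInv t) := by
  rw [normInv, map_inv, eq_mul_inv_iff_mul_eq, inv_mul_eq_iff_eq_mul]
  ext
  rw [coe_unitsIncl, Units.coe_map, Units.val_mul, mul_comm]
  rfl

end normInv

variable [Fintype F]

lemma quadChar_conj (a : F) : quadChar F (Q.conj a) = quadChar F a := by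
  rw [Q.conj_apply, map_pow, ← MulChar.pow_apply' _ Q.odd_q.pos.ne',
    isQuadratic_quadChar.pow_odd Q.odd_q]

lemma quadChar_coe {r : Q.K} (hr : r ≠ 0) : quadChar F r = 1 := by
  obtain ⟨t, rfl⟩ := Q.exists_norm_eq hr
  rw [coe_norm, map_mul, quadChar_conj, quadChar_mul_self t.ne_zero]

lemma quadChar_lam (t : Fˣ) : quadChar F (Q.lam t) = quadChar F t := by
  have ht := quadChar_mul_self t.ne_zero
  have h : quadChar F (Q.lam t) * quadChar F t = 1 := by
    rw [← Q.quadChar_conj t, ← map_mul, lam,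
      div_mul_cancel₀ _ ((map_ne_zero Q.conj).2 t.ne_zero), sq, map_mul, ht]
  linear_combination quadChar F t * h - quadChar F (Q.lam t) * ht

lemma quadChar_neg_normOne {κ : F} (hκ : κ ≠ 0) : quadChar F (-Q.normOne κ) = 1 := by
  have h1 := quadChar_mul_self hκ
  have h2 : quadChar F (-Q.normOne κ) * quadChar F κ = quadChar F κ := by
    rw [← map_mul, normOne, neg_neg, div_mul_cancel₀ _ hκ, quadChar_conj]
  linear_combination (1 - quadChar F (-Q.normOne κ)) * h1 + quadChar F κ * h2

end QuadraticFrobenius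

lemma transpose_mul_one_sub_add_eq_neg {ι k : Type*} [Fintype ι] [DecidableEq ι] [CommRing k]
    {B P N Γ E : Matrix ι ι k} (hB : B.IsSymm) (hP : Pᵀ * B = B * (P * N)) (hΓ : Γᵀ * B = B * Γ)
    (hE : Eᵀ * B = B * E) (hPΓ : P * Γ = -(Γ * P)) (hPE : Commute P E) (hΓE : Commute Γ E)
    (hEN : E * N = E) :
    (B * (P * (1 - N + Γ * E)))ᵀ = -(B * (P * (1 - N + Γ * E))) := by
  have hBP : (B * P)ᵀ = B * (P * N) := by rw [transpose_mul, hB.eq, hP]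
  have hBPN : (B * (P * N))ᵀ = B * P := by rw [← hBP, transpose_transpose]
  have hEΓPN : E * (Γ * (P * N)) = -(P * (Γ * E)) :=
    calc E * (Γ * (P * N)) = E * (Γ * P) * N := by simp only [mul_assoc]
      _ = -(P * (Γ * (E * N))) := by
        rw [← neg_eq_iff_eq_neg.2 hPΓ, mul_neg, ← mul_assoc, ← hPE.eq, mul_assoc, ← hΓE.eq,
          neg_mul, mul_assoc, mul_assoc]
      _ = -(P * (Γ * E)) := by rw [hEN]
  have hBPΓE : (B * (P * (Γ * E)))ᵀ = -(B * (P * (Γ * E))) :=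
    calc (B * (P * (Γ * E)))ᵀ = Eᵀ * (Γᵀ * (B * P)ᵀ) := by
          rw [← mul_assoc, transpose_mul, transpose_mul, mul_assoc]
      _ = B * (E * (Γ * (P * N))) := by
          rw [hBP, ← mul_assoc Γᵀ, hΓ, mul_assoc, ← mul_assoc Eᵀ, hE, mul_assoc]
      _ = -(B * (P * (Γ * E))) := by rw [hEΓPN, mul_neg]
  rw [mul_add, mul_sub, mul_one, mul_add, mul_sub, transpose_add, transpose_sub, hBP, hBPN, hBPΓE]
  abel

namespace UnitaryGroupData

variable {F G ι : Type*} [Field F] [Fintype F] [Group G] [Fintype ι] [DecidableEq ι]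
  (D : UnitaryGroupData F G) (R : G →* Matrix ι ι ℂ)

lemma sum_actU_eq_zero (h0 : D.projU R 0 = 0) : ∑ a, D.actU R a = 0 := by
  rw [projU, isotypic_zero, mean] at h0
  exact (smul_eq_zero.1 h0).resolve_left (inv_ne_zero (Nat.cast_ne_zero.2 Fintype.card_ne_zero))

lemma projZ_mul_actZ (r : D.K) : D.projZ R * D.actZ R r = D.projZ R := by
  rw [projZ, isotypic_mul _ (D.actZ_add R), zero_mul, AddChar.map_zero_eq_one, one_smul]

lemma actU_mul_projZ (a : F) : D.actU R a * D.projZ R = D.actU R a := by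
  rw [← actU_zero, ← actU_add, add_zero]

lemma projZ_mul_actU (a : F) : D.projZ R * D.actU R a = D.actU R a := by
  rw [← actU_zero, ← actU_add, zero_add]

/-- The part of the Gauss operator living on the fixed points of the centre of `U`. -/
def gaussU : Matrix ι ι ℂ := gaussOp (quadChar F) (D.actU R)

/-- The part of the Gauss operator killing the fixed points of the centre of `U`. -/
def gaussZ : Matrix ι ι ℂ := gaussOp (quadChar D.K) (D.actZ R)

/-- The Gauss operator: it anticommutes with a generator of the torus, and its square is scalar on
the image and on the kernel of `projZ`. -/
def gauss : Matrix ι ι ℂ := D.gaussU R + D.gaussZ R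

lemma gaussU_mul_projZ : D.gaussU R * D.projZ R = D.gaussU R := by
  simp only [gaussU, gaussOp, Finset.sum_mul, Matrix.smul_mul, actU_mul_projZ]

lemma projZ_mul_gaussU : D.projZ R * D.gaussU R = D.gaussU R := by
  simp only [gaussU, gaussOp, Finset.mul_sum, Matrix.mul_smul, projZ_mul_actU]

lemma gaussZ_mul_projZ : D.gaussZ R * D.projZ R = 0 := by
  simp only [gaussZ, gaussOp, Finset.sum_mul, Matrix.smul_mul, actZ_mul_projZ]
  rw [← Finset.sum_smul, sum_quadChar D.two_ne_zero_K, zero_smul]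

lemma projZ_mul_gaussZ : D.projZ R * D.gaussZ R = 0 := by
  simp only [gaussZ, gaussOp, Finset.mul_sum, Matrix.mul_smul, projZ_mul_actZ]
  rw [← Finset.sum_smul, sum_quadChar D.two_ne_zero_K, zero_smul]

theorem gauss_mul_self (h0 : D.projU R 0 = 0) :
    D.gauss R * D.gauss R =
      (D.q : ℂ) ^ 2 • D.projZ R + (quadChar D.K (-1) * D.q) • (1 - D.projZ R) := by
  have hUZ : D.gaussU R * D.gaussZ R = 0 := by
    rw [← gaussU_mul_projZ, mul_assoc, projZ_mul_gaussZ, mul_zero]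
  have hZU : D.gaussZ R * D.gaussU R = 0 := by
    rw [← projZ_mul_gaussU, ← mul_assoc, gaussZ_mul_projZ, Matrix.zero_mul]
  have hU : D.gaussU R * D.gaussU R = (D.q : ℂ) ^ 2 • D.projZ R := by
    have h1 : quadChar F (-1) = 1 := by
      simpa using D.quadChar_coe (r := -1) (neg_ne_zero.2 one_ne_zero)
    rw [gaussU, gaussOp_mul_self isQuadratic_quadChar (quadChar_ne_one D.two_ne_zero)
      (D.actU_add R), D.sum_actU_eq_zero R h0, sub_zero, h1, one_smul, actU_zero,
      ← Nat.card_eq_fintype_card, D.card_eq, Nat.cast_pow]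
  have hZ : D.gaussZ R * D.gaussZ R = (quadChar D.K (-1) * D.q) • (1 - D.projZ R) := by
    rw [gaussZ, gaussOp_mul_self isQuadratic_quadChar (quadChar_ne_one D.two_ne_zero_K)
      (D.actZ_add R), sum_actZ, actZ_zero, D.fintypeCard_K, ← smul_sub, smul_smul]
  rw [gauss, mul_add, add_mul, add_mul, hUZ, hZU, hU, hZ, add_zero, zero_add]

lemma isUnit_det_gauss (h0 : D.projU R 0 = 0) : IsUnit (D.gauss R).det := by
  have h1 : quadChar D.K (-1) ≠ 0 :=
    left_ne_zero_of_mul_eq_one (quadChar_mul_self (neg_ne_zero.2 one_ne_zero))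
  exact isUnit_det_of_mul_self_eq (D.isIdempotentElem_projZ R) (pow_ne_zero 2 D.natCast_q_ne_zero)
    (mul_ne_zero h1 D.natCast_q_ne_zero) (D.gauss_mul_self R h0)

lemma T_mul_gaussU (t : Fˣ) :
    R (D.T t) * D.gaussU R = quadChar F t • (D.gaussU R * R (D.T t)) := by
  rw [gaussU, mul_gaussOp isQuadratic_quadChar (D.lam_ne_zero t) (D.T_mul_actU R t), D.quadChar_lam]

lemma T_mul_gaussZ (t : Fˣ) :
    R (D.T t) * D.gaussZ R = quadChar D.K (D.norm t) • (D.gaussZ R * R (D.T t)) :=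
  mul_gaussOp isQuadratic_quadChar (D.norm_ne_zero t) (D.T_mul_actZ R t)

lemma T_mul_gauss {g : Fˣ} (hg : ∀ x : Fˣ, ∃ j : ℕ, x = g ^ j) :
    R (D.T g) * D.gauss R = -(D.gauss R * R (D.T g)) := by
  have hnorm : quadChar D.K (D.norm g) = -1 :=
    quadChar_eq_neg_one D.two_ne_zero_K (D.exists_eq_map_norm_pow hg)
  rw [gauss, mul_add, T_mul_gaussU, T_mul_gaussZ, quadChar_eq_neg_one D.two_ne_zero hg, hnorm,
    ← smul_add, ← add_mul, neg_one_smul]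

lemma commute_T_unitsIncl_gauss (r : D.Kˣ) : Commute (R (D.T (D.unitsIncl r))) (D.gauss R) := by
  have h1 : quadChar F (D.unitsIncl r) = 1 := by rw [D.coe_unitsIncl, D.quadChar_coe r.ne_zero]
  have h2 : quadChar D.K (D.norm (D.unitsIncl r)) = 1 := by
    rw [D.coe_unitsIncl, D.norm_coe, sq, map_mul, quadChar_mul_self r.ne_zero]
  rw [Commute, SemiconjBy, gauss, mul_add, T_mul_gaussU, T_mul_gaussZ, h1, h2, one_smul, one_smul,
    add_mul]

lemma commute_gauss_projT : Commute (D.gauss R) (D.projT R) :=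
  commute_mean fun r ↦ (D.commute_T_unitsIncl_gauss R r).symm

variable {R} in
lemma projZ_mem_matrix {L : Subfield ℂ} (hL : ∀ g, R g ∈ L.toSubring.matrix) :
    D.projZ R ∈ L.toSubring.matrix := by
  rw [projZ, isotypic_zero]
  exact mean_mem_matrix fun r ↦ hL _

variable {R} in
lemma projT_mem_matrix {L : Subfield ℂ} (hL : ∀ g, R g ∈ L.toSubring.matrix) :
    D.projT R ∈ L.toSubring.matrix :=
  mean_mem_matrix fun _ ↦ hL _

variable {R} in
lemma gauss_mem_matrix {L : Subfield ℂ} (hL : ∀ g, R g ∈ L.toSubring.matrix) :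
    D.gauss R ∈ L.toSubring.matrix :=
  add_mem
    (gaussOp_mem_matrix isQuadratic_quadChar fun _ ↦ mul_mem (hL _) (D.projZ_mem_matrix hL))
    (gaussOp_mem_matrix isQuadratic_quadChar fun _ ↦ hL _)

section adjoint

variable {R} {B : Matrix ι ι ℂ} {s : F} {hs : s * D.conj s = 1}

lemma transpose_actZ_mul (hB : ∀ g, (R g)ᵀ * B = B * R (D.τ s hs g)) (r : D.K) :
    (D.actZ R r)ᵀ * B = B * D.actZ R r := by
  rw [actZ, hB, D.τ_u, map_zero, mul_zero]

lemma transpose_projZ_mul (hB : ∀ g, (R g)ᵀ * B = B * R (D.τ s hs g)) :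
    (D.projZ R)ᵀ * B = B * D.projZ R := by
  rw [projZ, isotypic_zero]
  exact transpose_mean_mul (Equiv.refl _) (D.transpose_actZ_mul hB)

lemma transpose_actU_mul (hB : ∀ g, (R g)ᵀ * B = B * R (D.τ s hs g)) (a : F) :
    (D.actU R a)ᵀ * B = B * D.actU R (-s * D.conj a) := by
  rw [actU, transpose_mul, mul_assoc, hB, ← mul_assoc, D.transpose_projZ_mul hB, mul_assoc, D.τ_u,
    ← (D.commute_u_projZ R _ _).eq, actU]

lemma transpose_gauss_mul (hB : ∀ g, (R g)ᵀ * B = B * R (D.τ s hs g))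
    (hs1 : quadChar F (-s) = 1) : (D.gauss R)ᵀ * B = B * D.gauss R := by
  let σ : F ≃ F := (Function.Involutive.toPerm D.conj D.conj_conj).trans
    (Equiv.mulLeft₀ (-s) (neg_ne_zero.2 (left_ne_zero_of_mul_eq_one hs)))
  have hσ (a : F) : quadChar F (σ a) = quadChar F a := by
    change quadChar F (-s * D.conj a) = _
    rw [map_mul, hs1, one_mul, D.quadChar_conj]
  rw [gauss, transpose_add, add_mul, mul_add, gaussU, gaussZ,
    transpose_gaussOp_mul σ hσ (D.transpose_actU_mul hB),
    transpose_gaussOp_mul (Equiv.refl _) (fun _ ↦ rfl) (D.transpose_actZ_mul hB)]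

lemma transpose_projT_mul (hB : ∀ g, (R g)ᵀ * B = B * R (D.τ s hs g)) :
    (D.projT R)ᵀ * B = B * D.projT R := by
  refine transpose_mean_mul (Equiv.inv _) fun r ↦ ?_
  simp only [MonoidHom.comp_apply, Equiv.inv_apply]
  rw [hB, D.τ_T, D.units_map_conj_unitsIncl_inv]

end adjoint

/-- The Gauss operator on the fixed points of the subtorus `F_q^×`, extended by the identity. -/
def gaussFactor : Matrix ι ι ℂ := D.gauss R * D.projT R + 1 - D.projT R

/-- An invertible element of the algebra of the subtorus `F_q^×` which agrees with
`1 - R (T (unitsIncl (normInv t)))` off the fixed points of this subtorus. -/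
def torusFactor (t : Fˣ) : Matrix ι ι ℂ :=
  1 - R (D.T (D.unitsIncl (D.normInv t))) + D.projT R

lemma det_torusFactor_ne_zero {g : Fˣ} (hg : ∀ x : Fˣ, ∃ j : ℕ, x = g ^ j) :
    (D.torusFactor R g).det ≠ 0 :=
  det_one_sub_add_mean_ne_zero ((R.comp D.T).comp D.unitsIncl) (D.exists_eq_normInv_pow hg)

lemma commute_torusFactor_T (t x : Fˣ) : Commute (D.torusFactor R t) (R (D.T x)) :=
  ((Commute.one_left _).sub_left (((Commute.all _ x).map D.T).map R)).add_left
    (D.commute_T_projT R x).symm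

lemma commute_torusFactor_gauss (t : Fˣ) : Commute (D.torusFactor R t) (D.gauss R) :=
  ((Commute.one_left _).sub_left (D.commute_T_unitsIncl_gauss R _)).add_left
    (D.commute_gauss_projT R).symm

lemma T_unitsIncl_mul_projT (r : D.Kˣ) : R (D.T (D.unitsIncl r)) * D.projT R = D.projT R :=
  mul_mean (map_mul ((R.comp D.T).comp D.unitsIncl)) r

lemma torusFactor_mul_gaussFactor (t : Fˣ) :
    D.torusFactor R t * D.gaussFactor R =
      1 - R (D.T (D.unitsIncl (D.normInv t))) + D.gauss R * D.projT R := by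
  have hN := D.T_unitsIncl_mul_projT R (D.normInv t)
  have h1 : (1 - R (D.T (D.unitsIncl (D.normInv t)))) * D.projT R = 0 := by
    rw [sub_mul, one_mul, hN, sub_self]
  rw [torusFactor, gaussFactor, (D.commute_gauss_projT R).eq, add_sub_assoc, add_mul, mul_add,
    ← mul_assoc, h1, Matrix.zero_mul, zero_add, mul_sub, mul_one, h1, sub_zero, mul_add,
    ← mul_assoc, (D.isIdempotentElem_projT R).mul_one_sub_self, D.isIdempotentElem_projT R,
    add_zero]

variable {R} in
theorem transpose_mul_T_mul_torusFactor_mul_gaussFactor {B : Matrix ι ι ℂ} {s : F}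
    {hs : s * D.conj s = 1} (hB : ∀ g, (R g)ᵀ * B = B * R (D.τ s hs g)) (hBs : B.IsSymm)
    (hs1 : quadChar F (-s) = 1) {g : Fˣ} (hg : ∀ x : Fˣ, ∃ j : ℕ, x = g ^ j) :
    (B * (R (D.T g) * (D.torusFactor R g * D.gaussFactor R)))ᵀ =
      -(B * (R (D.T g) * (D.torusFactor R g * D.gaussFactor R))) := by
  rw [torusFactor_mul_gaussFactor]
  refine transpose_mul_one_sub_add_eq_neg hBs ?_ (D.transpose_gauss_mul hB hs1)
    (D.transpose_projT_mul hB) (D.T_mul_gauss R hg) (D.commute_T_projT R g)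
    (D.commute_gauss_projT R) ?_
  · rw [hB, D.τ_T, D.units_map_conj_inv_eq_mul, map_mul, map_mul]
  · rw [← (D.commute_T_projT R _).eq, T_unitsIncl_mul_projT]

theorem norm_det_gaussFactor {b k : ℕ} (h0 : D.projU R 0 = 0)
    (hb : (D.projT R * D.projZ R).trace = b)
    (hk : (D.projT R * (1 - D.projZ R)).trace = (2 * k : ℕ)) :
    ‖(D.gaussFactor R).det‖ = (D.q : ℝ) ^ (b + k) := by
  have h := det_mul_add_one_sub_sq (D.isIdempotentElem_projZ R) (D.isIdempotentElem_projT R)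
    (D.commute_projZ_projT R) (D.commute_gauss_projT R) (D.gauss_mul_self R h0) hb hk
  have hsign : (quadChar D.K (-1) * D.q) ^ (2 * k) = (D.q : ℂ) ^ (2 * k) := by
    rw [mul_pow, pow_mul, sq, quadChar_mul_self (neg_ne_zero.2 one_ne_zero), one_pow, one_mul]
  rw [hsign, ← pow_mul, ← pow_add, ← mul_add, mul_comm, pow_mul] at h
  replace h := congrArg norm h
  rw [norm_pow, norm_pow, norm_pow, Complex.norm_natCast] at h
  exact (pow_left_inj₀ (norm_nonneg _) (by positivity) two_ne_zero).1 h

end UnitaryGroupData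

lemma exists_mem_det_eq_sq_of_transpose_eq_neg {K ι : Type*} [Field K] [Fintype ι]
    [DecidableEq ι] {L : Subfield K} {A : Matrix ι ι K} (h2 : (2 : K) ≠ 0)
    (hAL : A ∈ L.toSubring.matrix) (hA : Aᵀ = -A) : ∃ y ∈ L, A.det = y ^ 2 := by
  obtain ⟨A', rfl⟩ := exists_map_algebraMap_eq hAL
  refine exists_mem_sq_eq_det_of_isSquare (isSquare_det_of_transpose_eq_neg ?_ _ ?_)
  · exact fun h ↦ h2 (congrArg Subtype.val h)
  · exact map_injective (algebraMap L K).injective (by ext i j; simpa using congrFun₂ hA i j)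

lemma IsCuspidalDegree.four_dvd {q b n : ℕ} (hb : IsCuspidalDegree q b n) (hq : Odd q) :
    4 ∣ n := by
  obtain ⟨x, rfl⟩ := hq
  refine ⟨b * (x + 1) * x, ?_⟩
  rw [hb.eq_mul, add_tsub_cancel_right]
  ring

lemma exists_mem_eq_ite_mul_mul_conj {L : Subfield ℂ} {q k : ℕ} (hq : (q : ℂ) ≠ 0) {h z : ℂ}
    (hz : z ∈ L) (hh : h * q ^ k = z * (starRingEnd ℂ) z) :
    ∃ z' ∈ L, h = (if Even k then 1 else (q : ℂ)) * (z' * (starRingEnd ℂ) z') := by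
  obtain ⟨j, hj⟩ := Nat.even_or_odd' k
  have hmem (i : ℕ) : z / (q : ℂ) ^ i ∈ L := L.div_mem hz (L.pow_mem (natCast_mem L q) i)
  rcases hj with rfl | rfl
  · refine ⟨_, hmem j, ?_⟩
    rw [if_pos (even_two_mul j), map_div₀, map_pow, Complex.conj_natCast]
    field_simp
    linear_combination hh
  · refine ⟨_, hmem (j + 1), ?_⟩
    rw [if_neg (Nat.not_even_two_mul_add_one j), map_div₀, map_pow, Complex.conj_natCast]
    field_simp
    linear_combination (q : ℂ) * hh

namespace UnitaryGroupData

variable {F G ι : Type*} [Field F] [Fintype F] [Group G] [Fintype ι] [DecidableEq ι]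
  (D : UnitaryGroupData F G) {R : G →* Matrix ι ι ℂ} {b : ℕ} {L : Subfield ℂ}

lemma exists_projU_ne_zero [Finite G] (hR : IsIrred R)
    (hb : IsCuspidalDegree D.q b (Fintype.card ι)) : ∃ κ ≠ 0, D.projU R κ ≠ 0 := by
  by_contra! h
  have hsum := D.sum_projU R
  rw [Fintype.sum_eq_single 0 h, D.projU_zero_eq_zero hR hb] at hsum
  have htr := D.trace_projZ_eq hR hb
  rw [← hsum, trace_zero, eq_comm, mul_eq_zero, Nat.cast_eq_zero] at htr
  have hb0 : b ≠ 0 := by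
    have := hb.eq_or_three_mul_eq
    omega
  exact htr.elim D.natCast_q_sub_one_ne_zero hb0

lemma torusFactor_mem_matrix (hL : ∀ g, R g ∈ L.toSubring.matrix) (t : Fˣ) :
    D.torusFactor R t ∈ L.toSubring.matrix :=
  add_mem (sub_mem (one_mem _) (hL _)) (D.projT_mem_matrix hL)

lemma gaussFactor_mem_matrix (hL : ∀ g, R g ∈ L.toSubring.matrix) :
    D.gaussFactor R ∈ L.toSubring.matrix :=
  sub_mem (add_mem (mul_mem (D.gauss_mem_matrix hL) (D.projT_mem_matrix hL)) (one_mem _))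
    (D.projT_mem_matrix hL)

lemma exists_mem_det_torusFactor_eq_sq (hι : Even (Fintype.card ι))
    (hL : ∀ g, R g ∈ L.toSubring.matrix) (h0 : D.projU R 0 = 0) {g : Fˣ}
    (hg : ∀ x : Fˣ, ∃ j : ℕ, x = g ^ j) : ∃ w ∈ L, (D.torusFactor R g).det = w ^ 2 := by
  obtain ⟨Y, hY⟩ := exists_map_algebraMap_eq (D.torusFactor_mem_matrix hL g)
  have hT : Commute (Y.map (algebraMap L ℂ)) (R (D.T g)) := hY ▸ D.commute_torusFactor_T R g g
  have hgauss : Commute (Y.map (algebraMap L ℂ)) (D.gauss R) :=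
    hY ▸ D.commute_torusFactor_gauss R g
  rw [← hY]
  exact exists_mem_sq_eq_det_of_isSquare (isSquare_det_of_commute_of_anticommute two_ne_zero hι
    (isUnit_det_map R _) (D.isUnit_det_gauss R h0) (D.T_mul_gauss R hg) hT hgauss)

end UnitaryGroupData

theorem UnitaryGroupData.exists_mem_norm_det_mul_pow_eq_mul_conj {F G ι : Type*} [Field F]
    [Finite F] [Group G] [Finite G] [Fintype ι] [DecidableEq ι] (D : UnitaryGroupData F G)
    {R : G →* Matrix ι ι ℂ} {b : ℕ} {L : Subfield ℂ} (hR : IsIrred R)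
    (hb : IsCuspidalDegree D.q b (Fintype.card ι)) (hL : ∀ g, R g ∈ L.toSubring.matrix)
    {κ : F} (hκ : κ ≠ 0) {B : Matrix ι ι ℂ} (hBL : B ∈ L.toSubring.matrix)
    (hB : ∀ g, (D.τ _ (D.normOne_mul_conj hκ)).dual R g * B = B * R g) (hBs : B.IsSymm) :
    ∃ k, (Even k ↔ D.q % 4 = 3) ∧
      ∃ z ∈ L, (‖B.det‖ * (D.q : ℂ) ^ k : ℂ) = z * (starRingEnd ℂ) z := by
  have := Fintype.ofFinite F
  have h0 := D.projU_zero_eq_zero hR hb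
  obtain ⟨g, hg, -⟩ := D.exists_generator
  obtain ⟨w, hwL, hw⟩ := D.exists_mem_det_torusFactor_eq_sq
    ((by decide : Even 4).trans_dvd (hb.four_dvd D.odd_q)) hL h0 hg
  obtain ⟨y, hyL, hy⟩ := exists_mem_det_eq_sq_of_transpose_eq_neg two_ne_zero
    (mul_mem hBL (mul_mem (hL _) (mul_mem (D.torusFactor_mem_matrix hL g)
      (D.gaussFactor_mem_matrix hL))))
    (D.transpose_mul_T_mul_torusFactor_mul_gaussFactor (AntiInvolution.transpose_map_mul _ hB) hBs
      (D.quadChar_neg_normOne hκ) hg)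
  obtain ⟨k, hk, hbk⟩ := D.exists_trace_projT_mul_one_sub_projZ_eq_two_mul hR hb
  have hw0 : w ≠ 0 := by
    rintro rfl
    exact D.det_torusFactor_ne_zero R hg (by rw [hw, zero_pow two_ne_zero])
  have hwc : (starRingEnd ℂ) w ≠ 0 := (map_ne_zero _).2 hw0
  have hnorm : (‖B.det‖ * (‖w‖ ^ 2 * D.q ^ (b + k)) : ℂ) = ‖y‖ ^ 2 := by
    have h := congrArg norm hy
    rw [det_mul, det_mul, det_mul, hw, norm_mul, norm_mul, norm_mul, norm_det_map,
      D.norm_det_gaussFactor R h0 (D.trace_projT_mul_projZ hR hb) hk, one_mul, norm_pow,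
      norm_pow] at h
    exact_mod_cast h
  refine ⟨b + k, hbk, y / w, L.div_mem hyL hwL, ?_⟩
  rw [← Complex.mul_conj', ← Complex.mul_conj'] at hnorm
  rw [map_div₀]
  field_simp
  linear_combination hnorm

theorem UnitaryGroupData.exists_det_eq_ite_mul_mul_conj {F G ι : Type*} [Field F] [Finite F]
    [Group G] [Finite G] [Fintype ι] [DecidableEq ι] (D : UnitaryGroupData F G)
    {R : G →* Matrix ι ι ℂ} {b : ℕ} {L : Subfield ℂ} (hR : IsIrred R)
    (hb : IsCuspidalDegree D.q b (Fintype.card ι)) (hLconj : ∀ x ∈ L, (starRingEnd ℂ) x ∈ L)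
    (hL : ∀ g, R g ∈ L.toSubring.matrix) {H : Matrix ι ι ℂ} (hHL : H ∈ L.toSubring.matrix)
    (hdet : IsUnit H.det) (hH : H.IsHermitian) (hinv : ∀ g, (R g)ᴴ * H * R g = H) :
    ∃ z ∈ L, H.det = (if D.q % 4 = 3 then 1 else (D.q : ℂ)) * (z * (starRingEnd ℂ) z) := by
  have := Fintype.ofFinite F
  obtain ⟨κ, hκ, hprojU⟩ := D.exists_projU_ne_zero hR hb
  obtain ⟨-, B₀, hB₀, hB₀ne, hB₀s⟩ := D.trace_projU_eq_one hR hκ hprojU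
  obtain ⟨B, hBL, hB, hBdet, hBs⟩ := hR.exists_symm_dual_intertwiner_mem hL hB₀ hB₀ne hB₀s
  obtain ⟨c, hcL, hc0, hcc, hc⟩ := hR.exists_mem_det_mul_sq_eq_norm_det
    (hb.four_dvd D.odd_q) hLconj hHL hdet hH hinv hBL hBdet hB
  obtain ⟨k, hk, z, hzL, hz⟩ := D.exists_mem_norm_det_mul_pow_eq_mul_conj hR hb hL hκ hBL hB hBs
  simp only [← hk]
  refine exists_mem_eq_ite_mul_mul_conj D.natCast_q_ne_zero (L.div_mem hzL hcL) ?_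
  rw [map_div₀, hcc]
  field_simp
  linear_combination hz + hc * (D.q : ℂ) ^ k

section AntiDiag

variable {F : Type} [Field F]

/-- The antidiagonal matrix with entries `1, s, 1`: the Gram matrix `Ω` for `s = 1`, a
representative of the Weyl element of `SU_3(q)` for `s = -1`. -/
def antiDiag (s : F) : Matrix (Fin 3) (Fin 3) F := !![0, 0, 1; 0, s, 0; 1, 0, 0]

lemma Om_eq_antiDiag : Om F = antiDiag 1 := by
  ext i j
  fin_cases i <;> fin_cases j <;> simp [Om, antiDiag]

lemma det_antiDiag (s : F) : (antiDiag s).det = -s := by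
  simp [antiDiag, det_fin_three]

lemma transpose_antiDiag (s : F) : (antiDiag s)ᵀ = antiDiag s := by
  ext i j
  fin_cases i <;> fin_cases j <;> rfl

lemma antiDiag_map {K : Type} [Field K] (f : F →+* K) (s : F) :
    (antiDiag s).map f = antiDiag (f s) := by
  ext i j
  fin_cases i <;> fin_cases j <;> simp [antiDiag]

lemma antiDiag_mul_antiDiag {s t : F} (h : s * t = 1) : antiDiag s * antiDiag t = 1 := by
  ext i j
  fin_cases i <;> fin_cases j <;> simp [antiDiag, mul_apply, Fin.sum_univ_three, h]

lemma antiDiag_mul_Om_mul_antiDiag {s t : F} (h : s * t = 1) :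
    antiDiag s * Om F * antiDiag t = Om F := by
  rw [Om_eq_antiDiag]
  ext i j
  fin_cases i <;> fin_cases j <;> simp [antiDiag, mul_apply, Fin.sum_univ_three, h]

/-- Reflection of a matrix in its antidiagonal, rescaled by the parameter `s`; for `s` of norm `1`
it restricts to an anti-involution of `SU_3(q)`. -/
def antiTranspose (s : F) (M : Matrix (Fin 3) (Fin 3) F) : Matrix (Fin 3) (Fin 3) F :=
  antiDiag s⁻¹ * Mᵀ * antiDiag s

lemma antiTranspose_eq (s : F) (M : Matrix (Fin 3) (Fin 3) F) :
    antiTranspose s M = !![M 2 2, s * M 1 2, M 0 2;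
      s⁻¹ * M 2 1, s⁻¹ * M 1 1 * s, s⁻¹ * M 0 1; M 2 0, s * M 1 0, M 0 0] := by
  ext i j
  fin_cases i <;> fin_cases j <;>
    simp [antiTranspose, antiDiag, mul_apply, vecMul, dotProduct, Fin.sum_univ_three, mul_comm]

lemma antiTranspose_mul {s : F} (hs : s ≠ 0) (M N : Matrix (Fin 3) (Fin 3) F) :
    antiTranspose s (M * N) = antiTranspose s N * antiTranspose s M := by
  have h := antiDiag_mul_antiDiag (mul_inv_cancel₀ hs)
  calc antiDiag s⁻¹ * (M * N)ᵀ * antiDiag s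
      = antiDiag s⁻¹ * Nᵀ * 1 * Mᵀ * antiDiag s := by rw [transpose_mul, mul_one]; noncomm_ring
    _ = antiTranspose s N * antiTranspose s M := by
      rw [← h, antiTranspose, antiTranspose]; noncomm_ring

lemma antiTranspose_antiTranspose {s : F} (hs : s ≠ 0) (M : Matrix (Fin 3) (Fin 3) F) :
    antiTranspose s (antiTranspose s M) = M := by
  have h := antiDiag_mul_antiDiag (inv_mul_cancel₀ hs)
  simp only [antiTranspose, transpose_mul, transpose_antiDiag, transpose_transpose]
  rw [← mul_assoc, ← mul_assoc, h, one_mul, mul_assoc, h, mul_one]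

lemma det_antiTranspose {s : F} (hs : s ≠ 0) (M : Matrix (Fin 3) (Fin 3) F) :
    (antiTranspose s M).det = M.det := by
  rw [antiTranspose, det_mul, det_mul, det_transpose, mul_right_comm, ← det_mul,
    antiDiag_mul_antiDiag (inv_mul_cancel₀ hs), det_one, one_mul]

end AntiDiag

namespace QuadraticFrobenius

variable {F : Type} [Field F] (Q : QuadraticFrobenius F) {M : Matrix (Fin 3) (Fin 3) F}

/-- Invariance of the Hermitian form with Gram matrix `Ω` under `M`. -/
def IsUnitary (M : Matrix (Fin 3) (Fin 3) F) : Prop := (M.map Q.conj)ᵀ * Om F * M = Om F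

lemma isUnitary_iff : Q.IsUnitary M ↔ ∀ i j,
    Q.conj (M 0 i) * M 2 j + Q.conj (M 1 i) * M 1 j + Q.conj (M 2 i) * M 0 j = Om F i j := by
  rw [IsUnitary, ← Matrix.ext_iff]
  refine forall₂_congr fun i j ↦ Eq.congr_left ?_
  simp only [Om_eq_antiDiag, antiDiag, mul_apply, Fin.sum_univ_three, transpose_apply, map_apply]
  simp
  ring

variable {Q}

lemma IsUnitary.mul_Om_mul_transpose (hM : Q.IsUnitary M) :
    M * Om F * (M.map Q.conj)ᵀ = Om F := by
  have hOm : Om F * Om F = 1 := by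
    rw [Om_eq_antiDiag, antiDiag_mul_antiDiag (one_mul 1)]
  have h : M * (Om F * (M.map Q.conj)ᵀ * Om F) = 1 :=
    mul_eq_one_comm.1 (by rw [mul_assoc, mul_assoc, ← mul_assoc _ (Om F) M, hM, hOm])
  calc M * Om F * (M.map Q.conj)ᵀ = M * (Om F * (M.map Q.conj)ᵀ * Om F) * Om F := by
        simp only [mul_assoc, hOm, mul_one]
    _ = Om F := by rw [h, one_mul]

lemma IsUnitary.antiTranspose {s : F} (hs : s * Q.conj s = 1) (hM : Q.IsUnitary M) :
    Q.IsUnitary (antiTranspose s M) := by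
  have hs0 : s ≠ 0 := left_ne_zero_of_mul_eq_one hs
  have hcs : Q.conj s = s⁻¹ := eq_inv_of_mul_eq_one_right hs
  have hconj : ((Paper.antiTranspose s M).map Q.conj)ᵀ
      = antiDiag s⁻¹ * M.map Q.conj * antiDiag s := by
    simp only [Paper.antiTranspose, Matrix.map_mul, transpose_mul, antiDiag_map, transpose_antiDiag,
      transpose_map, map_inv₀, hcs, inv_inv, transpose_transpose, mul_assoc]
  have hOmT : (Om F)ᵀ = Om F := by rw [Om_eq_antiDiag, transpose_antiDiag]
  have hM' : M.map Q.conj * Om F * Mᵀ = Om F := by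
    simpa only [transpose_mul, transpose_transpose, hOmT, ← mul_assoc]
      using congrArg transpose hM.mul_Om_mul_transpose
  calc ((Paper.antiTranspose s M).map Q.conj)ᵀ * Om F * Paper.antiTranspose s M
      = antiDiag s⁻¹ * (M.map Q.conj * (antiDiag s * Om F * antiDiag s⁻¹) * Mᵀ) * antiDiag s := by
        rw [hconj, Paper.antiTranspose]; noncomm_ring
    _ = Om F := by
      rw [antiDiag_mul_Om_mul_antiDiag (mul_inv_cancel₀ hs0), hM',
        antiDiag_mul_Om_mul_antiDiag (inv_mul_cancel₀ hs0)]

lemma IsUnitary.apply_eq_zero_and_ne_zero (hM : Q.IsUnitary M) (h2 : M 2 0 = 0) :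
    M 1 0 = 0 ∧ M 0 0 ≠ 0 := by
  rw [isUnitary_iff, Om_eq_antiDiag] at hM
  have h1 : M 1 0 = 0 := by simpa [antiDiag, h2] using hM 0 0
  refine ⟨h1, fun h0 ↦ ?_⟩
  simpa [antiDiag, h0, h1, h2] using hM 0 2

variable (Q)

lemma isUnitary_weyl : Q.IsUnitary (antiDiag (-1)) := by
  rw [IsUnitary, antiDiag_map, transpose_antiDiag]
  exact antiDiag_mul_Om_mul_antiDiag (by simp)

/-- The upper unitriangular matrices `[[1, a, b], [0, 1, -ā], [0, 0, 1]]`, which are unitary when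
`b + b̄ + a ā = 0`. -/
def unipotent (a b : F) : Matrix (Fin 3) (Fin 3) F := !![1, a, b; 0, 1, -Q.conj a; 0, 0, 1]

/-- The diagonal torus `diag(t, t̄ / t, t̄⁻¹)` of `SU_3(q)`. -/
def torus (t : F) : Matrix (Fin 3) (Fin 3) F :=
  !![t, 0, 0; 0, Q.conj t / t, 0; 0, 0, (Q.conj t)⁻¹]

lemma det_unipotent (a b : F) : (Q.unipotent a b).det = 1 := by
  simp [unipotent, det_fin_three]

lemma det_torus {t : F} (ht : t ≠ 0) : (Q.torus t).det = 1 := by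
  have hct : Q.conj t ≠ 0 := (map_ne_zero Q.conj).2 ht
  simp [torus, det_fin_three]
  field_simp

lemma torus_one : Q.torus 1 = 1 := by
  ext i j
  fin_cases i <;> fin_cases j <;> simp [torus]

lemma torus_mul (s t : F) : Q.torus (s * t) = Q.torus s * Q.torus t := by
  ext i j
  fin_cases i <;> fin_cases j <;>
    simp [torus, mul_apply, Fin.sum_univ_three, mul_comm, mul_div_mul_comm]

lemma unipotent_mul (a b a' b' : F) :
    Q.unipotent a b * Q.unipotent a' b' = Q.unipotent (a + a') (b + b' - a * Q.conj a') := by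
  ext i j
  fin_cases i <;> fin_cases j <;> simp [unipotent, mul_apply, Fin.sum_univ_three] <;> ring

lemma antiTranspose_weyl_mul_torus (s t : F) (hs : s ≠ 0) :
    antiTranspose s (antiDiag (-1) * Q.torus t) = antiDiag (-1) * Q.torus t := by
  rw [antiTranspose_eq]
  ext i j
  fin_cases i <;> fin_cases j <;>
    simp [torus, antiDiag, mul_apply, Fin.sum_univ_three]
  field_simp

section Finite

variable [Finite F]

lemma isUnitary_unipotent {a b : F} (h : b + Q.conj b + a * Q.conj a = 0) :
    Q.IsUnitary (Q.unipotent a b) := by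
  rw [isUnitary_iff, Om_eq_antiDiag]
  intro i j
  fin_cases i <;> fin_cases j <;> simp [unipotent, antiDiag]
  linear_combination h

lemma isUnitary_torus {t : F} (ht : t ≠ 0) : Q.IsUnitary (Q.torus t) := by
  have hct : Q.conj t ≠ 0 := (map_ne_zero Q.conj).2 ht
  rw [isUnitary_iff, Om_eq_antiDiag]
  intro i j
  fin_cases i <;> fin_cases j <;> simp [torus, antiDiag] <;> field_simp

lemma torus_mul_unipotent {t : F} (ht : t ≠ 0) (a b : F) :
    Q.torus t * Q.unipotent a b
      = Q.unipotent (Q.lam t * a) (t * Q.conj t * b) * Q.torus t := by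
  have hct : Q.conj t ≠ 0 := (map_ne_zero Q.conj).2 ht
  ext i j
  fin_cases i <;> fin_cases j <;>
    simp [unipotent, torus, lam, mul_apply, Fin.sum_univ_three] <;> field_simp

lemma antiTranspose_unipotent {s : F} (hs : s * Q.conj s = 1) (a b : F) :
    antiTranspose s (Q.unipotent a b) = Q.unipotent (-s * Q.conj a) b := by
  have hcs : Q.conj s = s⁻¹ := eq_inv_of_mul_eq_one_right hs
  have hs0 : s ≠ 0 := left_ne_zero_of_mul_eq_one hs
  rw [antiTranspose_eq]
  ext i j
  fin_cases i <;> fin_cases j <;> simp [unipotent, hcs, hs0]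

lemma antiTranspose_torus {s t : F} (hs : s ≠ 0) (ht : t ≠ 0) :
    antiTranspose s (Q.torus t) = Q.torus (Q.conj t)⁻¹ := by
  have hct : Q.conj t ≠ 0 := (map_ne_zero Q.conj).2 ht
  rw [antiTranspose_eq]
  ext i j
  fin_cases i <;> fin_cases j <;> simp [torus]
  field_simp

variable {Q}

lemma IsUnitary.eq_unipotent (hM : Q.IsUnitary M) (hdet : M.det = 1) (h0 : M 0 0 = 1)
    (h1 : M 1 0 = 0) (h2 : M 2 0 = 0) :
    M 0 2 + Q.conj (M 0 2) + M 0 1 * Q.conj (M 0 1) = 0 ∧ M = Q.unipotent (M 0 1) (M 0 2) := by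
  rw [isUnitary_iff, Om_eq_antiDiag] at hM
  have h21 : M 2 1 = 0 := by simpa [antiDiag, h0, h1, h2] using hM 0 1
  have h22 : M 2 2 = 1 := by simpa [antiDiag, h0, h1, h2] using hM 0 2
  have h11 : M 1 1 = 1 := by simpa [det_fin_three, h0, h1, h2, h21, h22] using hdet
  have h12 : M 1 2 = -Q.conj (M 0 1) := by
    have h : Q.conj (M 0 1) + M 1 2 = 0 := by simpa [antiDiag, h21, h22, h11] using hM 1 2
    exact eq_neg_of_add_eq_zero_right h
  constructor
  · have h : Q.conj (M 0 2) + -(M 0 1 * -Q.conj (M 0 1)) + M 0 2 = 0 := by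
      simpa [antiDiag, h12, h22] using hM 2 2
    linear_combination h
  · ext i j
    fin_cases i <;> fin_cases j <;> simp [unipotent, h0, h1, h2, h21, h22, h11, h12]

lemma IsUnitary.exists_unipotent_mul_apply_eq_zero (hM : Q.IsUnitary M) (h2 : M 2 0 ≠ 0) :
    ∃ a b, b + Q.conj b + a * Q.conj a = 0 ∧ (Q.unipotent a b * M) 0 0 = 0 := by
  rw [isUnitary_iff, Om_eq_antiDiag] at hM
  have hc2 : Q.conj (M 2 0) ≠ 0 := (map_ne_zero Q.conj).2 h2
  have hisotropic : Q.conj (M 0 0) * M 2 0 + Q.conj (M 1 0) * M 1 0 + Q.conj (M 2 0) * M 0 0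
      = 0 := by
    simpa [antiDiag] using hM 0 0
  refine ⟨Q.conj (M 1 0 / M 2 0), Q.conj (M 0 0 / M 2 0), ?_, ?_⟩
  · simp only [map_div₀, conj_conj]
    field_simp
    linear_combination hisotropic
  · simp [unipotent, mul_apply, Fin.sum_univ_three]
    field_simp
    linear_combination hisotropic

end Finite

end QuadraticFrobenius

lemma SU3_ext {F : Type} [Field F] {p k : ℕ} [ExpChar F p] {g h : SU3 p k F}
    (e : g.1.1 = h.1.1) : g = h :=
  Subtype.ext (Subtype.ext e)

namespace QuadraticFrobenius

variable {F : Type} [Field F]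

variable (Q : QuadraticFrobenius F)

lemma mem_SU3_iff {p k : ℕ} [ExpChar F p] (hQ : Q.conj = iterateFrobenius F p k)
    {g : SpecialLinearGroup (Fin 3) F} : g ∈ SU3 p k F ↔ Q.IsUnitary g.val := by
  rw [IsUnitary, hQ]
  rfl

section Weyl

variable {p k : ℕ} [ExpChar F p] (hQ : Q.conj = iterateFrobenius F p k)

/-- The element of `SU_3(q)` given by a unitary matrix of determinant `1`. -/
def mkSU3 (M : Matrix (Fin 3) (Fin 3) F) (hdet : M.det = 1) (hM : Q.IsUnitary M) : SU3 p k F :=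
  ⟨⟨M, hdet⟩, (Q.mem_SU3_iff hQ).2 hM⟩

/-- A representative in `SU_3(q)` of the nontrivial element of the Weyl group. -/
def w : SU3 p k F :=
  Q.mkSU3 hQ (antiDiag (-1)) (by rw [det_antiDiag, neg_neg]) Q.isUnitary_weyl

lemma w_mul_w : Q.w hQ * Q.w hQ = 1 := SU3_ext (antiDiag_mul_antiDiag (by simp))

end Weyl

variable [Finite F]

/-- The upper right entry of the element of the unipotent radical with coordinates `a ∈ F_{q²}`
and `r ∈ F_q`. -/
def upperRight (a : F) (r : Q.K) : F := -(a * Q.conj a) / 2 + Q.eps * r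

lemma upperRight_add_conj (a : F) (r : Q.K) :
    Q.upperRight a r + Q.conj (Q.upperRight a r) + a * Q.conj a = 0 := by
  have h2 := Q.two_ne_zero
  simp only [upperRight, map_add, map_div₀, map_neg, map_mul, conj_conj, conj_eps, conj_coe,
    map_ofNat]
  field_simp
  ring

lemma upperRight_imPart {a b : F} (h : b + Q.conj b + a * Q.conj a = 0) :
    Q.upperRight a (Q.imPart b) = b := by
  have h2 := Q.two_ne_zero
  have he := Q.eps_ne_zero
  rw [upperRight, coe_imPart]
  field_simp
  linear_combination -h

lemma upperRight_add (a a' : F) (r r' : Q.K) :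
    Q.upperRight a r + Q.upperRight a' r' - a * Q.conj a'
      = Q.upperRight (a + a') (r + r' + Q.imPart (a' * Q.conj a)) := by
  have h2 := Q.two_ne_zero
  have he := Q.eps_ne_zero
  simp only [upperRight, Subfield.coe_add, coe_imPart, map_add, map_mul, conj_conj]
  field_simp
  ring

lemma upperRight_lam_mul (t : Fˣ) (a : F) (r : Q.K) :
    t * Q.conj t * Q.upperRight a r = Q.upperRight (Q.lam t * a) (Q.norm t * r) := by
  have h2 := Q.two_ne_zero
  have hct : Q.conj t ≠ 0 := (map_ne_zero Q.conj).2 t.ne_zero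
  simp only [upperRight, Subfield.coe_mul, coe_norm, lam, map_mul, map_div₀, map_pow, conj_conj]
  field_simp

lemma upperRight_neg_mul_conj {s : F} (hs : s * Q.conj s = 1) (a : F) (r : Q.K) :
    Q.upperRight (-s * Q.conj a) r = Q.upperRight a r := by
  simp only [upperRight, map_mul, map_neg, conj_conj]
  linear_combination -(a * Q.conj a / 2) * hs

variable {p k : ℕ} [ExpChar F p] (hQ : Q.conj = iterateFrobenius F p k)

/-- The unipotent radical of the Borel subgroup of `SU_3(q)`. -/
def u (a : F) (r : Q.K) : SU3 p k F :=
  Q.mkSU3 hQ _ (Q.det_unipotent a _) (Q.isUnitary_unipotent (Q.upperRight_add_conj a r))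

/-- The diagonal torus of `SU_3(q)`. -/
def T : Fˣ →* SU3 p k F where
  toFun t := Q.mkSU3 hQ _ (Q.det_torus t.ne_zero) (Q.isUnitary_torus t.ne_zero)
  map_one' := SU3_ext Q.torus_one
  map_mul' _ _ := SU3_ext (Q.torus_mul _ _)

/-- The anti-involution of `SU_3(q)` induced by `antiTranspose s`, for `s` of norm `1`. -/
def τ (s : F) (hs : s * Q.conj s = 1) : AntiInvolution (SU3 p k F) where
  toFun g := Q.mkSU3 hQ (antiTranspose s g.1.1)
    ((det_antiTranspose (left_ne_zero_of_mul_eq_one hs) _).trans g.1.2)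
    (((Q.mem_SU3_iff hQ).1 g.2).antiTranspose hs)
  map_mul _ _ := SU3_ext (antiTranspose_mul (left_ne_zero_of_mul_eq_one hs) _ _)
  involutive _ := SU3_ext (antiTranspose_antiTranspose (left_ne_zero_of_mul_eq_one hs) _)

lemma u_zero_zero : Q.u hQ 0 0 = 1 := SU3_ext <| by
  change Q.unipotent 0 (Q.upperRight 0 0) = 1
  ext i j
  fin_cases i <;> fin_cases j <;> simp [unipotent, upperRight]

lemma u_mul_u (a : F) (r : Q.K) (a' : F) (r' : Q.K) :
    Q.u hQ a r * Q.u hQ a' r' = Q.u hQ (a + a') (r + r' + Q.imPart (a' * Q.conj a)) :=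
  SU3_ext <| (Q.unipotent_mul _ _ _ _).trans <| by rw [upperRight_add]; rfl

lemma T_mul_u (t : Fˣ) (a : F) (r : Q.K) :
    Q.T hQ t * Q.u hQ a r = Q.u hQ (Q.lam t * a) (Q.norm t * r) * Q.T hQ t :=
  SU3_ext <| (Q.torus_mul_unipotent t.ne_zero _ _).trans <| by rw [upperRight_lam_mul]; rfl

lemma T_injective : Function.Injective (Q.T hQ) := fun _ _ h ↦
  Units.ext (congrArg (fun g : SU3 p k F ↦ g.1.1 0 0) h)

lemma u_injective {a a' : F} {r r' : Q.K} (h : Q.u hQ a r = Q.u hQ a' r') :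
    a = a' ∧ r = r' := by
  obtain rfl : a = a' := congrArg (fun g : SU3 p k F ↦ g.1.1 0 1) h
  refine ⟨rfl, ?_⟩
  have hr : Q.upperRight a r = Q.upperRight a r' := congrArg (fun g : SU3 p k F ↦ g.1.1 0 2) h
  simpa [upperRight, Q.eps_ne_zero] using hr

lemma exists_eq_u_mul_T {g : SU3 p k F} (h2 : g.1.1 2 0 = 0) :
    ∃ a r t, g = Q.u hQ a r * Q.T hQ t := by
  obtain ⟨h1, h0⟩ := ((Q.mem_SU3_iff hQ).1 g.2).apply_eq_zero_and_ne_zero h2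
  let t := Units.mk0 _ h0
  let g' := g * Q.T hQ t⁻¹
  have hcol (i : Fin 3) : g'.1.1 i 0 = g.1.1 i 0 * (g.1.1 0 0)⁻¹ := by
    change (g.1.1 * Q.torus _) i 0 = _
    simp [torus, mul_apply, Fin.sum_univ_three, t]
  obtain ⟨hb, hg'⟩ := ((Q.mem_SU3_iff hQ).1 g'.2).eq_unipotent g'.1.2
    (by rw [hcol, mul_inv_cancel₀ h0]) (by rw [hcol, h1, zero_mul]) (by rw [hcol, h2, zero_mul])
  refine ⟨g'.1.1 0 1, Q.imPart (g'.1.1 0 2), t, ?_⟩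
  rw [← mul_inv_eq_iff_eq_mul, ← map_inv]
  refine SU3_ext (hg'.trans ?_)
  change _ = Q.unipotent _ (Q.upperRight _ _)
  rw [Q.upperRight_imPart hb]

lemma bruhat (g : SU3 p k F) : (∃ a r t, g = Q.u hQ a r * Q.T hQ t) ∨
    ∃ a r t a' r', g = Q.u hQ a r * (Q.w hQ * Q.T hQ t) * Q.u hQ a' r' := by
  by_cases h2 : g.1.1 2 0 = 0
  · exact Or.inl (Q.exists_eq_u_mul_T hQ h2)
  obtain ⟨a, b, hab, h0⟩ :=
    ((Q.mem_SU3_iff hQ).1 g.2).exists_unipotent_mul_apply_eq_zero h2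
  have h0' : (Q.w hQ * (Q.u hQ a (Q.imPart b) * g)).1.1 2 0 = 0 := by
    change (antiDiag (-1) * (Q.unipotent a (Q.upperRight a (Q.imPart b)) * g.1.1) :
      Matrix (Fin 3) (Fin 3) F) 2 0 = 0
    rw [Q.upperRight_imPart hab, mul_apply, Fin.sum_univ_three, h0]
    simp [antiDiag]
  obtain ⟨a', r', t, h⟩ := Q.exists_eq_u_mul_T hQ h0'
  have hT := Q.T_mul_u hQ t⁻¹ a' r'
  rw [map_inv, inv_mul_eq_iff_eq_mul, ← mul_assoc, eq_mul_inv_iff_mul_eq] at hT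
  refine Or.inr ⟨-a, -Q.imPart b, t, Q.lam (t⁻¹ : Fˣ) * a',
    Q.norm (t⁻¹ : Fˣ) * r', ?_⟩
  rw [mul_assoc, mul_assoc, ← hT, ← h, ← mul_assoc (Q.w hQ), w_mul_w, one_mul, ← mul_assoc,
    u_mul_u, map_neg, mul_neg, map_neg, imPart_mul_conj_self,
    neg_zero, add_zero, neg_add_cancel, neg_add_cancel, u_zero_zero, one_mul]

lemma eq_one_or_eq_T_neg_one {t : Fˣ} (hnorm : Q.norm t ≠ 1) (hlam : Q.lam t ≠ 1)
    {g : SU3 p k F} (hg : g * g = 1) (hcomm : Commute (Q.T hQ t) g) :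
    g = 1 ∨ g = Q.T hQ (-1) := by
  have h2 : g.1.1 2 0 = 0 := by
    have h := congrArg (fun g : SU3 p k F ↦ g.1.1 2 0) hcomm.eq
    change (Q.torus t * g.1.1) 2 0 = (g.1.1 * Q.torus t) 2 0 at h
    by_contra h2
    refine hnorm (Subtype.ext ?_)
    have hct : Q.conj t ≠ 0 := (map_ne_zero Q.conj).2 t.ne_zero
    replace h : (Q.conj t)⁻¹ * g.1.1 2 0 = t * g.1.1 2 0 := by
      simpa [torus, mul_apply, Fin.sum_univ_three, mul_comm (t : F)] using h
    rw [coe_norm, Subfield.coe_one]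
    nth_rw 1 [← mul_right_cancel₀ h2 h]
    exact inv_mul_cancel₀ hct
  obtain ⟨a, r, s, rfl⟩ := Q.exists_eq_u_mul_T hQ h2
  have hu : Q.u hQ (Q.lam t * a) (Q.norm t * r) = Q.u hQ a r := by
    have hT : Q.T hQ s * Q.T hQ t = Q.T hQ t * Q.T hQ s := by rw [← map_mul, mul_comm, map_mul]
    have h := hcomm.eq
    rwa [mul_assoc, hT, ← mul_assoc, ← mul_assoc, T_mul_u, mul_left_inj, mul_left_inj] at h
  obtain ⟨ha, hr⟩ := Q.u_injective hQ hu
  obtain rfl : a = 0 := (mul_left_eq_self₀.1 ha).resolve_left hlam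
  obtain rfl : r = 0 := (mul_left_eq_self₀.1 hr).resolve_left hnorm
  rw [u_zero_zero, one_mul, ← map_mul, ← map_one (Q.T hQ), (Q.T_injective hQ).eq_iff] at hg
  rw [u_zero_zero, one_mul]
  exact (mul_self_eq_one_iff.1 (congrArg Units.val hg)).imp
    (fun h ↦ by rw [Units.val_eq_one.1 h, map_one]) fun h ↦ by
    rw [show s = -1 from Units.ext h]

/-- `SU_3(q)` with its Borel subgroup, Weyl element and anti-involutions. -/
def unitaryGroupData : UnitaryGroupData F (SU3 p k F) where
  __ := Q
  u := Q.u hQ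
  u_mul_u := Q.u_mul_u hQ
  T := Q.T hQ
  T_mul_u := Q.T_mul_u hQ
  T_neg_one_ne_one h := by
    have h1 : (-1 : F) = 1 := congrArg Units.val (Q.T_injective hQ (h.trans (map_one _).symm))
    exact Q.two_ne_zero (by linear_combination -h1)
  w := Q.w hQ
  bruhat := Q.bruhat hQ
  eq_one_or_eq_T_neg_one _ hnorm hlam _ := Q.eq_one_or_eq_T_neg_one hQ hnorm hlam
  τ := Q.τ hQ
  τ_u s hs a r := SU3_ext <| (Q.antiTranspose_unipotent hs _ _).trans <| by
    rw [← Q.upperRight_neg_mul_conj hs]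
    rfl
  τ_T s hs t := SU3_ext <|
    (Q.antiTranspose_torus (left_ne_zero_of_mul_eq_one hs) t.ne_zero).trans <|
      congrArg Q.torus (Units.val_inv_eq_inv_val (Units.map Q.conj.toMonoidHom t)).symm
  τ_w_mul_T s hs t :=
    SU3_ext (Q.antiTranspose_weyl_mul_torus s t (left_ne_zero_of_mul_eq_one hs))

end QuadraticFrobenius

lemma exists_isCuspidalDegree {q n : ℕ} (h : n = (q + 1) * (q ^ 2 - 1) ∨
    3 ∣ q + 1 ∧ n = (q + 1) * (q ^ 2 - 1) / 3) : ∃ b, IsCuspidalDegree q b n := by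
  have hsq : q ^ 2 - 1 = (q + 1) * (q - 1) := by rw [← Nat.sq_sub_sq, one_pow]
  rcases h with rfl | ⟨⟨b, hb⟩, rfl⟩
  · exact ⟨q + 1, .inl rfl, by rw [hsq, mul_assoc]⟩
  · refine ⟨b, .inr hb.symm, ?_⟩
    rw [hsq, hb, mul_assoc 3, Nat.mul_div_cancel_left _ three_pos, ← hb, mul_assoc]

/-- The Frobenius involution of `F_{q²}` for `q = p ^ k`. -/
def QuadraticFrobenius.ofIterateFrobenius {p k : ℕ} (hp : Odd p) (F : Type*) [Field F]
    [ExpChar F p] (hF : Nat.card F = (p ^ k) ^ 2) : QuadraticFrobenius F where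
  q := p ^ k
  odd_q := hp.pow
  card_eq := hF
  conj := iterateFrobenius F p k
  conj_apply _ := iterateFrobenius_def p k _

section Character

variable {G : Type} [Group G] {n : ℕ}

lemma charOf_one (ρ : G →* GL (Fin n) ℂ) : charOf ρ 1 = n := by simp [charOf]

lemma conj_mem_charField [Finite G] (ρ : G →* GL (Fin n) ℂ) :
    ∀ x ∈ charField (charOf ρ), (starRingEnd ℂ) x ∈ charField (charOf ρ) := by
  suffices h : charField (charOf ρ) ≤ (charField (charOf ρ)).comap (starRingEnd ℂ) from h
  refine Subfield.closure_le.2 ?_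
  rintro _ ⟨g, rfl⟩
  exact Subfield.subset_closure ⟨g⁻¹, (conj_trace_map ((Units.coeHom _).comp ρ) g).symm⟩

lemma IsIrrChar.isIrred_of_eq_charOf [Finite G] {χ : G → ℂ} (hχ : IsIrrChar χ)
    {ρ : G →* GL (Fin n) ℂ} (h : χ = charOf ρ) : IsIrred ((Units.coeHom _).comp ρ) := by
  obtain ⟨m, ρ₀, ⟨hm, hirr⟩, rfl⟩ := hχ
  obtain rfl : m = n := by exact_mod_cast (charOf_one ρ₀).symm.trans (h ▸ charOf_one ρ)
  have h₀ : IsIrred ((Units.coeHom _).comp ρ₀) := ⟨⟨⟨0, hm⟩⟩, hirr⟩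
  exact h₀.of_trace_eq fun g ↦ (congrFun h g).symm

end Character

theorem UnitaryGroupData.hasUnitaryDisc {F : Type*} {G : Type} [Field F] [Finite F] [Group G]
    [Finite G] (D : UnitaryGroupData F G) {χ : G → ℂ} (hχ : IsIrrChar χ) {b n : ℕ}
    (hb : IsCuspidalDegree D.q b n) (hdeg : χ 1 = n) :
    HasUnitaryDisc χ (if D.q % 4 = 3 then 1 else (D.q : ℂ)) := by
  intro m ρ hρ hρL H hHL hdet hH hinv
  obtain rfl : m = n := by exact_mod_cast (charOf_one ρ).symm.trans (hρ ▸ hdeg)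
  have hsign : Even (m * (m - 1) / 2) := by
    obtain ⟨j, hj⟩ := hb.four_dvd D.odd_q
    refine ⟨j * (m - 1), Nat.div_eq_of_eq_mul_left two_pos ?_⟩
    rw [hj]
    ring
  obtain ⟨z, hz, h⟩ := D.exists_det_eq_ite_mul_mul_conj (L := charField χ)
    (hχ.isIrred_of_eq_charOf hρ) (by rwa [Fintype.card_fin]) (hρ ▸ conj_mem_charField ρ) hρL hHL
    hdet hH hinv
  refine ⟨z, hz, ?_, by rw [hsign.neg_one_pow, one_mul, h]⟩
  rintro rfl
  exact hdet.ne_zero (by rw [h, zero_mul, mul_zero])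

theorem stmt15_general (p k q : ℕ) (hpodd : Odd p) (hq : q = p ^ k)
    (F : Type) [Field F] [Fintype F] [ExpChar F p] (hF : Fintype.card F = q ^ 2)
    (χ : ↥(SU3 p k F) → ℂ) (hχ : IsIrrChar χ)
    (hdeg : χ 1 = (((q + 1) * (q ^ 2 - 1) : ℕ) : ℂ) ∨
      (3 ∣ q + 1 ∧ χ 1 = (((q + 1) * (q ^ 2 - 1) / 3 : ℕ) : ℂ))) :
    (q % 4 = 1 → HasUnitaryDisc χ (q : ℂ)) ∧
    (q % 4 = 3 → HasUnitaryDisc χ (1 : ℂ)) := by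
  subst hq
  let D := (QuadraticFrobenius.ofIterateFrobenius hpodd F
    (Nat.card_eq_fintype_card.trans hF)).unitaryGroupData (p := p) (k := k) rfl
  obtain ⟨n, hn, hχn⟩ : ∃ n : ℕ, (n = _ ∨ 3 ∣ p ^ k + 1 ∧ n = _) ∧ χ 1 = n := by
    rcases hdeg with h | ⟨h3, h⟩
    exacts [⟨_, .inl rfl, h⟩, ⟨_, .inr ⟨h3, rfl⟩, h⟩]
  obtain ⟨b, hb⟩ := exists_isCuspidalDegree hn
  have h : HasUnitaryDisc χ (if p ^ k % 4 = 3 then 1 else ((p ^ k : ℕ) : ℂ)) :=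
    D.hasUnitaryDisc hχ hb hχn
  exact ⟨fun h1 ↦ by rwa [if_neg (by omega)] at h, fun h3 ↦ by rwa [if_pos h3] at h⟩

/-- every irreducible character of `SU₃(q)`, `q` odd, of degree
`(q+1)(q²-1)`, or of degree `(q+1)(q²-1)/3` when `3 ∣ q+1`, with non-real character
field has unitary discriminant `q` if `q ≡ 1 (mod 4)` and `1` if `q ≡ 3 (mod 4)`. -/
theorem stmt15 (p k q : ℕ) (hp : p.Prime) (hpodd : Odd p) (hk : 0 < k) (hq : q = p ^ k)
    (F : Type) [Field F] [Fintype F] [ExpChar F p] (hF : Fintype.card F = q ^ 2)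
    (χ : ↥(SU3 p k F) → ℂ) (hχ : IsIrrChar χ)
    (hdeg : χ 1 = (((q + 1) * (q ^ 2 - 1) : ℕ) : ℂ) ∨
      (3 ∣ q + 1 ∧ χ 1 = (((q + 1) * (q ^ 2 - 1) / 3 : ℕ) : ℂ)))
    (hnr : NotReal χ) :
    (q % 4 = 1 → HasUnitaryDisc χ (q : ℂ)) ∧
    (q % 4 = 3 → HasUnitaryDisc χ (1 : ℂ)) :=
  stmt15_general p k q hpodd hq F hF χ hχ hdeg

end Paper
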